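/- arXiv:1802.04586 — 2 statements merged into one kernel-verified Lean document; each statement's English description precedes it below -/
import Mathlib

section
/- Let 1 ≤ ℓ < k, and suppose 1/n ≪ 1/C ≪ ζ ≪ α ≪ 1/k and 0 < ε ≤ ζ³ℓ/6. Let V be a set of n vertices and V₀ ⊆ V with |V₀| ≤ αn; if ℓ = 1 assume moreover V₀ = ∅. Suppose G = 𝔾^{(k)}(n,p) on V with p ≥ n^{−(k−ℓ)−ε} if ℓ ≥ 2 and p ≥ C·n^{−(k−1)} if ℓ = 1. Let L be an ℓ-graph on V ∖ V₀ with |E(L)| ≥ α·n^ℓ. Then a.a.s. G contains a set 𝒫 of at most 2ζ³n pairwise vertex-disjoint ℓ-paths such that the ℓ-ends of every path in 𝒫 are edges of L, V₀ ⊆ V(𝒫), and |V ∖ V(𝒫)| ≤ 2ζn. -/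
open Finset
open scoped Classical

/-- All `k`-subsets of `Fin n` (the possible edges of a `k`-graph on `n` vertices). -/
def kSets (n k : ℕ) : Finset (Finset (Fin n)) := Finset.univ.powersetCard k

/-- The probability that the binomial random `k`-graph `G^{(k)}(n,p)` (each `k`-set is an
edge independently with probability `p`) has an edge set satisfying the property `A`. -/
noncomputable def gProb (n k : ℕ) (p : ℝ) (A : Finset (Finset (Fin n)) → Prop) : ℝ :=
  ∑ E ∈ (kSets n k).powerset.filter (fun E => A E),
    p ^ E.card * (1 - p) ^ ((kSets n k).card - E.card)

/-- Expectation of a random variable `f` of the random `k`-graph `G^{(k)}(n,p)`. -/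
noncomputable def gExpect (n k : ℕ) (p : ℝ) (f : Finset (Finset (Fin n)) → ℝ) : ℝ :=
  ∑ E ∈ (kSets n k).powerset,
    p ^ E.card * (1 - p) ^ ((kSets n k).card - E.card) * f E

/-- The degree of a vertex set `S` in the `k`-graph with edge set `E`: the number of edges
containing `S` (equivalently, the number of `(k-|S|)`-sets `T` with `S ∪ T ∈ E`). -/
def degOf {n : ℕ} (E : Finset (Finset (Fin n))) (S : Finset (Fin n)) : ℕ :=
  (E.filter (fun e => S ⊆ e)).card

/-- The minimum vertex degree (minimum 1-degree) of a `k`-graph. -/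
noncomputable def minVertexDeg {n : ℕ} (E : Finset (Finset (Fin n))) : ℕ :=
  sInf {d : ℕ | ∃ v : Fin n, degOf E {v} = d}

/-- The index set of the `i`-th edge of the path `P_{a,x}`:
`{x + i*d, x + i*d + 1, …, x + i*d + k - 1}` (here `d = k - ℓ`). -/
def edgeIdx (k d x i : ℕ) : Finset ℕ := (Finset.range k).image (fun j => x + i * d + j)

/-- The ordered `b`-tuple `w` spans a labeled copy of `P_{a,x}` (the `k`-uniform `ℓ`-path
with `a` edges, preceded and followed by `x` isolated vertices) in the edge set `E`. -/
def SpansPax {n : ℕ} (k ℓ a x : ℕ) (E : Finset (Finset (Fin n))) {b : ℕ}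
    (w : Fin b → Fin n) : Prop :=
  Function.Injective w ∧
  ∀ i < a,
    ((Finset.univ.filter (fun m : Fin b => (m : ℕ) ∈ edgeIdx k (k - ℓ) x i)).image w) ∈ E

/-- The ordered tuple `w` spans a labeled copy of the `ℓ`-path `P_a` of length `a` in `E`. -/
def SpansPath {n : ℕ} (k ℓ a : ℕ) (E : Finset (Finset (Fin n))) {b : ℕ}
    (w : Fin b → Fin n) : Prop :=
  SpansPax k ℓ a 0 E w

/-- The first `ℓ`-end of the ordered tuple `w` (its first `ℓ` vertices, as a set). -/
def firstEnd {n b : ℕ} (ℓ : ℕ) (w : Fin b → Fin n) : Finset (Fin n) :=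
  (Finset.univ.filter (fun m : Fin b => (m : ℕ) < ℓ)).image w

/-- The last `ℓ`-end of the ordered tuple `w` (its last `ℓ` vertices, as a set). -/
def lastEnd {n b : ℕ} (ℓ : ℕ) (w : Fin b → Fin n) : Finset (Fin n) :=
  (Finset.univ.filter (fun m : Fin b => b - ℓ ≤ (m : ℕ))).image w

/-- The `k`-graph with edge set `E` on vertex set `Fin n` contains a Hamiltonian `ℓ`-cycle:
there is a cyclic ordering of all `n` vertices such that each of the `n/(k-ℓ)` edges
consists of `k` consecutive vertices, consecutive edges overlapping in `ℓ` vertices. -/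
def IsHamCycle (n k ℓ : ℕ) (E : Finset (Finset (Fin n))) : Prop :=
  ∃ f : ZMod n → Fin n, Function.Bijective f ∧
    ∀ i < n / (k - ℓ),
      ((Finset.range k).image (fun j => f (((i * (k - ℓ) + j : ℕ) : ZMod n)))) ∈ E

/-- The `ℓ`-shadow of a `k`-graph: all `ℓ`-sets contained in some edge. -/
def shadowL {n : ℕ} (ℓ : ℕ) (E : Finset (Finset (Fin n))) : Finset (Finset (Fin n)) :=
  (Finset.univ.powersetCard ℓ).filter (fun S => ∃ e ∈ E, S ⊆ e)

/-- The list `v` of vertices spans a copy of the `ℓ`-path `P_a` of length `a` in `E`. -/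
def ListSpans {n : ℕ} (k ℓ a : ℕ) (E : Finset (Finset (Fin n))) (v : List (Fin n)) : Prop :=
  v.Nodup ∧ v.length = a * (k - ℓ) + ℓ ∧
    ∀ i < a, ((v.drop (i * (k - ℓ))).take k).toFinset ∈ E

/-- `Φ_F(n,p) = min { n^{v_H} p^{e_H} : H ⊆ F, e_H > 0 }`, where the subgraph `H` is given
by a nonempty edge set `E' ⊆ F` together with a vertex set `W` containing all its edges. -/
noncomputable def Phi {V : Type*} (n : ℕ) (p : ℝ) (F : Finset (Finset V)) : ℝ :=
  sInf {r : ℝ | ∃ (W : Finset V) (E' : Finset (Finset V)),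
    E' ⊆ F ∧ E'.Nonempty ∧ (∀ e ∈ E', e ⊆ W) ∧ r = (n : ℝ) ^ W.card * p ^ E'.card}

/-- The ordered tuple `w` spans a labeled copy of the `k`-graph `F` (given by its edge set
`Fe` on vertex set `Fin s`) in the edge set `E`. -/
def SpansCopy {n s : ℕ} (Fe : Finset (Finset (Fin s))) (E : Finset (Finset (Fin n)))
    (w : Fin s → Fin n) : Prop :=
  ∀ e ∈ Fe, e.image w ∈ E

/-- Concatenation of three ordered tuples. -/
def concat3 {n p q r : ℕ} (A : Fin p → Fin n) (C : Fin q → Fin n) (B : Fin r → Fin n)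
    (m : Fin (p + q + r)) : Fin n :=
  if h : (m : ℕ) < p then A ⟨(m : ℕ), h⟩
  else if h2 : (m : ℕ) < p + q then C ⟨(m : ℕ) - p, by omega⟩
  else B ⟨(m : ℕ) - (p + q), by have := m.isLt; omega⟩

/-- `w`, spanning an `ℓ`-path of length `a`, is a `W`-absorber in `E`: it avoids `W`, and
its vertex set together with `W` spans an `ℓ`-path (of length `a+1` when `|W| = k - ℓ`)
with the same two `ℓ`-ends. -/
def IsAbsorber {n : ℕ} (k ℓ a : ℕ) (E : Finset (Finset (Fin n))) {b : ℕ}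
    (w : Fin b → Fin n) (W : Finset (Fin n)) : Prop :=
  (∀ m, w m ∉ W) ∧
  ∃ w' : Fin (b + W.card) → Fin n, SpansPath k ℓ (a + 1) E w' ∧
    Finset.image w' Finset.univ = Finset.image w Finset.univ ∪ W ∧
    firstEnd ℓ w' = firstEnd ℓ w ∧ lastEnd ℓ w' = lastEnd ℓ w

/-!
Fix a path length `a` of order `ζ⁻³`. Take disjoint vertex classes of which the first and the last
`ℓ` are dense in `L` and the others are large, except for one root class of size `σ`. By Janson's
inequality, the probability that no path of length `a` with ends in `L` has its `x`-th vertex in the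
`x`-th class is at most `exp (-Ω(σ K))`, where `K` bounds from below the expected numbers of paths
of each length at most `a` through a fixed root vertex. If `σ K` is much larger than `n`, a union
bound over the `exp (O(n))` class systems shows that all of them contain a path simultaneously, so a
greedy choice of disjoint paths can only stop once its classes are used up.

After three class systems, dense in `L`, have been reserved, such a greedy choice covers almost
everything outside them. The vertices of `V₀` then left uncovered are placed in the root class of
the second system, which absorbs all but about `√n` of them. The last ones are absorbed through the
third system one at a time, with `σ = 1`: since only `O(√n)` vertices of this system are ever
removed, the union bound is over `exp (o(n))` systems only. For `ℓ = 1` the set `V₀` is empty and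
the greedy choice alone suffices.
-/

/-! ### Product measures on the subsets of a finite type -/

section ProductMeasure

variable {X I : Type*} [Fintype X] {p : X → ℝ}

/-- The probability that the random subset of `X` containing each `x` independently with
probability `p x` equals `E`. -/
noncomputable def subsetWeight (p : X → ℝ) (E : Finset X) : ℝ :=
  ∏ x, if x ∈ E then p x else 1 - p x

/-- The probability that the random subset of `X` containing each `x` independently with
probability `p x` has the property `A`. -/
noncomputable def subsetProb (p : X → ℝ) (A : Finset X → Prop) : ℝ :=
  ∑ E with A E, subsetWeight p E

lemma subsetWeight_nonneg (hp : ∀ x, p x ∈ Set.Icc (0 : ℝ) 1) (E : Finset X) :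
    0 ≤ subsetWeight p E := by
  refine prod_nonneg fun x _ => ?_
  split_ifs
  exacts [(hp x).1, sub_nonneg.2 (hp x).2]

lemma subsetWeight_eq_prod_mul_prod_compl (p : X → ℝ) (E : Finset X) :
    subsetWeight p E = (∏ x ∈ E, p x) * ∏ x ∈ Eᶜ, (1 - p x) := by
  simp only [subsetWeight, prod_ite, ← compl_filter, filter_univ_mem]

lemma subsetWeight_mul_subsetWeight (p : X → ℝ) (E F : Finset X) :
    subsetWeight p E * subsetWeight p F = subsetWeight p (E ⊓ F) * subsetWeight p (E ⊔ F) := by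
  simp only [subsetWeight, ← prod_mul_distrib]
  refine prod_congr rfl fun x _ => ?_
  by_cases hE : x ∈ E <;> by_cases hF : x ∈ F <;> simp [hE, hF, mul_comm]

lemma sum_subsetWeight (p : X → ℝ) : ∑ E : Finset X, subsetWeight p E = 1 := by
  simp only [subsetWeight_eq_prod_mul_prod_compl, ← Fintype.prod_add, add_sub_cancel,
    prod_const_one]

lemma subsetProb_eq_sum_mul (p : X → ℝ) (A : Finset X → Prop) [DecidablePred A] :
    subsetProb p A = ∑ E, subsetWeight p E * if A E then 1 else 0 := by
  simp only [subsetProb, mul_ite, mul_one, mul_zero, ← sum_filter]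
  congr!

lemma subsetProb_mono (hp : ∀ x, p x ∈ Set.Icc (0 : ℝ) 1) {A B : Finset X → Prop}
    (h : ∀ E, A E → B E) : subsetProb p A ≤ subsetProb p B :=
  sum_le_sum_of_subset_of_nonneg (monotone_filter_right _ fun E _ => h E)
    fun E _ _ => subsetWeight_nonneg hp E

lemma subsetProb_nonneg (hp : ∀ x, p x ∈ Set.Icc (0 : ℝ) 1) (A : Finset X → Prop) :
    0 ≤ subsetProb p A :=
  sum_nonneg fun E _ => subsetWeight_nonneg hp E

lemma subsetProb_true (p : X → ℝ) : subsetProb p (fun _ => True) = 1 := by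
  simp [subsetProb, sum_subsetWeight]

lemma subsetProb_and_add_and_not (p : X → ℝ) (A B : Finset X → Prop) :
    subsetProb p (fun E => A E ∧ B E) + subsetProb p (fun E => A E ∧ ¬ B E) = subsetProb p A := by
  simp only [subsetProb, ← filter_filter, sum_filter_add_sum_filter_not]

lemma subsetProb_not (p : X → ℝ) (A : Finset X → Prop) :
    subsetProb p (fun E => ¬ A E) = 1 - subsetProb p A := by
  have h := subsetProb_and_add_and_not p (fun _ => True) A
  simp only [subsetProb_true, true_and] at h
  linarith

lemma subsetProb_exists_le (hp : ∀ x, p x ∈ Set.Icc (0 : ℝ) 1) (s : Finset I)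
    (A : I → Finset X → Prop) :
    subsetProb p (fun E => ∃ i ∈ s, A i E) ≤ ∑ i ∈ s, subsetProb p (A i) := by
  simp only [subsetProb_eq_sum_mul]
  rw [sum_comm]
  refine sum_le_sum fun E _ => ?_
  rw [← mul_sum]
  refine mul_le_mul_of_nonneg_left ?_ (subsetWeight_nonneg hp E)
  have hnonneg : ∀ i ∈ s, (0 : ℝ) ≤ if A i E then 1 else 0 := fun i _ => by split_ifs <;> simp
  split_ifs with h
  · obtain ⟨i, hi, hA⟩ := h
    simpa [hA] using single_le_sum hnonneg hi
  · exact sum_nonneg hnonneg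

lemma subsetProb_mem_and (p : X → ℝ) (x : X) (C : Finset X → Prop)
    (hC : ∀ E, x ∉ E → (C (insert x E) ↔ C E)) :
    subsetProb p (fun E => x ∈ E ∧ C E) = p x * subsetProb p C := by
  have hw : ∀ E, subsetWeight p E = (if x ∈ E then p x else 1 - p x) *
      ∏ y ∈ univ.erase x, if y ∈ E then p y else 1 - p y := fun E =>
    (mul_prod_erase univ _ (mem_univ x)).symm
  have hrest : ∀ E : Finset X,
      (∏ y ∈ univ.erase x, if y ∈ insert x E then p y else 1 - p y) =
      ∏ y ∈ univ.erase x, if y ∈ E then p y else 1 - p y := fun E => by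
    refine prod_congr rfl fun y hy => ?_
    simp only [mem_insert, ne_of_mem_erase hy, false_or]
  have hsum : ∀ f : Finset X → ℝ, ∑ E, f E =
      ∑ E ∈ (univ.erase x).powerset, (f E + f (insert x E)) := fun f => by
    rw [sum_add_distrib, ← sum_powerset_insert (notMem_erase x univ), insert_erase (mem_univ x),
      powerset_univ]
  rw [subsetProb_eq_sum_mul, subsetProb_eq_sum_mul, hsum, hsum, mul_sum]
  refine sum_congr rfl fun E hE => ?_
  have hx : x ∉ E := fun h => notMem_erase x univ (mem_powerset.1 hE h)
  simp only [hx, hC E hx, hw, hrest, mem_insert_self, true_and, false_and, if_true, if_false]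
  ring

lemma subsetProb_subset_and (p : X → ℝ) (T : Finset X) (C : Finset X → Prop)
    (hC : ∀ E F, E \ T = F \ T → (C E ↔ C F)) :
    subsetProb p (fun E => T ⊆ E ∧ C E) = (∏ x ∈ T, p x) * subsetProb p C := by
  induction T using Finset.induction_on generalizing C with
  | empty => simp
  | insert x T hx ih =>
    have hassoc : (fun E => insert x T ⊆ E ∧ C E) = fun E => x ∈ E ∧ (T ⊆ E ∧ C E) := by
      funext E
      simp only [insert_subset_iff, and_assoc]
    rw [hassoc, subsetProb_mem_and, ih C, prod_insert hx, mul_assoc]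
    · exact fun E F h => hC E F (by simp only [sdiff_insert, h])
    · intro E _
      rw [subset_insert_iff_of_notMem hx, hC (insert x E) E (by grind)]

lemma subsetProb_subset (p : X → ℝ) (T : Finset X) :
    subsetProb p (fun E => T ⊆ E) = ∏ x ∈ T, p x := by
  simpa [subsetProb_true] using subsetProb_subset_and p T (fun _ => True) (by simp)

/-- Harris' inequality -/
lemma subsetProb_and_le_mul (hp : ∀ x, p x ∈ Set.Icc (0 : ℝ) 1) {A C : Finset X → Prop}
    (hA : Monotone A) (hC : Antitone C) :
    subsetProb p (fun E => A E ∧ C E) ≤ subsetProb p A * subsetProb p C := by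
  have hfkg := fkg (fun E => if A E then (1 : ℝ) else 0) (fun E => if ¬ C E then (1 : ℝ) else 0)
    (subsetWeight p) (subsetWeight_nonneg hp)
    (fun E => by dsimp; split_ifs <;> norm_num) (fun E => by dsimp; split_ifs <;> norm_num)
    (fun E F h => by have : A E → A F := hA h; grind)
    (fun E F h => by have : C F → C E := hC h; grind)
    (fun E F => (subsetWeight_mul_subsetWeight p E F).le)
  have hind : ∀ E, (if A E ∧ ¬ C E then (1 : ℝ) else 0) =
      (if A E then 1 else 0) * if ¬ C E then 1 else 0 := fun E => by grind
  simp only [← hind, ← subsetProb_eq_sum_mul, subsetProb_not, sum_subsetWeight, one_mul] at hfkg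
  linarith [subsetProb_and_add_and_not p A C]

end ProductMeasure

/-! ### Janson's inequality -/

section Janson

variable {X I : Type*} {p : X → ℝ}

/-- The probability that `T i` and `T j` are both contained in the random set, if `i ≠ j` and
these two events are dependent; zero otherwise. -/
noncomputable def overlapProb (p : X → ℝ) (T : I → Finset X) (i j : I) : ℝ :=
  if i ≠ j ∧ ¬ Disjoint (T i) (T j) then ∏ x ∈ T i ∪ T j, p x else 0

lemma overlapProb_nonneg (hp : ∀ x, p x ∈ Set.Icc (0 : ℝ) 1) (T : I → Finset X) (i j : I) :
    0 ≤ overlapProb p T i j := by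
  unfold overlapProb
  split_ifs
  exacts [prod_nonneg fun x _ => (hp x).1, le_rfl]

variable [Fintype X]

/-- The sets `T j` disjoint from `S` are avoided independently of `S ⊆ E`; Harris' inequality
bounds the loss caused by the others. -/
lemma mul_subsetProb_le_subset_and_avoid (hp : ∀ x, p x ∈ Set.Icc (0 : ℝ) 1) (S : Finset X)
    (T : I → Finset X) (s : Finset I) :
    ((∏ x ∈ S, p x) - ∑ j ∈ s with ¬ Disjoint S (T j), ∏ x ∈ S ∪ T j, p x) *
        subsetProb p (fun E => ∀ j ∈ s, Disjoint S (T j) → ¬ T j ⊆ E) ≤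
      subsetProb p (fun E => S ⊆ E ∧ ∀ j ∈ s, ¬ T j ⊆ E) := by
  set C : Finset X → Prop := fun E => ∀ j ∈ s, Disjoint S (T j) → ¬ T j ⊆ E
  set t : Finset I := {j ∈ s | ¬ Disjoint S (T j)}
  have hC : Antitone C := fun E F hEF hF j hj hd hT => hF j hj hd (hT.trans hEF)
  have hindep : subsetProb p (fun E => S ⊆ E ∧ C E) = (∏ x ∈ S, p x) * subsetProb p C := by
    refine subsetProb_subset_and p S C fun E F hEF => ?_
    have hiff : ∀ j, Disjoint S (T j) → (T j ⊆ E ↔ T j ⊆ F) := fun j hj => by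
      have hsub : ∀ E, T j ⊆ E ↔ T j ⊆ E \ S := fun E => by simp [subset_sdiff, hj.symm]
      rw [hsub, hsub F, hEF]
    exact forall₂_congr fun j _ => imp_congr_right fun hd => not_congr (hiff j hd)
  have hdep : subsetProb p (fun E => (S ⊆ E ∧ C E) ∧ ∃ j ∈ t, T j ⊆ E) ≤
      (∑ j ∈ t, ∏ x ∈ S ∪ T j, p x) * subsetProb p C := by
    calc _ ≤ subsetProb p (fun E => ∃ j ∈ t, S ∪ T j ⊆ E ∧ C E) :=
          subsetProb_mono hp fun E ⟨⟨hS, hE⟩, j, hj, hT⟩ => ⟨j, hj, union_subset hS hT, hE⟩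
      _ ≤ ∑ j ∈ t, subsetProb p (fun E => S ∪ T j ⊆ E ∧ C E) := subsetProb_exists_le hp t _
      _ ≤ ∑ j ∈ t, (∏ x ∈ S ∪ T j, p x) * subsetProb p C := sum_le_sum fun j _ => by
          rw [← subsetProb_subset]
          exact subsetProb_and_le_mul hp (fun E F hEF h => h.trans hEF) hC
      _ = _ := (sum_mul ..).symm
  have havoid : subsetProb p (fun E => (S ⊆ E ∧ C E) ∧ ¬ ∃ j ∈ t, T j ⊆ E) ≤
      subsetProb p (fun E => S ⊆ E ∧ ∀ j ∈ s, ¬ T j ⊆ E) := by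
    refine subsetProb_mono hp fun E ⟨⟨hS, hE⟩, hnot⟩ => ⟨hS, fun j hj hT => ?_⟩
    by_cases hd : Disjoint S (T j)
    exacts [hE j hj hd hT, hnot ⟨j, mem_filter.2 ⟨hj, hd⟩, hT⟩]
  have hsplit := subsetProb_and_add_and_not p (fun E => S ⊆ E ∧ C E) (fun E => ∃ j ∈ t, T j ⊆ E)
  rw [sub_mul]
  linarith

lemma subsetProb_avoid_insert_le (hp : ∀ x, p x ∈ Set.Icc (0 : ℝ) 1) (T : I → Finset X)
    {s : Finset I} {i : I} (hi : i ∉ s) :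
    subsetProb p (fun E => ∀ j ∈ insert i s, ¬ T j ⊆ E) ≤
      subsetProb p (fun E => ∀ j ∈ s, ¬ T j ⊆ E) *
        Real.exp (-((∏ x ∈ T i, p x) - ∑ j ∈ s, overlapProb p T i j)) := by
  set N : Finset X → Prop := fun E => ∀ j ∈ s, ¬ T j ⊆ E
  set q : ℝ := (∏ x ∈ T i, p x) - ∑ j ∈ s, overlapProb p T i j
  have hoverlap : ∑ j ∈ s with ¬ Disjoint (T i) (T j), ∏ x ∈ T i ∪ T j, p x =
      ∑ j ∈ s, overlapProb p T i j := by
    rw [sum_filter]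
    exact sum_congr rfl fun j hj => by simp [overlapProb, show i ≠ j from fun h => hi (h ▸ hj)]
  have hlower : q * subsetProb p N ≤ subsetProb p (fun E => N E ∧ T i ⊆ E) := by
    rcases le_total 0 q with hq0 | hq0
    · refine le_trans ?_ ((mul_subsetProb_le_subset_and_avoid hp (T i) T s).trans
        (subsetProb_mono hp fun E h => h.symm))
      rw [hoverlap]
      exact mul_le_mul_of_nonneg_left (subsetProb_mono hp fun E h j hj _ => h j hj) hq0
    · exact (mul_nonpos_of_nonpos_of_nonneg hq0 (subsetProb_nonneg hp N)).trans
        (subsetProb_nonneg hp _)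
  calc subsetProb p (fun E => ∀ j ∈ insert i s, ¬ T j ⊆ E)
      = subsetProb p (fun E => N E ∧ ¬ T i ⊆ E) := by
        simp only [forall_mem_insert, and_comm, N]
    _ ≤ subsetProb p N * (1 - q) := by
        linarith [subsetProb_and_add_and_not p N (fun E => T i ⊆ E)]
    _ ≤ subsetProb p N * Real.exp (-q) :=
        mul_le_mul_of_nonneg_left (Real.one_sub_le_exp_neg q) (subsetProb_nonneg hp N)

lemma subsetProb_avoid_le_exp_sum (hp : ∀ x, p x ∈ Set.Icc (0 : ℝ) 1) (T : I → Finset X)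
    (s : Finset I) :
    subsetProb p (fun E => ∀ i ∈ s, ¬ T i ⊆ E) ≤
      Real.exp (-(∑ i ∈ s, ∏ x ∈ T i, p x - ∑ i ∈ s, ∑ j ∈ s, overlapProb p T i j)) := by
  induction s using Finset.induction_on with
  | empty => simp [subsetProb_true]
  | insert i s hi ih =>
    have hd := overlapProb_nonneg hp T
    have hpairs : ∑ i' ∈ s, ∑ j ∈ s, overlapProb p T i' j + ∑ j ∈ s, overlapProb p T i j ≤
        ∑ i' ∈ insert i s, ∑ j ∈ insert i s, overlapProb p T i' j := by
      simp only [sum_insert hi, sum_add_distrib]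
      linarith [hd i i, sum_nonneg fun j (_ : j ∈ s) => hd j i]
    calc _ ≤ _ := subsetProb_avoid_insert_le hp T hi
      _ ≤ _ := mul_le_mul_of_nonneg_right ih (Real.exp_nonneg _)
      _ ≤ _ := by
        rw [← Real.exp_add, Real.exp_le_exp, sum_insert hi (f := fun i => ∏ x ∈ T i, p x)]
        linarith

lemma exists_le_of_le_sum_subsetWeight (hp : ∀ x, p x ∈ Set.Icc (0 : ℝ) 1) {f : Finset X → ℝ}
    {B : ℝ} (hB : B ≤ ∑ E, subsetWeight p E * f E) : ∃ E, B ≤ f E := by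
  obtain ⟨E, -, hmax⟩ := exists_max_image univ f univ_nonempty
  refine ⟨E, hB.trans ?_⟩
  calc ∑ F, subsetWeight p F * f F ≤ ∑ F, subsetWeight p F * f E := sum_le_sum fun F hF =>
        mul_le_mul_of_nonneg_left (hmax F hF) (subsetWeight_nonneg hp F)
    _ = f E := by rw [← sum_mul, sum_subsetWeight, one_mul]

lemma sum_subsetWeight_mul_sum_filter (q : ℝ) (s : Finset X) (f : X → ℝ) :
    ∑ E, subsetWeight (fun _ => q) E * ∑ x ∈ s with x ∈ E, f x = q * ∑ x ∈ s, f x := by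
  simp only [sum_filter, mul_sum]
  rw [sum_comm]
  refine sum_congr rfl fun x _ => ?_
  have h := subsetProb_subset (fun _ : X => q) {x}
  simp only [subsetProb_eq_sum_mul, singleton_subset_iff, prod_singleton] at h
  conv_rhs => rw [← h, sum_mul]
  simp only [mul_assoc, ite_mul, one_mul, zero_mul]

lemma sum_subsetWeight_mul_sum_pairs_filter (q : ℝ) (s : Finset X) {f : X → X → ℝ}
    (hf : ∀ x, f x x = 0) :
    ∑ E, subsetWeight (fun _ => q) E * ∑ x ∈ s with x ∈ E, ∑ y ∈ s with y ∈ E, f x y =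
      q ^ 2 * ∑ x ∈ s, ∑ y ∈ s, f x y := by
  simp only [sum_filter, mul_sum, ite_sum_zero]
  rw [sum_comm]
  refine sum_congr rfl fun x _ => ?_
  rw [sum_comm]
  refine sum_congr rfl fun y _ => ?_
  rcases eq_or_ne x y with rfl | hxy
  · simp [hf]
  · have h := subsetProb_subset (fun _ : X => q) {x, y}
    simp only [subsetProb_eq_sum_mul, insert_subset_iff, singleton_subset_iff, prod_const,
      card_pair hxy] at h
    conv_rhs => rw [← h, sum_mul]
    simp only [mul_assoc, ite_mul, one_mul, zero_mul, ite_and]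

/-- Janson's inequality -/
lemma subsetProb_avoid_le_exp_sq_div [Finite I] (hp : ∀ x, p x ∈ Set.Icc (0 : ℝ) 1)
    (T : I → Finset X) (s : Finset I) {μ D : ℝ} (hμ0 : 0 ≤ μ) (hμ : μ ≤ ∑ i ∈ s, ∏ x ∈ T i, p x)
    (hD0 : 0 < D) (hμD : μ ≤ D) (hD : ∑ i ∈ s, ∑ j ∈ s, overlapProb p T i j ≤ D) :
    subsetProb p (fun E => ∀ i ∈ s, ¬ T i ⊆ E) ≤ Real.exp (-(μ ^ 2 / (4 * D))) := by
  cases nonempty_fintype I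
  -- Apply the linear bound to a random subfamily whose density `q` balances the two sums.
  set q : ℝ := μ / (2 * D) with hq
  have hq01 : q ∈ Set.Icc (0 : ℝ) 1 :=
    ⟨by positivity, by rw [hq, div_le_one (by positivity)]; linarith⟩
  obtain ⟨R, hR⟩ : ∃ R : Finset I, μ ^ 2 / (4 * D) ≤ ∑ i ∈ s with i ∈ R, ∏ x ∈ T i, p x -
      ∑ i ∈ s with i ∈ R, ∑ j ∈ s with j ∈ R, overlapProb p T i j := by
    refine exists_le_of_le_sum_subsetWeight (p := fun _ => q) (fun _ => hq01) ?_
    simp only [mul_sub, sum_sub_distrib]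
    rw [sum_subsetWeight_mul_sum_filter,
      sum_subsetWeight_mul_sum_pairs_filter q s (fun i => by simp [overlapProb])]
    calc μ ^ 2 / (4 * D) = q * μ - q ^ 2 * D := by rw [hq]; field_simp; ring
      _ ≤ _ := sub_le_sub (mul_le_mul_of_nonneg_left hμ hq01.1)
          (mul_le_mul_of_nonneg_left hD (sq_nonneg q))
  calc _ ≤ subsetProb p (fun E => ∀ i ∈ s.filter (· ∈ R), ¬ T i ⊆ E) :=
        subsetProb_mono hp fun E h i hi => h i (filter_subset _ _ hi)
    _ ≤ _ := subsetProb_avoid_le_exp_sum hp T _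
    _ ≤ _ := Real.exp_le_exp.2 (neg_le_neg hR)

end Janson

/-! ### Partite copies in a random uniform hypergraph -/

/-- The probability of `e` being an edge of the binomial random `k`-graph. -/
noncomputable def edgeProb {V : Type*} (k : ℕ) (p : ℝ) (e : Finset V) : ℝ :=
  if e.card = k then p else 0

lemma edgeProb_mem_Icc {V : Type*} (k : ℕ) {p : ℝ} (hp : p ∈ Set.Icc (0 : ℝ) 1) (e : Finset V) :
    edgeProb k p e ∈ Set.Icc (0 : ℝ) 1 := by
  unfold edgeProb
  split_ifs
  exacts [hp, ⟨le_rfl, zero_le_one⟩]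

section Partite

variable {ι κ V : Type*} {pos : κ → Finset ι} {U : ι → Finset V} {w w' : ι → V} {k : ℕ} {p : ℝ}

lemma eq_of_apply_eq_apply (hU : Pairwise (Function.onFun Disjoint U)) (hw : ∀ x, w x ∈ U x)
    (hw' : ∀ x, w' x ∈ U x) {x y : ι} (h : w x = w' y) : x = y := by
  by_contra hxy
  exact disjoint_left.1 (hU hxy) (hw x) (h ▸ hw' y)

lemma eq_and_eqOn_of_image_eq_image (hU : Pairwise (Function.onFun Disjoint U))
    (hw : ∀ x, w x ∈ U x) (hw' : ∀ x, w' x ∈ U x) {A B : Finset ι}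
    (h : A.image w = B.image w') : A = B ∧ ∀ x ∈ A, w x = w' x := by
  have hAB : ∀ x ∈ A, x ∈ B ∧ w x = w' x := fun x hx => by
    obtain ⟨y, hy, hyx⟩ := mem_image.1 (h ▸ mem_image_of_mem w hx)
    obtain rfl := eq_of_apply_eq_apply hU hw hw' hyx.symm
    exact ⟨hy, hyx.symm⟩
  refine ⟨Subset.antisymm (fun x hx => (hAB x hx).1) fun y hy => ?_, fun x hx => (hAB x hx).2⟩
  obtain ⟨x, hx, hxy⟩ := mem_image.1 (h.symm ▸ mem_image_of_mem w' hy)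
  exact eq_of_apply_eq_apply hU hw hw' hxy ▸ hx

lemma injective_of_forall_mem (hU : Pairwise (Function.onFun Disjoint U))
    (hw : ∀ x, w x ∈ U x) : Function.Injective w := fun _ _ => eq_of_apply_eq_apply hU hw hw

lemma injective_image_pos (hpos : Function.Injective pos)
    (hU : Pairwise (Function.onFun Disjoint U)) (hw : ∀ x, w x ∈ U x) :
    Function.Injective fun j => (pos j).image w :=
  fun _ _ h => hpos (eq_and_eqOn_of_image_eq_image hU hw hw h).1

variable [Fintype κ]

/-- The edge set of the copy, under the placement `w`, of the hypergraph with edges `pos j`. -/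
noncomputable def copyEdges (pos : κ → Finset ι) (w : ι → V) : Finset (Finset V) :=
  univ.image fun j => (pos j).image w

lemma copyEdges_subset_iff {E : Finset (Finset V)} :
    copyEdges pos w ⊆ E ↔ ∀ j, (pos j).image w ∈ E := by
  simp [copyEdges, image_subset_iff]

lemma card_copyEdges (hpos : Function.Injective pos) (hU : Pairwise (Function.onFun Disjoint U))
    (hw : ∀ x, w x ∈ U x) : (copyEdges pos w).card = Fintype.card κ :=
  card_image_of_injective _ (injective_image_pos hpos hU hw)

lemma edgeProb_of_mem_copyEdges (hk : ∀ j, (pos j).card = k)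
    (hU : Pairwise (Function.onFun Disjoint U)) (hw : ∀ x, w x ∈ U x) {e : Finset V}
    (he : e ∈ copyEdges pos w) : edgeProb k p e = p := by
  obtain ⟨j, -, rfl⟩ := mem_image.1 he
  rw [edgeProb, if_pos (by rw [card_image_of_injective _ (injective_of_forall_mem hU hw), hk])]

lemma prod_edgeProb_copyEdges (hpos : Function.Injective pos) (hk : ∀ j, (pos j).card = k)
    (hU : Pairwise (Function.onFun Disjoint U)) (hw : ∀ x, w x ∈ U x) :
    ∏ e ∈ copyEdges pos w, edgeProb k p e = p ^ Fintype.card κ := by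
  rw [prod_congr rfl fun e he => edgeProb_of_mem_copyEdges hk hU hw he, prod_const,
    card_copyEdges hpos hU hw]

lemma copyEdges_inter_copyEdges (hpos : Function.Injective pos)
    (hU : Pairwise (Function.onFun Disjoint U)) (hw : ∀ x, w x ∈ U x) (hw' : ∀ x, w' x ∈ U x) :
    copyEdges pos w ∩ copyEdges pos w' =
      ({j | (pos j).image w = (pos j).image w'} : Finset κ).image fun j => (pos j).image w := by
  ext e
  simp only [copyEdges, mem_inter, mem_image, mem_univ, true_and, mem_filter]
  constructor
  · rintro ⟨⟨i, rfl⟩, j, hj⟩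
    obtain rfl := hpos (eq_and_eqOn_of_image_eq_image hU hw' hw hj).1
    exact ⟨j, hj.symm, rfl⟩
  · rintro ⟨j, hj, rfl⟩
    exact ⟨⟨j, rfl⟩, j, hj.symm⟩

variable [DecidableEq ι]

/-- `J` is the set of edges shared by the two copies. -/
lemma overlapProb_copyEdges_le (hpos : Function.Injective pos) (hk : ∀ j, (pos j).card = k)
    (hU : Pairwise (Function.onFun Disjoint U)) (hp : 0 ≤ p) (hw : ∀ x, w x ∈ U x)
    (hw' : ∀ x, w' x ∈ U x) :
    overlapProb (edgeProb k p) (copyEdges pos) w w' ≤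
      ∑ J : Finset κ with J.Nonempty,
        if Set.EqOn w w' (J.biUnion pos) then p ^ (2 * Fintype.card κ - J.card) else 0 := by
  have hnonneg : ∀ J ∈ ({J | J.Nonempty} : Finset (Finset κ)), 0 ≤
      if Set.EqOn w w' (J.biUnion pos) then p ^ (2 * Fintype.card κ - J.card) else 0 :=
    fun J _ => by split_ifs <;> positivity
  unfold overlapProb
  split_ifs with h
  swap
  · exact sum_nonneg hnonneg
  set J : Finset κ := {j | (pos j).image w = (pos j).image w'}
  have hinter : (copyEdges pos w ∩ copyEdges pos w').card = J.card := by
    rw [copyEdges_inter_copyEdges hpos hU hw hw',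
      card_image_of_injective _ (injective_image_pos hpos hU hw)]
  have hJ : J.Nonempty := by
    rw [← card_pos, ← hinter, card_pos]
    exact not_disjoint_iff_nonempty_inter.1 h.2
  have hagree : Set.EqOn w w' (J.biUnion pos) := fun x hx => by
    obtain ⟨j, hj, hxj⟩ := mem_biUnion.1 hx
    exact (eq_and_eqOn_of_image_eq_image hU hw hw' (mem_filter.1 hj).2).2 x hxj
  have hunion : (copyEdges pos w ∪ copyEdges pos w').card = 2 * Fintype.card κ - J.card := by
    rw [card_union, card_copyEdges hpos hU hw, card_copyEdges hpos hU hw', hinter, two_mul]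
  have hprod : ∏ e ∈ copyEdges pos w ∪ copyEdges pos w', edgeProb k p e =
      p ^ (2 * Fintype.card κ - J.card) := by
    rw [← hunion, ← prod_const]
    refine prod_congr rfl fun e he => (mem_union.1 he).elim ?_ ?_
    exacts [edgeProb_of_mem_copyEdges hk hU hw, edgeProb_of_mem_copyEdges hk hU hw']
  calc _ = p ^ (2 * Fintype.card κ - J.card) := by convert hprod
    _ = if Set.EqOn w w' (J.biUnion pos) then p ^ (2 * Fintype.card κ - J.card) else 0 :=
      (if_pos hagree).symm
    _ ≤ _ := single_le_sum hnonneg (mem_filter.2 ⟨mem_univ J, hJ⟩)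

variable [Fintype ι]

lemma card_filter_agree (B : Finset ι) (hw : ∀ x, w x ∈ U x) :
    #{w' ∈ Fintype.piFinset U | Set.EqOn w w' B} = ∏ x ∈ Bᶜ, #(U x) := by
  have hpi : {w' ∈ Fintype.piFinset U | Set.EqOn w w' B} =
      Fintype.piFinset fun x => if x ∈ B then {w x} else U x := by
    ext w'
    simp only [mem_filter, Fintype.mem_piFinset, Set.EqOn, mem_coe, ← forall_and]
    refine forall_congr' fun x => ?_
    by_cases hx : x ∈ B
    · simpa [hx, eq_comm] using fun h : w x = w' x => h ▸ hw x
    · simp [hx]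
  simp only [hpi, Fintype.card_piFinset, apply_ite card, card_singleton, prod_ite, prod_const_one,
    one_mul, ← compl_filter, filter_univ_mem]

lemma sum_agree_pow_le (hp : 0 ≤ p) (hw : ∀ x, w x ∈ U x) {K : ℝ} (hK0 : 0 < K) {J : Finset κ}
    (hK : K ≤ (∏ x ∈ J.biUnion pos, (#(U x) : ℝ)) * p ^ #J) :
    ∑ w' ∈ Fintype.piFinset U,
        (if Set.EqOn w w' (J.biUnion pos) then p ^ (2 * Fintype.card κ - #J) else 0) ≤
      (∏ x, (#(U x) : ℝ)) * p ^ (2 * Fintype.card κ) / K := by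
  have hJ : #J ≤ Fintype.card κ := card_le_univ J
  rw [← sum_filter, sum_const, card_filter_agree _ hw, nsmul_eq_mul, le_div_iff₀ hK0, Nat.cast_prod]
  calc (∏ x ∈ (J.biUnion pos)ᶜ, (#(U x) : ℝ)) * p ^ (2 * Fintype.card κ - #J) * K
      ≤ (∏ x ∈ (J.biUnion pos)ᶜ, (#(U x) : ℝ)) * p ^ (2 * Fintype.card κ - #J) *
        ((∏ x ∈ J.biUnion pos, (#(U x) : ℝ)) * p ^ #J) :=
        mul_le_mul_of_nonneg_left hK (by positivity)
    _ = (∏ x, (#(U x) : ℝ)) * p ^ (2 * Fintype.card κ) := by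
        rw [mul_mul_mul_comm, prod_compl_mul_prod, ← pow_add, Nat.sub_add_cancel (by omega)]

lemma sum_overlapProb_copyEdges_le (hpos : Function.Injective pos) (hk : ∀ j, (pos j).card = k)
    (hU : Pairwise (Function.onFun Disjoint U)) (hp : 0 ≤ p) (hw : ∀ x, w x ∈ U x) {K : ℝ}
    (hK0 : 0 < K)
    (hK : ∀ J : Finset κ, J.Nonempty → K ≤ (∏ x ∈ J.biUnion pos, (#(U x) : ℝ)) * p ^ #J) :
    ∑ w' ∈ Fintype.piFinset U, overlapProb (edgeProb k p) (copyEdges pos) w w' ≤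
      2 ^ Fintype.card κ * ((∏ x, (#(U x) : ℝ)) * p ^ (2 * Fintype.card κ) / K) := by
  have hcard : (#{J : Finset κ | J.Nonempty} : ℝ) ≤ 2 ^ Fintype.card κ := by
    exact_mod_cast (card_le_univ _).trans_eq Fintype.card_finset
  calc ∑ w' ∈ Fintype.piFinset U, overlapProb (edgeProb k p) (copyEdges pos) w w'
      ≤ ∑ w' ∈ Fintype.piFinset U, ∑ J : Finset κ with J.Nonempty,
          if Set.EqOn w w' (J.biUnion pos) then p ^ (2 * Fintype.card κ - #J) else 0 :=
        sum_le_sum fun w' hw' =>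
          overlapProb_copyEdges_le hpos hk hU hp hw (Fintype.mem_piFinset.1 hw')
    _ ≤ ∑ J : Finset κ with J.Nonempty, (∏ x, (#(U x) : ℝ)) * p ^ (2 * Fintype.card κ) / K := by
        rw [sum_comm]
        exact sum_le_sum fun J hJ => sum_agree_pow_le hp hw hK0 (hK J (mem_filter.1 hJ).2)
    _ ≤ _ := by
        rw [sum_const, nsmul_eq_mul]
        gcongr

variable [Fintype V]

lemma subsetProb_no_copy_le [Nonempty κ] (hpos : Function.Injective pos)
    (hk : ∀ j, (pos j).card = k) (hU : Pairwise (Function.onFun Disjoint U))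
    (hne : ∀ x, (U x).Nonempty) (hp0 : 0 < p) (hp1 : p ≤ 1) {Z : Finset (ι → V)}
    (hZU : Z ⊆ Fintype.piFinset U) {c K : ℝ} (hc : c ∈ Set.Icc (0 : ℝ) 1) (hK0 : 0 < K)
    (hZ : c * ∏ x, (#(U x) : ℝ) ≤ #Z)
    (hK : ∀ J : Finset κ, J.Nonempty → K ≤ (∏ x ∈ J.biUnion pos, (#(U x) : ℝ)) * p ^ #J) :
    subsetProb (edgeProb k p) (fun E => ¬ ∃ w ∈ Z, ∀ j, (pos j).image w ∈ E) ≤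
      Real.exp (-(c ^ 2 * K / (4 * 2 ^ Fintype.card κ))) := by
  set Q : ℝ := ∏ x, (#(U x) : ℝ) with hQ
  set M : ℝ := Q * p ^ Fintype.card κ with hM
  have hcard : ∀ x, (1 : ℝ) ≤ #(U x) := fun x => by exact_mod_cast card_pos.2 (hne x)
  have hM0 : 0 < M := mul_pos (prod_pos fun x _ => by linarith [hcard x]) (by positivity)
  have hKM : K ≤ M := by
    refine (hK univ univ_nonempty).trans (mul_le_mul_of_nonneg_right ?_ (by positivity))
    simp only [hQ, ← Nat.cast_prod, Nat.cast_le]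
    exact prod_le_prod_of_subset_of_one_le' (subset_univ _) fun x _ _ => card_pos.2 (hne x)
  have hmean : c * M ≤ ∑ w ∈ Z, ∏ e ∈ copyEdges pos w, edgeProb k p e := by
    rw [sum_congr rfl fun w hw =>
      prod_edgeProb_copyEdges hpos hk hU (Fintype.mem_piFinset.1 (hZU hw)), sum_const, nsmul_eq_mul,
      hM, ← mul_assoc]
    exact mul_le_mul_of_nonneg_right hZ (by positivity)
  have hpairs : ∑ w ∈ Z, ∑ w' ∈ Z, overlapProb (edgeProb k p) (copyEdges pos) w w' ≤
      2 ^ Fintype.card κ * M ^ 2 / K := by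
    have hnonneg := overlapProb_nonneg (edgeProb_mem_Icc k ⟨hp0.le, hp1⟩) (copyEdges pos (V := V))
    calc ∑ w ∈ Z, ∑ w' ∈ Z, overlapProb (edgeProb k p) (copyEdges pos) w w'
        ≤ ∑ w ∈ Z, 2 ^ Fintype.card κ * (Q * p ^ (2 * Fintype.card κ) / K) :=
          sum_le_sum fun w hw => (sum_le_sum_of_subset_of_nonneg hZU fun w' _ _ =>
            hnonneg w w').trans (sum_overlapProb_copyEdges_le hpos hk hU hp0.le
              (Fintype.mem_piFinset.1 (hZU hw)) hK0 hK)
      _ ≤ Q * (2 ^ Fintype.card κ * (Q * p ^ (2 * Fintype.card κ) / K)) := by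
          rw [sum_const, nsmul_eq_mul, hQ, ← Nat.cast_prod, ← Fintype.card_piFinset]
          gcongr
      _ = 2 ^ Fintype.card κ * M ^ 2 / K := by rw [hM]; ring
  have hmeanpairs : c * M ≤ 2 ^ Fintype.card κ * M ^ 2 / K := by
    rw [le_div_iff₀ hK0]
    calc c * M * K ≤ 1 * M * M := by gcongr; exact hc.2
      _ ≤ 2 ^ Fintype.card κ * M ^ 2 := by
        rw [one_mul, ← sq]
        exact le_mul_of_one_le_left (sq_nonneg M) (one_le_pow₀ one_le_two)
  have hjanson := subsetProb_avoid_le_exp_sq_div (edgeProb_mem_Icc k ⟨hp0.le, hp1⟩)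
    (copyEdges pos) Z (mul_nonneg hc.1 hM0.le) hmean (by positivity) hmeanpairs hpairs
  have hexp : (c * M) ^ 2 / (4 * (2 ^ Fintype.card κ * M ^ 2 / K)) =
      c ^ 2 * K / (4 * 2 ^ Fintype.card κ) := by
    field_simp
  simpa only [hexp, copyEdges_subset_iff, not_exists, not_and] using hjanson

end Partite

lemma gProb_eq_subsetProb (n k : ℕ) (p : ℝ) (A : Finset (Finset (Fin n)) → Prop) :
    gProb n k p A = subsetProb (edgeProb k p) A := by
  have hmem : ∀ e : Finset (Fin n), e ∈ kSets n k ↔ e.card = k := by simp [kSets]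
  rw [gProb, subsetProb]
  refine sum_subset_zero_on_sdiff (filter_subset_filter _ (subset_univ _)) (fun E hE => ?_)
    fun E hE => ?_
  · have hsub : ¬ E ⊆ kSets n k := fun h => by simp_all
    obtain ⟨e, he, hek⟩ := not_subset.1 hsub
    rw [hmem] at hek
    exact prod_eq_zero (mem_univ e) (by simp [he, hek, edgeProb])
  · have hsub : E ⊆ kSets n k := mem_powerset.1 (mem_filter.1 hE).1
    have hin : ∏ e ∈ E, edgeProb k p e = p ^ #E :=
      prod_eq_pow_card fun e he => if_pos ((hmem e).1 (hsub he))
    have hout : ∏ e ∈ kSets n k \ E, (1 - edgeProb k p e) = (1 - p) ^ (#(kSets n k) - #E) := by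
      rw [← card_sdiff_of_subset hsub]
      exact prod_eq_pow_card fun e he => by rw [edgeProb, if_pos ((hmem e).1 (mem_sdiff.1 he).1)]
    have hzero : ∀ e ∉ E, e ∉ kSets n k \ E → 1 - edgeProb k p e = 1 := fun e he he' => by
      have hek : e ∉ kSets n k := fun h => he' (mem_sdiff.2 ⟨h, he⟩)
      rw [edgeProb, if_neg fun h => hek ((hmem e).2 h), sub_zero]
    rw [subsetWeight_eq_prod_mul_prod_compl, hin, ← hout]
    congr 1
    convert prod_subset (fun e he => mem_compl.2 (mem_sdiff.1 he).2) fun e he =>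
      hzero e (mem_compl.1 he)

/-! ### Positions along an `ℓ`-path -/

section Positions

variable {k ℓ a b : ℕ}

/-- The positions `m` with `s ≤ m < t` in a tuple with `b` entries; those with `b ≤ m` are cut
off. -/
def finIco (b s t : ℕ) : Finset (Fin b) := {m | s ≤ m ∧ m < t}

/-- The positions, along an `ℓ`-path with `b` vertices, of its `j`-th edge (counted from `0`). -/
def edgePos (k ℓ b j : ℕ) : Finset (Fin b) := finIco b (j * (k - ℓ)) (j * (k - ℓ) + k)

lemma mem_finIco {s t : ℕ} {m : Fin b} : m ∈ finIco b s t ↔ s ≤ m ∧ m < t := by simp [finIco]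

lemma card_finIco {s t : ℕ} (ht : t ≤ b) : #(finIco b s t) = t - s := by
  have h : finIco b s t = (Ico s t).attachFin fun m hm => (mem_Ico.1 hm).2.trans_le ht := by
    ext m
    rw [mem_finIco, mem_attachFin, mem_Ico]
  rw [h, card_attachFin, Nat.card_Ico]

lemma mul_sub_add_le (hlk : ℓ < k) (hb : b = a * (k - ℓ) + ℓ) (j : Fin a) :
    j * (k - ℓ) + k ≤ b := by
  have : ((j : ℕ) + 1) * (k - ℓ) ≤ a * (k - ℓ) := Nat.mul_le_mul_right _ j.isLt
  rw [Nat.add_mul] at this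
  omega

lemma card_edgePos (hlk : ℓ < k) (hb : b = a * (k - ℓ) + ℓ) (j : Fin a) :
    #(edgePos k ℓ b j) = k := by
  rw [edgePos, card_finIco (mul_sub_add_le hlk hb j), Nat.add_sub_cancel_left]

lemma edgePos_injective (hlk : ℓ < k) (hb : b = a * (k - ℓ) + ℓ) :
    Function.Injective fun j : Fin a => edgePos k ℓ b j := by
  refine Function.Injective.of_lt_imp_ne fun i j hij h => ?_
  have hi := mul_sub_add_le hlk hb i
  have hlt : (i : ℕ) * (k - ℓ) < j * (k - ℓ) := Nat.mul_lt_mul_of_pos_right hij (by omega)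
  have hmem : (⟨i * (k - ℓ), by omega⟩ : Fin b) ∈ edgePos k ℓ b j := by
    rw [← h, edgePos, mem_finIco]
    dsimp only
    omega
  rw [edgePos, mem_finIco] at hmem
  exact hlt.not_ge hmem.1

/-- Only the last `k - ℓ` positions of the last edge in `J` are counted as new. -/
lemma le_card_biUnion_edgePos (hlk : ℓ < k) (hb : b = a * (k - ℓ) + ℓ) {J : Finset (Fin a)}
    (hJ : J.Nonempty) : (k - ℓ) * #J + ℓ ≤ #(J.biUnion fun j => edgePos k ℓ b j) := by
  induction J using Finset.induction_on_max with
  | empty => exact absurd hJ not_nonempty_empty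
  | insert j s hlt ih =>
    rw [card_insert_of_notMem fun h => lt_irrefl _ (hlt j h), biUnion_insert]
    rcases s.eq_empty_or_nonempty with rfl | hs
    · simp only [card_empty, biUnion_empty, union_empty, card_edgePos hlk hb]
      omega
    set N : Finset (Fin b) := finIco b (j * (k - ℓ) + ℓ) (j * (k - ℓ) + k)
    have hN : #N = k - ℓ := by
      rw [card_finIco (mul_sub_add_le hlk hb j)]
      omega
    have hdisj : Disjoint N (s.biUnion fun i => edgePos k ℓ b i) := by
      refine (disjoint_biUnion_right _ _ _).2 fun i hi => disjoint_left.2 fun m hm hm' => ?_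
      have hij : ((i : ℕ) + 1) * (k - ℓ) ≤ j * (k - ℓ) := Nat.mul_le_mul_right _ (hlt i hi)
      rw [Nat.add_mul] at hij
      simp only [N, edgePos, mem_finIco] at hm hm'
      omega
    have hsub : N ⊆ edgePos k ℓ b j := fun m hm => by
      simp only [N, edgePos, mem_finIco] at hm ⊢
      omega
    have hcard := card_le_card (union_subset_union_left (t := s.biUnion fun i => edgePos k ℓ b i)
      hsub)
    rw [card_union_of_disjoint hdisj, hN] at hcard
    rw [Nat.mul_add]
    have := ih hs
    omega

end Positions

/-! ### Rich class systems -/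

section RichSystem

variable {V : Type*} {k ℓ a q : ℕ}

/-- The `i`-th position of the first `ℓ`-end. -/
def firstPos (q : ℕ) (i : Fin ℓ) : Fin (ℓ + q + ℓ) := Fin.castAdd ℓ (Fin.castAdd q i)

/-- The `i`-th position outside the two `ℓ`-ends. -/
def midPos (ℓ : ℕ) (i : Fin q) : Fin (ℓ + q + ℓ) := Fin.castAdd ℓ (Fin.natAdd ℓ i)

/-- The `i`-th position of the last `ℓ`-end. -/
def lastPos (q : ℕ) (i : Fin ℓ) : Fin (ℓ + q + ℓ) := Fin.natAdd (ℓ + q) i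

lemma forall_pos_iff {P : Fin (ℓ + q + ℓ) → Prop} :
    (∀ x, P x) ↔ (∀ i, P (firstPos q i)) ∧ (∀ i, P (midPos ℓ i)) ∧ ∀ i, P (lastPos q i) := by
  refine ⟨fun h => ⟨fun i => h _, fun i => h _, fun i => h _⟩, fun h x => ?_⟩
  exact Fin.addCases (fun y => Fin.addCases h.1 h.2.1 y) h.2.2 x

lemma prod_pos_eq {M : Type*} [CommMonoid M] (f : Fin (ℓ + q + ℓ) → M) :
    ∏ x, f x =
      (∏ i, f (firstPos q i)) * (∏ i, f (midPos ℓ i)) * ∏ i, f (lastPos q i) := by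
  rw [Fin.prod_univ_add, Fin.prod_univ_add]
  rfl

/-- The tuples with one entry in each class whose entries form an edge of `L`. -/
noncomputable def edgeTuples {ι : Type*} [Fintype ι] (L : Finset (Finset V))
    (A : ι → Finset V) : Finset (ι → V) :=
  {f ∈ Fintype.piFinset A | univ.image f ∈ L}

/-- The classes `A i` have size at most `m` and span at least a `c`-proportion of the
conceivable `m ^ |ι|` edges of `L` with one vertex in each class. -/
structure IsDense {ι : Type*} [Fintype ι] (L : Finset (Finset V)) (m : ℕ) (c : ℝ)
    (A : ι → Finset V) : Prop where
  card_le : ∀ i, #(A i) ≤ m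
  le_card : c * (m : ℝ) ^ Fintype.card ι ≤ #(edgeTuples L A)

/-- Disjoint classes for the vertices of an `ℓ`-path in which short paths are likely to occur:
the two ends are dense in `L`, all middle classes have size at least `h`, except for the root
class `r`, whose size is only known to be at least `σ`. -/
structure IsRich (L : Finset (Finset V)) (m : ℕ) (c h σ : ℝ) (r : Fin q)
    (U : Fin (ℓ + q + ℓ) → Finset V) : Prop where
  disjoint : Pairwise (Function.onFun Disjoint U)
  first : IsDense L m c (U ∘ firstPos q)
  last : IsDense L m c (U ∘ lastPos q)
  mid : ∀ i ≠ r, h ≤ #(U (midPos ℓ i))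
  root : σ ≤ #(U (midPos ℓ r))

/-- The tuple `w` traverses an `ℓ`-path of length `a` in `E` (which is an honest path if `w` is
injective) with both ends in `L`. -/
structure IsLPath (k a : ℕ) (L E : Finset (Finset V)) (w : Fin (ℓ + q + ℓ) → V) : Prop where
  first : univ.image (w ∘ firstPos q) ∈ L
  last : univ.image (w ∘ lastPos q) ∈ L
  edge : ∀ j < a, (edgePos k ℓ (ℓ + q + ℓ) j).image w ∈ E

/-- Some `ℓ`-path of length `a` in `E` with both ends in `L` has its `x`-th vertex in `U x` for
every position `x`. -/
def HasPath (k a : ℕ) (L E : Finset (Finset V)) (U : Fin (ℓ + q + ℓ) → Finset V) : Prop :=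
  ∃ w, (∀ x, w x ∈ U x) ∧ IsLPath k a L E w

variable {L E : Finset (Finset V)} {m : ℕ} {c h σ : ℝ} {r : Fin q}
  {U U' : Fin (ℓ + q + ℓ) → Finset V}

lemma HasPath.mono (hU : ∀ x, U x ⊆ U' x) (h : HasPath k a L E U) : HasPath k a L E U' :=
  h.imp fun _ hw => ⟨fun x => hU x (hw.1 x), hw.2⟩

section Dense

variable {ι : Type*} [Fintype ι] {A : ι → Finset V}

lemma IsDense.mul_prod_card_le (hA : IsDense L m c A) (hc : 0 ≤ c) :
    c * ∏ i, (#(A i) : ℝ) ≤ #(edgeTuples L A) := by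
  refine le_trans ?_ hA.le_card
  have h : ∏ i, (#(A i) : ℝ) ≤ (m : ℝ) ^ Fintype.card ι :=
    mod_cast prod_le_pow_card univ (fun i => #(A i)) m fun i _ => hA.card_le i
  gcongr

lemma IsDense.mul_le_card (hA : IsDense L m c A) (hm : 0 < m) (i : ι) : c * m ≤ #(A i) := by
  have hle : (#(edgeTuples L A) : ℝ) ≤ #(A i) * (m : ℝ) ^ (Fintype.card ι - 1) := by
    have h1 : #(edgeTuples L A) ≤ #(A i) * ∏ j ∈ univ.erase i, #(A j) := by
      rw [mul_prod_erase univ (fun j => #(A j)) (mem_univ i), ← Fintype.card_piFinset]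
      exact card_filter_le _ _
    have h2 : ∏ j ∈ univ.erase i, #(A j) ≤ m ^ (Fintype.card ι - 1) :=
      (prod_le_pow_card _ _ _ fun j _ => hA.card_le j).trans_eq
        (by rw [card_erase_of_mem (mem_univ i), card_univ])
    exact_mod_cast h1.trans (Nat.mul_le_mul_left _ h2)
  have hpow : (m : ℝ) ^ Fintype.card ι = m * (m : ℝ) ^ (Fintype.card ι - 1) := by
    rw [← pow_succ', Nat.sub_add_cancel (Fintype.card_pos_iff.2 ⟨i⟩)]
  have hpos : (0 : ℝ) < (m : ℝ) ^ (Fintype.card ι - 1) := by positivity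
  refine le_of_mul_le_mul_right ?_ hpos
  rw [mul_assoc, ← hpow]
  exact hA.le_card.trans hle

end Dense

lemma prod_card_mul_le_card_filter (L : Finset (Finset V)) (U : Fin (ℓ + q + ℓ) → Finset V) :
    #(edgeTuples L (U ∘ firstPos q)) * (∏ i, #(U (midPos ℓ i))) * #(edgeTuples L (U ∘ lastPos q)) ≤
      #{w ∈ Fintype.piFinset U |
        univ.image (w ∘ firstPos q) ∈ L ∧ univ.image (w ∘ lastPos q) ∈ L} := by
  rw [← Fintype.card_piFinset fun i => U (midPos ℓ i), ← card_product, ← card_product]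
  have hinv : Function.LeftInverse
      (fun w : Fin (ℓ + q + ℓ) → V => ((w ∘ firstPos q, w ∘ midPos ℓ), w ∘ lastPos q))
      fun t => Fin.append (Fin.append t.1.1 t.1.2) t.2 := by
    rintro ⟨⟨f, g⟩, f'⟩
    ext <;> simp [firstPos, midPos, lastPos]
  refine card_le_card_of_injOn _ ?_ hinv.injective.injOn
  rintro t ht
  set w := Fin.append (Fin.append t.1.1 t.1.2) t.2
  have htw : t = ((w ∘ firstPos q, w ∘ midPos ℓ), w ∘ lastPos q) := (hinv t).symm
  rw [htw] at ht
  simp only [coe_product, Set.mem_prod, mem_coe, edgeTuples, mem_filter, Fintype.mem_piFinset,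
    Function.comp_apply] at ht
  exact mem_filter.2 ⟨Fintype.mem_piFinset.2 (forall_pos_iff.2 ⟨ht.1.1.1, ht.1.2, ht.2.1⟩),
    ht.1.1.2, ht.2.2⟩

lemma IsRich.mul_prod_card_le (hU : IsRich L m c h σ r U) (hc : 0 ≤ c) :
    c ^ 2 * ∏ x, (#(U x) : ℝ) ≤ #{w ∈ Fintype.piFinset U |
      univ.image (w ∘ firstPos q) ∈ L ∧ univ.image (w ∘ lastPos q) ∈ L} := by
  have hfirst := hU.first.mul_prod_card_le hc
  have hlast := hU.last.mul_prod_card_le hc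
  calc c ^ 2 * ∏ x, (#(U x) : ℝ)
      = (c * ∏ i, (#(U (firstPos q i)) : ℝ)) * (∏ i, (#(U (midPos ℓ i)) : ℝ)) *
          (c * ∏ i, (#(U (lastPos q i)) : ℝ)) := by
        rw [prod_pos_eq fun x => (#(U x) : ℝ)]
        ring
    _ ≤ #(edgeTuples L (U ∘ firstPos q)) * (∏ i, (#(U (midPos ℓ i)) : ℝ)) *
          #(edgeTuples L (U ∘ lastPos q)) := by
        gcongr
        exacts [hfirst, hlast]
    _ ≤ _ := mod_cast prod_card_mul_le_card_filter L U

lemma IsRich.le_card (hU : IsRich L m c h σ r U) (hm : 0 < m) (hh : h ≤ c * m)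
    (x : Fin (ℓ + q + ℓ)) : x ≠ midPos ℓ r → h ≤ #(U x) := by
  revert x
  refine forall_pos_iff.2 ⟨fun i _ => hh.trans (hU.first.mul_le_card hm i), fun i hi => ?_,
    fun i _ => hh.trans (hU.last.mul_le_card hm i)⟩
  exact hU.mid i fun hir => hi (hir ▸ rfl)

lemma mul_pow_le_prod {ι : Type*} {f : ι → ℝ} {r : ι} {h σ : ℝ} (h1 : 1 ≤ h) (hσ0 : 0 ≤ σ)
    (hσ : σ ≤ h) (hf : ∀ x ≠ r, h ≤ f x) (hr : σ ≤ f r) {B : Finset ι} {N : ℕ} (hN : N < #B) :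
    σ * h ^ N ≤ ∏ x ∈ B, f x := by
  have hpow : ∀ S : Finset ι, r ∉ S → h ^ #S ≤ ∏ x ∈ S, f x := fun S hS => by
    rw [← prod_const]
    exact prod_le_prod (fun _ _ => by linarith) fun x hx => hf x fun hxr => hS (hxr ▸ hx)
  by_cases hrB : r ∈ B
  · rw [← mul_prod_erase B _ hrB]
    have hN' : h ^ N ≤ h ^ #(B.erase r) :=
      pow_le_pow_right₀ h1 (by rw [card_erase_of_mem hrB]; omega)
    exact mul_le_mul hr (hN'.trans (hpow _ (notMem_erase r B))) (by positivity) (hσ0.trans hr)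
  · calc σ * h ^ N ≤ h * h ^ N := by gcongr
      _ ≤ h ^ #B := by
        rw [← pow_succ']
        exact pow_le_pow_right₀ h1 hN
      _ ≤ ∏ x ∈ B, f x := hpow B hrB

variable {p K : ℝ}

lemma IsRich.mul_le_prod_edgePos (hU : IsRich L m c h σ r U) (hlk : ℓ < k) (hl : 1 ≤ ℓ)
    (hq : q + ℓ = a * (k - ℓ)) (hm : 0 < m) (hh : h ≤ c * m) (h1 : 1 ≤ h) (hσ0 : 0 ≤ σ)
    (hσ : σ ≤ h) (hp0 : 0 ≤ p) (hK : ∀ j ∈ Set.Icc 1 a, K ≤ h ^ (ℓ - 1) * (h ^ (k - ℓ) * p) ^ j)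
    {J : Finset (Fin a)} (hJ : J.Nonempty) :
    σ * K ≤ (∏ x ∈ J.biUnion fun j => edgePos k ℓ (ℓ + q + ℓ) j, (#(U x) : ℝ)) * p ^ #J := by
  have hcard := le_card_biUnion_edgePos hlk (b := ℓ + q + ℓ) (by omega) hJ
  have hKJ := hK #J ⟨card_pos.2 hJ, (card_le_univ J).trans_eq (Fintype.card_fin a)⟩
  calc σ * K ≤ σ * (h ^ (ℓ - 1) * (h ^ (k - ℓ) * p) ^ #J) := by gcongr
    _ = σ * h ^ (ℓ - 1 + (k - ℓ) * #J) * p ^ #J := by rw [pow_add, pow_mul, mul_pow]; ring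
    _ ≤ _ := by
      gcongr
      exact mul_pow_le_prod h1 hσ0 hσ (hU.le_card hm hh) hU.root (by omega)

lemma IsRich.subsetProb_not_hasPath_le [Fintype V] (hU : IsRich L m c h σ r U) (hlk : ℓ < k)
    (hl : 1 ≤ ℓ) (ha : 0 < a) (hq : q + ℓ = a * (k - ℓ)) (hc : c ∈ Set.Icc (0 : ℝ) 1) (hm : 0 < m)
    (hh : h ≤ c * m) (h1 : 1 ≤ h) (hσ0 : 0 < σ) (hσ : σ ≤ h) (hp0 : 0 < p) (hp1 : p ≤ 1)
    (hK0 : 0 < K) (hK : ∀ j ∈ Set.Icc 1 a, K ≤ h ^ (ℓ - 1) * (h ^ (k - ℓ) * p) ^ j) :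
    subsetProb (edgeProb k p) (fun E => ¬ HasPath k a L E U) ≤
      Real.exp (-((c ^ 2) ^ 2 * (σ * K) / (4 * 2 ^ a))) := by
  have hb : ℓ + q + ℓ = a * (k - ℓ) + ℓ := by omega
  have hsize := hU.le_card hm hh
  have hne : ∀ x, (U x).Nonempty := fun x => by
    rw [← card_pos, ← Nat.cast_pos (α := ℝ)]
    by_cases hx : x = midPos ℓ r
    · exact hσ0.trans_le (hx ▸ hU.root)
    · linarith [hsize x hx]
  have : Nonempty (Fin a) := ⟨⟨0, ha⟩⟩
  set Z : Finset (Fin (ℓ + q + ℓ) → V) := {w ∈ Fintype.piFinset U |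
    univ.image (w ∘ firstPos q) ∈ L ∧ univ.image (w ∘ lastPos q) ∈ L}
  have hprob : subsetProb (edgeProb k p) (fun E => ¬ ∃ w ∈ Z, ∀ j : Fin a,
      (edgePos k ℓ (ℓ + q + ℓ) j).image w ∈ E) ≤
      Real.exp (-((c ^ 2) ^ 2 * (σ * K) / (4 * 2 ^ Fintype.card (Fin a)))) :=
    subsetProb_no_copy_le (edgePos_injective hlk hb) (card_edgePos hlk hb) hU.disjoint hne hp0 hp1
      (filter_subset _ _) ⟨sq_nonneg c, pow_le_one₀ hc.1 hc.2⟩ (mul_pos hσ0 hK0)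
      (hU.mul_prod_card_le hc.1)
      fun J => hU.mul_le_prod_edgePos hlk hl hq hm hh h1 hσ0.le hσ hp0.le hK
  rw [Fintype.card_fin] at hprob
  refine le_trans (subsetProb_mono (edgeProb_mem_Icc k ⟨hp0.le, hp1⟩) fun E hE hpath => ?_) hprob
  obtain ⟨w, hw, hwE⟩ := hpath
  rw [mem_filter, Fintype.mem_piFinset] at hw
  exact hE ⟨w, hw.1, hw.2.1, hw.2.2, fun j hj => hwE ⟨j, hj⟩⟩

end RichSystem

/-! ### Dense pieces of an `ℓ`-graph -/

section DensePiece

variable {V ι : Type*} [Fintype ι] {L : Finset (Finset V)} {A : ι → Finset V} {m N : ℕ}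

lemma card_filter_apply_mem_le (hA : ∀ i, #(A i) ≤ m) (j : ι) {B : (ι → V) → Finset V}
    (hB : ∀ f g : ι → V, (∀ i ≠ j, f i = g i) → B f = B g) (hN : ∀ f, #(B f) ≤ N) :
    #{f ∈ Fintype.piFinset A | f j ∈ B f} ≤ N * m ^ (Fintype.card ι - 1) := by
  set S : Finset (ι → V) := {f ∈ Fintype.piFinset A | f j ∈ B f}
  let restrict (f : ι → V) : {i // i ≠ j} → V := fun i => f i
  have hfibre : #S ≤ N * #(S.image restrict) := by
    refine card_le_mul_card_image _ _ fun g hg => ?_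
    obtain ⟨f₀, -, rfl⟩ := mem_image.1 hg
    have heq : ∀ f, restrict f = restrict f₀ → ∀ i ≠ j, f i = f₀ i :=
      fun f hf i hi => congrFun hf ⟨i, hi⟩
    refine (card_le_card_of_injOn (fun f => f j) (fun f hf => ?_) fun f hf g hg hfg => ?_).trans
      (hN f₀)
    · obtain ⟨hfS, hf⟩ := mem_filter.1 hf
      rw [← hB f f₀ (heq f hf)]
      exact (mem_filter.1 hfS).2
    · funext i
      obtain rfl | hi := eq_or_ne i j
      · exact hfg
      · rw [heq f (mem_filter.1 hf).2 i hi, heq g (mem_filter.1 hg).2 i hi]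
  have himage : S.image restrict ⊆ Fintype.piFinset fun i : {i // i ≠ j} => A i :=
    image_subset_iff.2 fun f hf => Fintype.mem_piFinset.2 fun i =>
      Fintype.mem_piFinset.1 (mem_filter.1 hf).1 i
  refine hfibre.trans (Nat.mul_le_mul_left _ ((card_le_card himage).trans ?_))
  rw [Fintype.card_piFinset]
  refine (prod_le_pow_card univ (fun i : {i // i ≠ j} => #(A i)) m fun i _ => hA i).trans_eq ?_
  rw [card_univ, Fintype.card_subtype_compl, Fintype.card_subtype_eq]

lemma card_filter_exists_apply_mem_le (hA : ∀ i, #(A i) ≤ m) {X : Finset V}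
    (hX : ∀ i, #(X ∩ A i) ≤ N) :
    #{f ∈ Fintype.piFinset A | ∃ i, f i ∈ X} ≤
      Fintype.card ι * (N * m ^ (Fintype.card ι - 1)) := by
  have hsub : {f ∈ Fintype.piFinset A | ∃ i, f i ∈ X} ⊆
      univ.biUnion fun i => {f ∈ Fintype.piFinset A | f i ∈ X ∩ A i} := fun f hf => by
    obtain ⟨hfA, i, hi⟩ := mem_filter.1 hf
    exact mem_biUnion.2 ⟨i, mem_univ i,
      mem_filter.2 ⟨hfA, mem_inter.2 ⟨hi, Fintype.mem_piFinset.1 hfA i⟩⟩⟩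
  exact (card_le_card hsub).trans <| card_biUnion_le_card_mul _ _ _ fun i _ =>
    card_filter_apply_mem_le hA i (fun _ _ _ => rfl) fun _ => hX i

lemma IsDense.sdiff [Nonempty ι] {c c' : ℝ} (hA : IsDense L m (c + c') A) {X : Finset V}
    (hX : ∀ i, #(X ∩ A i) ≤ N) (hN : Fintype.card ι * (N : ℝ) ≤ c' * m) :
    IsDense L m c fun i => A i \ X := by
  refine ⟨fun i => (card_le_card sdiff_subset).trans (hA.card_le i), ?_⟩
  have hsub : edgeTuples L A ⊆ edgeTuples L (fun i => A i \ X) ∪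
      {f ∈ Fintype.piFinset A | ∃ i, f i ∈ X} := fun f hf => by
    simp only [edgeTuples, mem_union, mem_filter, Fintype.mem_piFinset, mem_sdiff] at hf ⊢
    grind
  have hcard : (#(edgeTuples L A) : ℝ) ≤ #(edgeTuples L fun i => A i \ X) +
      Fintype.card ι * (N * (m : ℝ) ^ (Fintype.card ι - 1)) :=
    mod_cast (card_le_card hsub).trans <| (card_union_le _ _).trans <|
      Nat.add_le_add_left (card_filter_exists_apply_mem_le hA.card_le hX) _
  have hpow : (m : ℝ) ^ Fintype.card ι = m * (m : ℝ) ^ (Fintype.card ι - 1) := by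
    rw [← pow_succ', Nat.sub_add_cancel Fintype.card_pos]
  have hhit : Fintype.card ι * (N * (m : ℝ) ^ (Fintype.card ι - 1)) ≤
      c' * (m : ℝ) ^ Fintype.card ι := by
    rw [hpow, ← mul_assoc, ← mul_assoc]
    gcongr
  linarith [hA.le_card, add_mul c c' ((m : ℝ) ^ Fintype.card ι)]

variable [Fintype V]

lemma exists_colouring_card_fibre_le (V : Type*) [Fintype V] (hm : 0 < m) :
    ∃ χ : V → Fin (Fintype.card V / m + 1), ∀ t, #{v | χ v = t} ≤ m := by
  refine ⟨fun v => ⟨Fintype.equivFin V v / m,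
    Nat.lt_succ_of_le (Nat.div_le_div_right (Fin.is_lt _).le)⟩, fun t => ?_⟩
  calc #{v : V | (⟨Fintype.equivFin V v / m, _⟩ : Fin (Fintype.card V / m + 1)) = t}
      ≤ #(Ico (t * m : ℕ) (t * m + m)) := by
        refine card_le_card_of_injOn (fun v => (Fintype.equivFin V v : ℕ)) (fun v hv => ?_)
          fun v _ w _ hvw => (Fintype.equivFin V).injective (Fin.ext hvw)
        have hv : (Fintype.equivFin V v : ℕ) / m = t := congrArg Fin.val (mem_filter.1 hv).2
        have := (Nat.div_eq_iff hm).1 hv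
        simp only [coe_Ico, Set.mem_Ico]
        omega
    _ = m := by simp

lemma card_filter_not_injective_comp_le {κ : Type*} {χ : V → κ}
    (hχ : ∀ t, #{v | χ v = t} ≤ m) :
    #{f : ι → V | ¬ (χ ∘ f).Injective} ≤
      Fintype.card ι ^ 2 * (m * Fintype.card V ^ (Fintype.card ι - 1)) := by
  have hsub : ({f | ¬ (χ ∘ f).Injective} : Finset (ι → V)) ⊆
      (univ : Finset (ι × ι)).biUnion fun ij => {f | ij.1 ≠ ij.2 ∧ χ (f ij.2) = χ (f ij.1)} :=
    fun f hf => by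
      obtain ⟨j, i, hχji, hji⟩ := Function.not_injective_iff.1 (mem_filter.1 hf).2
      exact mem_biUnion.2 ⟨(i, j), mem_univ _, mem_filter.2 ⟨mem_univ _, hji.symm, hχji⟩⟩
  refine (card_le_card hsub).trans <| (card_biUnion_le_card_mul _ _
    (m * Fintype.card V ^ (Fintype.card ι - 1)) fun ij _ => ?_).trans_eq (by simp [sq])
  by_cases hij : ij.1 = ij.2
  · simp [hij]
  have h := card_filter_apply_mem_le (A := fun _ : ι => (univ : Finset V)) (fun _ => le_rfl) ij.2
    (B := fun f => {v | χ v = χ (f ij.1)})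
    (fun f g hfg => by rw [hfg _ hij]) fun f => hχ _
  simpa [hij, Fintype.piFinset_univ] using h

lemma card_le_card_edgeTuples_univ (hL : ∀ S ∈ L, #S = Fintype.card ι) :
    #L ≤ #(edgeTuples L fun _ : ι => univ) := by
  refine card_le_card_of_surjOn (fun f : ι → V => univ.image f) fun S hS => ?_
  have e : ι ≃ S := Fintype.equivOfCardEq (by rw [Fintype.card_coe, hL S hS])
  have himage : univ.image (fun i => (e i : V)) = S := by
    ext v
    simp only [mem_image, mem_univ, true_and]
    exact ⟨fun ⟨i, hi⟩ => hi ▸ (e i).2, fun hv => ⟨e.symm ⟨v, hv⟩, by simp⟩⟩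
  exact ⟨fun i => e i, mem_filter.2 ⟨by simp, himage.symm ▸ hS⟩, himage⟩

lemma le_card_rainbow_edgeTuples [Nonempty ι] {α : ℝ} (hL : ∀ S ∈ L, #S = Fintype.card ι)
    (hLcard : α * (Fintype.card V : ℝ) ^ Fintype.card ι ≤ #L) {F : Finset V}
    (hF : Fintype.card ι * (#F : ℝ) ≤ α / 4 * Fintype.card V) {κ : Type*} {χ : V → κ}
    (hχ : ∀ t, #{v | χ v = t} ≤ m)
    (hm : (Fintype.card ι : ℝ) ^ 2 * m ≤ α / 4 * Fintype.card V) :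
    α / 2 * (Fintype.card V : ℝ) ^ Fintype.card ι ≤
      #{f ∈ edgeTuples L fun _ : ι => Fᶜ | (χ ∘ f).Injective} := by
  set n := Fintype.card V
  set d := Fintype.card ι
  have hFdense : IsDense L n (α * (3 / 4)) fun _ : ι => univ \ F :=
    IsDense.sdiff (c' := α / 4) (N := #F)
      ⟨fun _ => card_le_univ _, by
        rw [show α * (3 / 4) + α / 4 = α by ring]
        exact hLcard.trans (mod_cast card_le_card_edgeTuples_univ hL)⟩
      (fun _ => card_le_card inter_subset_left) hF
  have hcompl : (fun _ : ι => univ \ F) = fun _ => Fᶜ := by simp [compl_eq_univ_sdiff]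
  have hsplit : (#(edgeTuples L fun _ : ι => Fᶜ) : ℝ) ≤
      #{f ∈ edgeTuples L fun _ : ι => Fᶜ | (χ ∘ f).Injective} +
        (d : ℝ) ^ 2 * (m * (n : ℝ) ^ (d - 1)) := by
    rw [← card_filter_add_card_filter_not fun f : ι → V => (χ ∘ f).Injective]
    exact_mod_cast Nat.add_le_add_left ((card_le_card (filter_subset_filter _
      (subset_univ _))).trans (card_filter_not_injective_comp_le hχ)) _
  have hpow : (n : ℝ) ^ d = n * (n : ℝ) ^ (d - 1) := by
    rw [← pow_succ', Nat.sub_add_cancel Fintype.card_pos]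
  have hbad : (d : ℝ) ^ 2 * (m * (n : ℝ) ^ (d - 1)) ≤ α / 4 * (n : ℝ) ^ d := by
    rw [hpow, ← mul_assoc, ← mul_assoc]
    gcongr
  have := hcompl ▸ hFdense.le_card
  linarith

lemma exists_le_card_filter_comp_eq {κ : Type*} [Fintype κ] [Nonempty κ] (χ : V → κ)
    (hκ : Fintype.card κ ≤ Fintype.card V / m + 1) {α : ℝ} (hα : 0 ≤ α) (hm0 : 0 < m)
    (hmV : m ≤ Fintype.card V) {S : Finset (ι → V)}
    (hS : α * (Fintype.card V : ℝ) ^ Fintype.card ι ≤ #S) :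
    ∃ pattern, α / 2 ^ Fintype.card ι * (m : ℝ) ^ Fintype.card ι ≤ #{f ∈ S | χ ∘ f = pattern} := by
  set n := Fintype.card V
  set d := Fintype.card ι
  have hm0' : (0 : ℝ) < m := mod_cast hm0
  have hcolours : (Fintype.card κ : ℝ) ≤ 2 * n / m := by
    refine (Nat.cast_le.2 hκ).trans ?_
    have h1 : (1 : ℝ) ≤ n / m := (one_le_div hm0').2 (mod_cast hmV)
    have h2 : ((n / m : ℕ) : ℝ) ≤ n / m := Nat.cast_div_le
    rw [mul_div_assoc]
    push_cast
    linarith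
  obtain ⟨pattern, -, h⟩ := exists_le_card_fiber_of_nsmul_le_card_of_maps_to
    (s := S) (t := (univ : Finset (ι → κ))) (f := fun f => χ ∘ f)
    (b := α / 2 ^ d * (m : ℝ) ^ d) (fun _ _ => mem_univ _) univ_nonempty (by
      rw [card_univ, Fintype.card_fun, nsmul_eq_mul, Nat.cast_pow]
      calc (Fintype.card κ : ℝ) ^ d * (α / 2 ^ d * (m : ℝ) ^ d)
          ≤ (2 * n / m) ^ d * (α / 2 ^ d * (m : ℝ) ^ d) := by gcongr
        _ = α * (n : ℝ) ^ d := by rw [div_pow, mul_pow]; field_simp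
        _ ≤ #S := hS)
  exact ⟨pattern, h⟩

/-- The most popular colour pattern among the rainbow edges of a colouring with small colour
classes provides the dense piece. -/
lemma exists_isDense_of_colouring [Nonempty ι] {α : ℝ} (hα : 0 ≤ α)
    (hL : ∀ S ∈ L, #S = Fintype.card ι)
    (hLcard : α * (Fintype.card V : ℝ) ^ Fintype.card ι ≤ #L) {F : Finset V}
    (hF : Fintype.card ι * (#F : ℝ) ≤ α / 4 * Fintype.card V) (hm0 : 0 < m)
    (hmV : m ≤ Fintype.card V) (hm : (Fintype.card ι : ℝ) ^ 2 * m ≤ α / 4 * Fintype.card V)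
    {κ : Type*} [Fintype κ] [Nonempty κ] {χ : V → κ}
    (hκ : Fintype.card κ ≤ Fintype.card V / m + 1) (hχ : ∀ t, #{v | χ v = t} ≤ m) :
    ∃ A : ι → Finset V, Pairwise (Function.onFun Disjoint A) ∧ (∀ i, Disjoint (A i) F) ∧
      (∀ i, ∀ x ∈ A i, ∃ S ∈ L, x ∈ S) ∧ IsDense L m (α / 2 / 2 ^ Fintype.card ι) A := by
  obtain ⟨pattern, hpattern⟩ := exists_le_card_filter_comp_eq χ hκ (by positivity) hm0 hmV
    (le_card_rainbow_edgeTuples hL hLcard hF hχ hm)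
  set T : Finset (ι → V) := {f ∈ ({f ∈ edgeTuples L fun _ : ι => Fᶜ | (χ ∘ f).Injective} :
    Finset (ι → V)) | χ ∘ f = pattern} with hT
  have hmem : ∀ f ∈ T, (∀ i, f i ∉ F) ∧ univ.image f ∈ L ∧ (χ ∘ f).Injective ∧
      ∀ i, χ (f i) = pattern i := fun f hf => by
    simpa [hT, edgeTuples, and_assoc, funext_iff] using hf
  refine ⟨fun i => T.image fun f => f i, fun i j hij => disjoint_left.2 fun x hxi hxj => ?_,
    fun i => disjoint_left.2 fun x hx => ?_, fun i x hx => ?_, fun i => ?_, hpattern.trans ?_⟩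
  · obtain ⟨f, hf, rfl⟩ := mem_image.1 hxi
    obtain ⟨g, hg, hgf⟩ := mem_image.1 hxj
    refine hij ((hmem f hf).2.2.1 ?_)
    change χ (f i) = χ (f j)
    rw [(hmem f hf).2.2.2 j, ← (hmem g hg).2.2.2 j, hgf]
  · obtain ⟨f, hf, rfl⟩ := mem_image.1 hx
    exact (hmem f hf).1 i
  · obtain ⟨f, hf, rfl⟩ := mem_image.1 hx
    exact ⟨_, (hmem f hf).2.1, mem_image_of_mem f (mem_univ i)⟩
  · exact (card_le_card (image_subset_iff.2 fun f hf =>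
      mem_filter.2 ⟨mem_univ _, (hmem f hf).2.2.2 i⟩)).trans (hχ (pattern i))
  · refine mod_cast card_le_card fun f hf => mem_filter.2 ⟨?_, (hmem f hf).2.1⟩
    exact Fintype.mem_piFinset.2 fun i => mem_image_of_mem (fun f : ι → V => f i) hf

lemma exists_isDense [Nonempty ι] {α : ℝ} (hα : 0 ≤ α) (hL : ∀ S ∈ L, #S = Fintype.card ι)
    (hLcard : α * (Fintype.card V : ℝ) ^ Fintype.card ι ≤ #L) {F : Finset V}
    (hF : Fintype.card ι * (#F : ℝ) ≤ α / 4 * Fintype.card V) (hm0 : 0 < m)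
    (hmV : m ≤ Fintype.card V) (hm : (Fintype.card ι : ℝ) ^ 2 * m ≤ α / 4 * Fintype.card V) :
    ∃ A : ι → Finset V, Pairwise (Function.onFun Disjoint A) ∧ (∀ i, Disjoint (A i) F) ∧
      (∀ i, ∀ x ∈ A i, ∃ S ∈ L, x ∈ S) ∧ IsDense L m (α / 2 / 2 ^ Fintype.card ι) A := by
  obtain ⟨χ, hχ⟩ := exists_colouring_card_fibre_le V hm0
  exact exists_isDense_of_colouring hα hL hLcard hF hm0 hmV hm (Fintype.card_fin _).le
    fun t => by convert hχ t

end DensePiece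

lemma exists_disjoint_subsets_of_card {V ι : Type*} [Fintype ι] {m : ℕ} {S : Finset V}
    (hS : Fintype.card ι * m ≤ #S) :
    ∃ P : ι → Finset V, Pairwise (Function.onFun Disjoint P) ∧ (∀ i, P i ⊆ S) ∧
      ∀ i, #(P i) = m := by
  obtain ⟨e⟩ : Nonempty (ι × Fin m ↪ S) :=
    Function.Embedding.nonempty_of_card_le (by simpa using hS)
  refine ⟨fun i => univ.image fun t => (e (i, t) : V),
    fun i j hij => disjoint_left.2 fun x hi hj => ?_,
    fun i => image_subset_iff.2 fun t _ => (e _).2, fun i => ?_⟩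
  · obtain ⟨t, -, rfl⟩ := mem_image.1 hi
    obtain ⟨s, -, hs⟩ := mem_image.1 hj
    exact hij (congrArg Prod.fst (e.injective (Subtype.ext hs))).symm
  · rw [card_image_of_injective _ fun s t hst =>
      congrArg Prod.snd (e.injective (Subtype.ext hst)), card_univ, Fintype.card_fin]

/-! ### Reserves -/

section Reserve

variable {V : Type*} {ℓ q m m' : ℕ} {c c' h σ : ℝ} {L : Finset (Finset V)}
  {U U' : Fin (ℓ + q + ℓ) → Finset V}

/-- Disjoint classes for the vertices of an `ℓ`-path: the two ends are dense in `L`, the middle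
classes have size exactly `m'`. -/
structure IsReserve (L : Finset (Finset V)) (m m' : ℕ) (c : ℝ)
    (U : Fin (ℓ + q + ℓ) → Finset V) : Prop where
  disjoint : Pairwise (Function.onFun Disjoint U)
  first : IsDense L m c (U ∘ firstPos q)
  last : IsDense L m c (U ∘ lastPos q)
  card_mid : ∀ i, #(U (midPos ℓ i)) = m'

lemma IsReserve.card_biUnion_le (hU : IsReserve L m m' c U) :
    #(univ.biUnion U) ≤ 2 * ℓ * m + q * m' := by
  have hends : ∀ A : Fin ℓ → Finset V, IsDense L m c A → ∑ i, #(A i) ≤ ℓ * m := fun A hA =>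
    (sum_le_card_nsmul _ _ m fun i _ => hA.card_le i).trans_eq (by simp)
  have hmid : ∑ i, #(U (midPos ℓ i)) = q * m' := by simp [hU.card_mid]
  calc #(univ.biUnion U) ≤ ∑ x, #(U x) := Finset.card_biUnion_le
    _ = ∑ i, #(U (firstPos q i)) + ∑ i, #(U (midPos ℓ i)) + ∑ i, #(U (lastPos q i)) := by
      rw [Fin.sum_univ_add, Fin.sum_univ_add]
      rfl
    _ ≤ ℓ * m + q * m' + ℓ * m :=
      add_le_add (add_le_add (hends _ hU.first) hmid.le) (hends _ hU.last)
    _ = 2 * ℓ * m + q * m' := by ring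

lemma IsReserve.isRich (hU : IsReserve L m m' (c + c') U) {r : Fin q} {X : Finset V} {N : ℕ}
    (hℓ : 0 < ℓ) (hX : ∀ x ≠ midPos ℓ r, #(X ∩ U x) ≤ N) (hNm : ℓ * (N : ℝ) ≤ c' * m)
    (hNm' : h + N ≤ m') (hU' : ∀ x ≠ midPos ℓ r, U' x = U x \ X)
    (hdisj : ∀ x ≠ midPos ℓ r, Disjoint (U' (midPos ℓ r)) (U x))
    (hroot : σ ≤ #(U' (midPos ℓ r))) : IsRich L m c h σ r U' := by
  have : Nonempty (Fin ℓ) := ⟨⟨0, hℓ⟩⟩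
  have hfirst : ∀ i, firstPos q i ≠ midPos ℓ r := fun i hi => by
    have := congrArg Fin.val hi
    simp only [firstPos, midPos, Fin.val_castAdd, Fin.val_natAdd] at this
    omega
  have hlast : ∀ i, lastPos q i ≠ midPos ℓ r := fun i hi => by
    have := congrArg Fin.val hi
    simp only [lastPos, midPos, Fin.val_castAdd, Fin.val_natAdd] at this
    omega
  refine ⟨fun x y hxy => ?_, ?_, ?_, fun i hi => ?_, hroot⟩
  · by_cases hx : x = midPos ℓ r
    · rw [Function.onFun, hx, hU' y (hx ▸ hxy.symm)]
      exact (hdisj y (hx ▸ hxy.symm)).mono_right sdiff_subset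
    by_cases hy : y = midPos ℓ r
    · rw [Function.onFun, hy, hU' x hx]
      exact (hdisj x hx).symm.mono_left sdiff_subset
    rw [Function.onFun, hU' x hx, hU' y hy]
    exact (hU.disjoint hxy).mono sdiff_subset sdiff_subset
  · rw [show U' ∘ firstPos q = fun i => (U ∘ firstPos q) i \ X from
      funext fun i => hU' _ (hfirst i)]
    exact hU.first.sdiff (fun i => hX _ (hfirst i)) (by rwa [Fintype.card_fin])
  · rw [show U' ∘ lastPos q = fun i => (U ∘ lastPos q) i \ X from funext fun i => hU' _ (hlast i)]
    exact hU.last.sdiff (fun i => hX _ (hlast i)) (by rwa [Fintype.card_fin])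
  · have hir : midPos ℓ i ≠ midPos ℓ r := fun hir => hi <| by
      simpa [midPos, Fin.ext_iff] using hir
    have hcard : m' ≤ #(U (midPos ℓ i) \ X) + N := by
      rw [← hU.card_mid i, ← card_sdiff_add_card_inter _ X, inter_comm]
      exact Nat.add_le_add_left (hX _ hir) _
    rw [hU' _ hir]
    linarith [(Nat.cast_le (α := ℝ)).2 hcard, Nat.cast_add (R := ℝ) #(U (midPos ℓ i) \ X) N]

lemma pairwise_disjoint_append {s t : ℕ} {A : Fin s → Finset V} {B : Fin t → Finset V}
    (hA : Pairwise (Function.onFun Disjoint A)) (hB : Pairwise (Function.onFun Disjoint B))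
    (hAB : ∀ i j, Disjoint (A i) (B j)) :
    Pairwise (Function.onFun Disjoint (Fin.append A B)) := by
  intro x y
  refine Fin.addCases (fun i => ?_) (fun i => ?_) x <;>
    refine Fin.addCases (fun j => ?_) (fun j => ?_) y <;>
    simp only [ne_eq, Fin.castAdd_inj, Fin.natAdd_inj, Function.onFun, Fin.append_left,
      Fin.append_right]
  exacts [@hA i j, fun _ => hAB i j, fun _ => (hAB j i).symm, @hB i j]

lemma isReserve_append {A B : Fin ℓ → Finset V} {P : Fin q → Finset V} (hA : IsDense L m c A)
    (hB : IsDense L m c B) (hP : ∀ i, #(P i) = m') (hAdisj : Pairwise (Function.onFun Disjoint A))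
    (hBdisj : Pairwise (Function.onFun Disjoint B)) (hPdisj : Pairwise (Function.onFun Disjoint P))
    (hAB : ∀ i j, Disjoint (A i) (B j)) (hAP : ∀ i j, Disjoint (A i) (P j))
    (hPB : ∀ i j, Disjoint (P i) (B j)) :
    IsReserve L m m' c (Fin.append (Fin.append A P) B) := by
  refine ⟨pairwise_disjoint_append (pairwise_disjoint_append hAdisj hPdisj hAP) hBdisj
    fun x j => ?_, ?_, ?_, fun i => ?_⟩
  · refine Fin.addCases (fun i => ?_) (fun i => ?_) x
    · simpa using hAB i j
    · simpa using hPB i j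
  · rwa [show Fin.append (Fin.append A P) B ∘ firstPos q = A from
      funext fun i => by simp [firstPos]]
  · rwa [show Fin.append (Fin.append A P) B ∘ lastPos q = B from funext fun i => by simp [lastPos]]
  · simpa [midPos] using hP i

lemma IsReserve.exists_fill (hU : IsReserve L m 0 c U) {S : Finset V} (hS : q * m' ≤ #S)
    (hUS : Disjoint (univ.biUnion U) S) :
    ∃ U' : Fin (ℓ + q + ℓ) → Finset V, IsReserve L m m' c U' ∧ (∀ i, U' (midPos ℓ i) ⊆ S) ∧
      univ.biUnion U' ⊆ univ.biUnion U ∪ S := by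
  obtain ⟨P, hPdisj, hPS, hPcard⟩ :=
    exists_disjoint_subsets_of_card (ι := Fin q) (by rwa [Fintype.card_fin])
  have hUP : ∀ x i, Disjoint (U x) (P i) := fun x i =>
    hUS.mono (subset_biUnion_of_mem U (mem_univ x)) (hPS i)
  have hfirst : (firstPos q : Fin ℓ → _).Injective :=
    (Fin.castAdd_injective _ _).comp (Fin.castAdd_injective _ _)
  have hlast : (lastPos q : Fin ℓ → _).Injective := Fin.natAdd_injective _ _
  refine ⟨Fin.append (Fin.append (U ∘ firstPos q) P) (U ∘ lastPos q), isReserve_append hU.first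
    hU.last hPcard (hU.disjoint.comp_of_injective hfirst) (hU.disjoint.comp_of_injective hlast)
    hPdisj (fun i j => hU.disjoint fun hij => ?_) (fun i j => hUP _ j) (fun i j => (hUP _ i).symm),
    fun i => by simpa [midPos] using hPS i, ?_⟩
  · have := congrArg Fin.val hij
    simp only [firstPos, lastPos, Fin.val_castAdd, Fin.val_natAdd] at this
    omega
  · have hx : ∀ y, U y ⊆ univ.biUnion U ∪ S := fun y =>
      (subset_biUnion_of_mem U (mem_univ y)).trans subset_union_left
    refine biUnion_subset.2 fun x _ => ?_
    revert x
    refine forall_pos_iff.2 ⟨fun i => ?_, fun i => ?_, fun i => ?_⟩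
    · simpa [firstPos] using hx _
    · simpa [midPos] using (hPS i).trans subset_union_right
    · simpa [lastPos] using hx _

variable [Fintype V]

lemma exists_isReserve_zero {α : ℝ} (hα : 0 ≤ α) (hℓ : 0 < ℓ) (hL : ∀ S ∈ L, #S = ℓ)
    (hLcard : α * (Fintype.card V : ℝ) ^ ℓ ≤ #L) {F V₀ : Finset V}
    (hLV₀ : ∀ S ∈ L, Disjoint S V₀) (hm0 : 0 < m) (hmV : m ≤ Fintype.card V)
    (hF : ℓ * (#F + ℓ * m : ℝ) ≤ α / 4 * Fintype.card V) :
    ∃ U : Fin (ℓ + q + ℓ) → Finset V, IsReserve L m 0 (α / 2 / 2 ^ ℓ) U ∧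
      Disjoint (univ.biUnion U) (F ∪ V₀) := by
  have : Nonempty (Fin ℓ) := ⟨⟨0, hℓ⟩⟩
  have hpiece : ∀ G : Finset V, #G ≤ #F + ℓ * m → ∃ A : Fin ℓ → Finset V,
      Pairwise (Function.onFun Disjoint A) ∧ (∀ i, Disjoint (A i) G) ∧
      (∀ i, Disjoint (A i) V₀) ∧ IsDense L m (α / 2 / 2 ^ ℓ) A := fun G hG => by
    have hG' : (#G : ℝ) ≤ #F + ℓ * m := mod_cast hG
    obtain ⟨A, hdisj, hAG, hAL, hA⟩ := exists_isDense (ι := Fin ℓ) (F := G) hα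
      (by simpa using hL) (by simpa using hLcard)
      (by rw [Fintype.card_fin]; exact (by gcongr : ℓ * (#G : ℝ) ≤ _).trans hF) hm0 hmV (by
        rw [Fintype.card_fin, sq, mul_assoc]
        refine le_trans ?_ hF
        gcongr
        exact le_add_of_nonneg_left (Nat.cast_nonneg _))
    refine ⟨A, hdisj, hAG, fun i => disjoint_left.2 fun x hx => ?_, by simpa using hA⟩
    obtain ⟨S, hS, hxS⟩ := hAL i x hx
    exact disjoint_left.1 (hLV₀ S hS) hxS
  obtain ⟨A, hAdisj, hAF, hAV₀, hA⟩ := hpiece F le_self_add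
  have hFA : #(F ∪ univ.biUnion A) ≤ #F + ℓ * m := (card_union_le _ _).trans <|
    Nat.add_le_add_left (by simpa using card_biUnion_le_card_mul univ A m fun i _ => hA.card_le i) _
  obtain ⟨B, hBdisj, hBF, hBV₀, hB⟩ := hpiece _ hFA
  simp only [disjoint_union_right, disjoint_biUnion_right, mem_univ, true_imp_iff] at hBF
  refine ⟨Fin.append (Fin.append A fun _ => ∅) B, isReserve_append hA hB (fun _ => card_empty)
    hAdisj hBdisj (fun _ _ _ => disjoint_empty_left _) (fun i j => ((hBF j).2 i).symm)
    (fun _ _ => disjoint_empty_right _) fun _ _ => disjoint_empty_left _, ?_⟩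
  simp only [disjoint_biUnion_left, mem_univ, true_imp_iff]
  refine forall_pos_iff.2 ⟨fun i => ?_, fun i => ?_, fun i => ?_⟩
  · simpa [firstPos] using disjoint_union_right.2 ⟨hAF i, hAV₀ i⟩
  · simp [midPos]
  · simpa [lastPos] using disjoint_union_right.2 ⟨(hBF i).1, hBV₀ i⟩

lemma exists_isReserve {α : ℝ} (hα : 0 ≤ α) (hℓ : 0 < ℓ) (hL : ∀ S ∈ L, #S = ℓ)
    (hLcard : α * (Fintype.card V : ℝ) ^ ℓ ≤ #L) {F V₀ : Finset V}
    (hLV₀ : ∀ S ∈ L, Disjoint S V₀) (hm0 : 0 < m) (hmV : m ≤ Fintype.card V)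
    (hF : ℓ * (#F + ℓ * m : ℝ) ≤ α / 4 * Fintype.card V)
    (hcard : #F + #V₀ + (2 * ℓ * m + q * m') ≤ Fintype.card V) :
    ∃ U : Fin (ℓ + q + ℓ) → Finset V, IsReserve L m m' (α / 2 / 2 ^ ℓ) U ∧
      Disjoint (univ.biUnion U) (F ∪ V₀) := by
  obtain ⟨U₀, hU₀, hU₀F⟩ := exists_isReserve_zero (q := q) hα hℓ hL hLcard hLV₀ hm0 hmV hF
  set T := univ.biUnion U₀ ∪ (F ∪ V₀)
  have hT : #T ≤ 2 * ℓ * m + q * 0 + (#F + #V₀) :=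
    (card_union_le _ _).trans (add_le_add hU₀.card_biUnion_le (card_union_le _ _))
  obtain ⟨U, hU, -, hUsub⟩ := hU₀.exists_fill (m' := m') (S := Tᶜ)
    (by rw [card_compl]; omega) (disjoint_compl_right.mono_left subset_union_left)
  exact ⟨U, hU, disjoint_of_subset_left hUsub (disjoint_union_left.2
    ⟨hU₀F, disjoint_compl_left.mono_right subset_union_right⟩)⟩

end Reserve

/-! ### Greedy path families -/

section PathFamily

variable {V : Type*} {k ℓ a q : ℕ} {L E : Finset (Finset V)}
  {W : Finset (Fin (ℓ + q + ℓ) → V)} {U : Fin (ℓ + q + ℓ) → Finset V}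

/-- The set of vertices covered by a family of tuples. -/
noncomputable def familyVerts {b : ℕ} (W : Finset (Fin b → V)) : Finset V :=
  W.biUnion fun w => univ.image w

/-- A family of vertex-disjoint `ℓ`-paths of length `a` in `E` with all ends in `L`. -/
structure IsPathFamily (k a : ℕ) (L E : Finset (Finset V)) (W : Finset (Fin (ℓ + q + ℓ) → V)) :
    Prop where
  injective : ∀ w ∈ W, w.Injective
  isLPath : ∀ w ∈ W, IsLPath k a L E w
  disjoint : (W : Set (Fin (ℓ + q + ℓ) → V)).PairwiseDisjoint fun w => univ.image w

lemma apply_mem_familyVerts {b : ℕ} {W : Finset (Fin b → V)} {w : Fin b → V} (hw : w ∈ W)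
    (x : Fin b) : w x ∈ familyVerts W :=
  mem_biUnion.2 ⟨w, hw, mem_image_of_mem w (mem_univ x)⟩

lemma familyVerts_insert {b : ℕ} (W : Finset (Fin b → V)) (w : Fin b → V) :
    familyVerts (insert w W) = univ.image w ∪ familyVerts W := biUnion_insert

lemma IsPathFamily.empty : IsPathFamily k a L E (∅ : Finset (Fin (ℓ + q + ℓ) → V)) :=
  ⟨by simp, by simp, by simp⟩

lemma IsPathFamily.insert (hW : IsPathFamily k a L E W) {w : Fin (ℓ + q + ℓ) → V}
    (hinj : w.Injective) (hw : IsLPath k a L E w) (hdisj : ∀ x, w x ∉ familyVerts W) :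
    IsPathFamily k a L E (insert w W) := by
  refine ⟨(forall_mem_insert _ _ _).2 ⟨hinj, hW.injective⟩,
    (forall_mem_insert _ _ _).2 ⟨hw, hW.isLPath⟩, ?_⟩
  rw [coe_insert]
  refine hW.disjoint.insert fun w' hw' _ => disjoint_left.2 fun v hv hv' => ?_
  obtain ⟨x, -, rfl⟩ := mem_image.1 hv
  exact hdisj x (mem_biUnion.2 ⟨w', hw', hv'⟩)

lemma card_image_union_inter (hU : Pairwise (Function.onFun Disjoint U))
    {w : Fin (ℓ + q + ℓ) → V} (hw : ∀ x, w x ∈ U x) {S : Finset V} (hwS : ∀ x, w x ∉ S)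
    (x : Fin (ℓ + q + ℓ)) : #((univ.image w ∪ S) ∩ U x) = #(S ∩ U x) + 1 := by
  have hx : (univ.image w ∪ S) ∩ U x = insert (w x) (S ∩ U x) := by
    ext v
    simp only [mem_inter, mem_union, mem_image, mem_univ, true_and, mem_insert]
    constructor
    · rintro ⟨⟨y, rfl⟩ | hv, hvx⟩
      · exact Or.inl (congrArg w (by_contra fun hyx => disjoint_left.1 (hU hyx) (hw y) hvx))
      · exact Or.inr ⟨hv, hvx⟩
    · rintro (rfl | ⟨hv, hvx⟩)
      · exact ⟨Or.inl ⟨x, rfl⟩, hw x⟩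
      · exact ⟨Or.inr hv, hvx⟩
  rw [hx, card_insert_of_notMem fun h => hwS x (mem_inter.1 h).1]

/-- The path family `W'` arises from `W` by adding `t` paths which have their `x`-th vertex in
`U x`, and no further such path can be added. -/
structure IsMaximalExtension (k a : ℕ) (L E : Finset (Finset V))
    (U : Fin (ℓ + q + ℓ) → Finset V) (W W' : Finset (Fin (ℓ + q + ℓ) → V)) (t : ℕ) : Prop where
  isPathFamily : IsPathFamily k a L E W'
  card_eq : #W' = #W + t
  subset : familyVerts W ⊆ familyVerts W'
  subset_union : familyVerts W' ⊆ familyVerts W ∪ univ.biUnion U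
  card_inter : ∀ x, #(familyVerts W' ∩ U x) = #(familyVerts W ∩ U x) + t
  not_hasPath : ¬ HasPath k a L E fun x => U x \ familyVerts W'

lemma IsPathFamily.exists_isMaximalExtension (hℓ : 0 < ℓ)
    (hW : IsPathFamily k a L E W) (hU : Pairwise (Function.onFun Disjoint U)) :
    ∃ W' t, IsMaximalExtension k a L E U W W' t := by
  induction hN : #(univ.biUnion U \ familyVerts W) using Nat.strong_induction_on generalizing W with
  | _ N ih =>
    by_cases hpath : HasPath k a L E fun x => U x \ familyVerts W
    · obtain ⟨w, hwU, hw⟩ := hpath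
      have hwU' : ∀ x, w x ∈ U x := fun x => (mem_sdiff.1 (hwU x)).1
      have hwW : ∀ x, w x ∉ familyVerts W := fun x => (mem_sdiff.1 (hwU x)).2
      have hwnot : w ∉ W := fun h => hwW ⟨0, by omega⟩ (apply_mem_familyVerts h _)
      have hssub : univ.biUnion U \ familyVerts (Insert.insert w W) ⊂
          univ.biUnion U \ familyVerts W := by
        rw [familyVerts_insert]
        refine ssubset_iff_of_subset (sdiff_subset_sdiff Subset.rfl subset_union_right) |>.2
          ⟨w ⟨0, by omega⟩, mem_sdiff.2 ⟨mem_biUnion.2 ⟨_, mem_univ _, hwU' _⟩, hwW _⟩, fun h => ?_⟩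
        exact (mem_sdiff.1 h).2 (mem_union_left _ (mem_image_of_mem w (mem_univ _)))
      obtain ⟨W', t, h⟩ := ih _ (hN ▸ card_lt_card hssub)
        (hW.insert (injective_of_forall_mem hU hwU') hw hwW) rfl
      have hsub := h.subset
      have hsub' := h.subset_union
      rw [familyVerts_insert] at hsub hsub'
      refine ⟨W', t + 1, h.isPathFamily, ?_, subset_union_right.trans hsub, hsub'.trans ?_,
        fun x => ?_, h.not_hasPath⟩
      · rw [h.card_eq, card_insert_of_notMem hwnot]
        omega
      · refine union_subset (union_subset (image_subset_iff.2 fun x _ => ?_)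
          subset_union_left) subset_union_right
        exact mem_union_right _ (mem_biUnion.2 ⟨x, mem_univ x, hwU' x⟩)
      · rw [h.card_inter, familyVerts_insert, card_image_union_inter hU hwU' hwW]
        omega
    · exact ⟨W, 0, hW, rfl, Subset.rfl, subset_union_left, fun x => rfl, hpath⟩

end PathFamily

/-! ### Covering by three greedy phases -/

section Cover

variable {V : Type*} {k ℓ a q m m' y g N : ℕ} {c c' h σ : ℝ} {r : Fin q}
  {L E : Finset (Finset V)} {W : Finset (Fin (ℓ + q + ℓ) → V)}
  {U U₁ U₂ U₃ : Fin (ℓ + q + ℓ) → Finset V} {T V₀ Y : Finset V}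

lemma IsReserve.exists_isPathFamily (hU : IsReserve L m y (c + c') U) (hℓ : 0 < ℓ)
    (hE : ∀ U : Fin (ℓ + q + ℓ) → Finset V, IsRich L m c h σ r U → HasPath k a L E U)
    (hσ : σ ≤ h) (hym : ℓ * (y : ℝ) ≤ c' * m) (hUY : ∀ i, U (midPos ℓ i) ⊆ Y) :
    ∃ W : Finset (Fin (ℓ + q + ℓ) → V),
      IsPathFamily k a L E W ∧ #W ≤ y ∧ familyVerts W ⊆ univ.biUnion U ∧
      #(Y \ familyVerts W) + q * (y : ℝ) ≤ #Y + q * h := by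
  obtain ⟨W, t, hW⟩ := IsPathFamily.empty.exists_isMaximalExtension (k := k) (a := a) (L := L)
    (E := E) hℓ hU.disjoint
  have ht : ∀ x, #(familyVerts W ∩ U x) = t := fun x => by
    simpa [familyVerts] using hW.card_inter x
  have hty : t ≤ y := by
    rw [← hU.card_mid r, ← ht (midPos ℓ r)]
    exact card_le_card inter_subset_right
  have hroot : #(U (midPos ℓ r) \ familyVerts W) + t = y := by
    rw [← hU.card_mid r, ← ht (midPos ℓ r), inter_comm, card_sdiff_add_card_inter]
  have hlt : (y : ℝ) - t < h := by
    by_contra! hle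
    refine hW.not_hasPath (hE _ (hU.isRich (X := familyVerts W) (N := t) hℓ (fun x _ => (ht x).le)
      ?_ (by linarith) (fun _ _ => rfl) (fun x hx => ?_) ?_))
    · exact le_trans (by gcongr) hym
    · exact (hU.disjoint hx.symm).mono_left sdiff_subset
    · have := (Nat.cast_inj (R := ℝ)).2 hroot
      push_cast at this
      linarith
  have hcovered : q * t ≤ #(Y ∩ familyVerts W) := by
    have hdisj : ((univ : Finset (Fin q)) : Set (Fin q)).PairwiseDisjoint
        fun i => familyVerts W ∩ U (midPos ℓ i) := fun i _ j _ hij =>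
      (hU.disjoint fun h => hij (by simpa [midPos, Fin.ext_iff] using h)).mono inter_subset_right
        inter_subset_right
    calc q * t = #(univ.biUnion fun i => familyVerts W ∩ U (midPos ℓ i)) := by
          rw [card_biUnion hdisj]
          simp [ht]
      _ ≤ #(Y ∩ familyVerts W) := card_le_card <| biUnion_subset.2 fun i _ =>
          inter_comm Y _ ▸ inter_subset_inter_left (hUY i)
  refine ⟨W, hW.isPathFamily, by simpa using hW.card_eq.le.trans (by simpa using hty), ?_, ?_⟩
  · simpa [familyVerts] using hW.subset_union
  · have h1 : (q * t : ℝ) ≤ #(Y ∩ familyVerts W) := mod_cast hcovered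
    have h2 : (#(Y \ familyVerts W) : ℝ) + #(Y ∩ familyVerts W) = #Y :=
      mod_cast card_sdiff_add_card_inter Y _
    nlinarith [mul_le_mul_of_nonneg_left hlt.le (Nat.cast_nonneg (α := ℝ) q)]

lemma IsPathFamily.exists_greedy_absorb (hW : IsPathFamily k a L E W) (hℓ : 0 < ℓ) (r : Fin q)
    (hU : Pairwise (Function.onFun Disjoint U)) (hUW : Disjoint (univ.biUnion U) (familyVerts W))
    (hUT : Disjoint (univ.biUnion U) T) :
    ∃ W' : Finset (Fin (ℓ + q + ℓ) → V), IsPathFamily k a L E W' ∧ #W' ≤ #W + #(T \ familyVerts W) ∧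
      familyVerts W ⊆ familyVerts W' ∧
      familyVerts W' ⊆ familyVerts W ∪ (univ.biUnion U ∪ T) ∧
      (∀ x ≠ midPos ℓ r, #(familyVerts W' ∩ U x) ≤ #(T \ familyVerts W)) ∧
      ¬ HasPath k a L E (Function.update (fun x => U x \ familyVerts W') (midPos ℓ r)
        (T \ familyVerts W')) := by
  set U' := Function.update U (midPos ℓ r) (T \ familyVerts W)
  have hroot : U' (midPos ℓ r) = T \ familyVerts W := Function.update_self ..
  have hU' : ∀ x ≠ midPos ℓ r, U' x = U x := fun x hx => Function.update_of_ne hx ..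
  have hTx : ∀ x, Disjoint (T \ familyVerts W) (U x) := fun x =>
    (hUT.mono (subset_biUnion_of_mem U (mem_univ x)) sdiff_subset).symm
  have hdisj : Pairwise (Function.onFun Disjoint U') := fun x y hxy => by
    rw [Function.onFun]
    by_cases hx : x = midPos ℓ r
    · rw [hx, hroot, hU' y (hx ▸ hxy.symm)]
      exact hTx y
    by_cases hy : y = midPos ℓ r
    · rw [hy, hroot, hU' x hx]
      exact (hTx x).symm
    · rw [hU' x hx, hU' y hy]
      exact hU hxy
  obtain ⟨W', t, h⟩ := hW.exists_isMaximalExtension hℓ hdisj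
  have ht : t ≤ #(T \ familyVerts W) := by
    refine (Nat.le_add_left _ _).trans ((h.card_inter (midPos ℓ r)).ge.trans ?_)
    rw [hroot]
    exact card_le_card inter_subset_right
  refine ⟨W', h.isPathFamily, h.card_eq.le.trans (Nat.add_le_add_left ht _), h.subset,
    h.subset_union.trans (union_subset_union_right (biUnion_subset.2 fun x _ => ?_)),
    fun x hx => ?_, fun hpath => h.not_hasPath (hpath.mono fun x => ?_)⟩
  · by_cases hx : x = midPos ℓ r
    · rw [hx, hroot]
      exact sdiff_subset.trans subset_union_right
    · rw [hU' x hx]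
      exact (subset_biUnion_of_mem U (mem_univ x)).trans subset_union_left
  · have hzero : familyVerts W ∩ U x = ∅ :=
      disjoint_iff_inter_eq_empty.1 (hUW.mono_left (subset_biUnion_of_mem U (mem_univ x))).symm
    have := h.card_inter x
    rw [hU' x hx, hzero, card_empty, zero_add] at this
    exact this.trans_le ht
  · by_cases hx : x = midPos ℓ r
    · rw [hx, Function.update_self, hroot]
      exact subset_sdiff.2 ⟨sdiff_subset_sdiff Subset.rfl h.subset, sdiff_disjoint⟩
    · rw [Function.update_of_ne hx, hU' x hx]

lemma IsReserve.isRich_update (hU : IsReserve L m m' (c + c') U) (hℓ : 0 < ℓ) {X S : Finset V}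
    (hX : ∀ x ≠ midPos ℓ r, #(X ∩ U x) ≤ N) (hNm : ℓ * (N : ℝ) ≤ c' * m) (hNm' : h + N ≤ m')
    (hS : Disjoint (univ.biUnion U) S) (hσS : σ ≤ #S) :
    IsRich L m c h σ r (Function.update (fun x => U x \ X) (midPos ℓ r) S) := by
  refine hU.isRich hℓ hX hNm hNm' (fun x hx => Function.update_of_ne hx ..) (fun x _ => ?_) ?_
  · rw [Function.update_self]
    exact (hS.mono_left (subset_biUnion_of_mem U (mem_univ x))).symm
  · rwa [Function.update_self]

lemma IsPathFamily.exists_absorb_lt (hW : IsPathFamily k a L E W) (hℓ : 0 < ℓ)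
    (hU : IsReserve L m m' (c + c') U) (hUW : Disjoint (univ.biUnion U) (familyVerts W))
    (hUT : Disjoint (univ.biUnion U) T) (hT : #(T \ familyVerts W) ≤ g)
    (hgm : ℓ * (g : ℝ) ≤ c' * m) (hgm' : h + g ≤ m')
    (hE : ∀ U : Fin (ℓ + q + ℓ) → Finset V, IsRich L m c h σ r U → HasPath k a L E U) :
    ∃ W' : Finset (Fin (ℓ + q + ℓ) → V),
      IsPathFamily k a L E W' ∧ #W' ≤ #W + g ∧ familyVerts W ⊆ familyVerts W' ∧
      familyVerts W' ⊆ familyVerts W ∪ (univ.biUnion U ∪ T) ∧ #(T \ familyVerts W') < σ := by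
  obtain ⟨W', hW', hcard, hsub, hsub', hinter, hpath⟩ :=
    hW.exists_greedy_absorb hℓ r hU.disjoint hUW hUT
  refine ⟨W', hW', hcard.trans (Nat.add_le_add_left hT _), hsub, hsub', ?_⟩
  by_contra! hle
  exact hpath (hE _ (hU.isRich_update hℓ (fun x hx => (hinter x hx).trans hT) hgm hgm'
    (hUT.mono_right sdiff_subset) hle))

lemma IsPathFamily.exists_absorb_all (hW : IsPathFamily k a L E W) (hℓ : 0 < ℓ)
    (hU : Pairwise (Function.onFun Disjoint U)) (hUW : Disjoint (univ.biUnion U) (familyVerts W))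
    (hUT : Disjoint (univ.biUnion U) T) (hT : #(T \ familyVerts W) ≤ N)
    (hE : ∀ v ∈ T, ∀ X : Finset V, #X ≤ (ℓ + q + ℓ) * N →
      HasPath k a L E (Function.update (fun x => U x \ X) (midPos ℓ r) {v})) :
    ∃ W' : Finset (Fin (ℓ + q + ℓ) → V),
      IsPathFamily k a L E W' ∧ #W' ≤ #W + N ∧ familyVerts W ⊆ familyVerts W' ∧
      T ⊆ familyVerts W' := by
  obtain ⟨W', hW', hcard, hsub, -, hinter, hpath⟩ := hW.exists_greedy_absorb hℓ r hU hUW hUT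
  refine ⟨W', hW', hcard.trans (Nat.add_le_add_left hT _), hsub, fun v hv => ?_⟩
  by_contra hvW'
  set X := (univ.erase (midPos ℓ r)).biUnion fun x => familyVerts W' ∩ U x
  have hX : #X ≤ (ℓ + q + ℓ) * N := (card_biUnion_le_card_mul _ _ N fun x hx =>
    (hinter x (ne_of_mem_erase hx)).trans hT).trans <|
      Nat.mul_le_mul_right _ ((card_le_univ _).trans_eq (Fintype.card_fin _))
  refine hpath ((hE v hv X hX).mono fun x => ?_)
  by_cases hx : x = midPos ℓ r
  · rw [hx, Function.update_self, Function.update_self, singleton_subset_iff]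
    exact mem_sdiff.2 ⟨hv, hvW'⟩
  · rw [Function.update_of_ne hx, Function.update_of_ne hx]
    refine fun u hu => mem_sdiff.2 ⟨(mem_sdiff.1 hu).1, fun huW' => (mem_sdiff.1 hu).2 ?_⟩
    exact mem_biUnion.2 ⟨x, mem_erase.2 ⟨hx, mem_univ x⟩, mem_inter.2 ⟨huW', (mem_sdiff.1 hu).1⟩⟩

variable [Fintype V]

/-- The first phase covers almost all vertices outside the three reserves; the second phase covers
all but `σ` of the remaining vertices of `V₀`, and the third phase the rest of `V₀`. -/
lemma exists_isPathFamily_cover (hℓ : 0 < ℓ) (hU₁ : IsReserve L m 0 (c + c) U₁)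
    (hU₂ : IsReserve L m m' (c + c) U₂) (hU₃ : Pairwise (Function.onFun Disjoint U₃))
    (h₁₂ : Disjoint (univ.biUnion U₁) (univ.biUnion U₂))
    (h₁₃ : Disjoint (univ.biUnion U₁) (univ.biUnion U₃))
    (h₂₃ : Disjoint (univ.biUnion U₂) (univ.biUnion U₃))
    (hV₁ : Disjoint (univ.biUnion U₁) V₀) (hV₂ : Disjoint (univ.biUnion U₂) V₀)
    (hV₃ : Disjoint (univ.biUnion U₃) V₀) (hσh : σ ≤ h) (hσN : σ ≤ N)
    (hnm : ℓ * ((Fintype.card V / q : ℕ) : ℝ) ≤ c * m) (hhg : q * (h + 1) ≤ g)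
    (hgm : ℓ * (g : ℝ) ≤ c * m) (hgm' : h + g ≤ m')
    (hE : ∀ U : Fin (ℓ + q + ℓ) → Finset V, IsRich L m c h σ r U → HasPath k a L E U)
    (hE₃ : ∀ v ∈ V₀, ∀ X : Finset V, #X ≤ (ℓ + q + ℓ) * N →
      HasPath k a L E (Function.update (fun x => U₃ x \ X) (midPos ℓ r) {v})) :
    ∃ W : Finset (Fin (ℓ + q + ℓ) → V),
      IsPathFamily k a L E W ∧ #W ≤ Fintype.card V / q + g + N ∧ V₀ ⊆ familyVerts W ∧
      #(familyVerts W)ᶜ ≤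
        #(univ.biUnion U₁) + #(univ.biUnion U₂) + #(univ.biUnion U₃) + g := by
  set R₁ := univ.biUnion U₁
  set R₂ := univ.biUnion U₂
  set R₃ := univ.biUnion U₃
  set Y := (R₁ ∪ (R₂ ∪ R₃))ᶜ
  have hyn : #Y / q ≤ Fintype.card V / q := Nat.div_le_div_right (card_le_univ Y)
  have hYR : Disjoint Y (R₁ ∪ (R₂ ∪ R₃)) := disjoint_compl_left
  rw [disjoint_union_right, disjoint_union_right] at hYR
  have hV₀Y : V₀ ⊆ Y := subset_compl_iff_disjoint_right.2
    (disjoint_union_right.2 ⟨hV₁.symm, disjoint_union_right.2 ⟨hV₂.symm, hV₃.symm⟩⟩)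
  obtain ⟨U, hU, hUY, hUsub⟩ := hU₁.exists_fill (Nat.mul_div_le #Y q) hYR.1.symm
  obtain ⟨W₁, hW₁, hcard₁, hsub₁, hY⟩ := hU.exists_isPathFamily hℓ hE hσh
    (le_trans (by gcongr) hnm) hUY
  have hYg : #(Y \ familyVerts W₁) ≤ g := by
    have hdiv : (#Y : ℝ) ≤ q * (#Y / q : ℕ) + q := by
      exact_mod_cast (Nat.lt_mul_div_succ #Y r.pos).le.trans_eq (by ring)
    exact_mod_cast (by linarith : (#(Y \ familyVerts W₁) : ℝ) ≤ g)
  have hsub₁' : familyVerts W₁ ⊆ R₁ ∪ Y := hsub₁.trans hUsub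
  have hR₂W₁ : Disjoint R₂ (familyVerts W₁) := disjoint_of_subset_right hsub₁'
    (disjoint_union_right.2 ⟨h₁₂.symm, hYR.2.1.symm⟩)
  obtain ⟨W₂, hW₂, hcard₂, hsub₂, hsub₂', hσ⟩ := hW₁.exists_absorb_lt hℓ hU₂ hR₂W₁ hV₂
    ((card_le_card (sdiff_subset_sdiff hV₀Y Subset.rfl)).trans hYg) hgm hgm' hE
  have hR₃W₂ : Disjoint R₃ (familyVerts W₂) := disjoint_of_subset_right hsub₂' <|
    disjoint_union_right.2 ⟨disjoint_of_subset_right hsub₁'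
      (disjoint_union_right.2 ⟨h₁₃.symm, hYR.2.2.symm⟩),
      disjoint_union_right.2 ⟨h₂₃.symm, hV₃⟩⟩
  obtain ⟨W₃, hW₃, hcard₃, hsub₃, hV₀W₃⟩ := hW₂.exists_absorb_all hℓ hU₃ hR₃W₂ hV₃
    (by exact_mod_cast (hσ.trans_le hσN).le) hE₃
  refine ⟨W₃, hW₃, by omega, hV₀W₃, ?_⟩
  have hcompl : (familyVerts W₃)ᶜ ⊆ R₁ ∪ R₂ ∪ R₃ ∪ Y \ familyVerts W₁ := fun v hv => by
    have hvW₁ : v ∉ familyVerts W₁ := fun hv₁ => mem_compl.1 hv (hsub₃ (hsub₂ hv₁))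
    simp only [Y, mem_union, mem_sdiff, mem_compl]
    tauto
  refine (card_le_card hcompl).trans ((card_union_le _ _).trans (add_le_add ?_ hYg))
  exact (card_union_le _ _).trans (Nat.add_le_add_right (card_union_le _ _) _)

end Cover

/-! ### The random hypergraph has a path cover -/

section Probability

lemma one_sub_add_le_subsetProb_not_and_not {X : Type*} [Fintype X] {p : X → ℝ}
    (hp : ∀ x, p x ∈ Set.Icc (0 : ℝ) 1) (A B : Finset X → Prop) :
    1 - (subsetProb p A + subsetProb p B) ≤ subsetProb p (fun E => ¬ A E ∧ ¬ B E) := by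
  have hB := subsetProb_mono hp (A := fun E => ¬ A E ∧ B E) (B := B) fun _ h => h.2
  linarith [subsetProb_and_add_and_not p (fun E => ¬ A E) B, subsetProb_not p A]

lemma card_filter_card_le_le {V : Type*} [Fintype V] (s : ℕ) :
    #{X : Finset V | #X ≤ s} ≤ (Fintype.card V + 1) ^ s := by
  induction s with
  | zero => simp [filter_eq']
  | succ s ih =>
    set F : Finset (Finset V) := {X | #X ≤ s}
    have hsub : ({X : Finset V | #X ≤ s + 1} : Finset (Finset V)) ⊆
        F ∪ (univ ×ˢ F).image fun t : V × Finset V => insert t.1 t.2 := fun X hX => by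
      simp only [mem_filter, mem_univ, true_and] at hX
      rcases X.eq_empty_or_nonempty with rfl | ⟨x, hx⟩
      · simp [F]
      · refine mem_union_right _ (mem_image.2 ⟨(x, X.erase x), ?_, insert_erase hx⟩)
        simpa [F, card_erase_of_mem hx] using hX
    calc #{X : Finset V | #X ≤ s + 1} ≤ #F + #((univ : Finset V) ×ˢ F) :=
          (card_le_card hsub).trans <|
            (card_union_le _ _).trans (Nat.add_le_add_left card_image_le _)
      _ = (Fintype.card V + 1) * #F := by rw [card_product, card_univ]; ring
      _ ≤ (Fintype.card V + 1) ^ (s + 1) := by rw [pow_succ']; exact Nat.mul_le_mul_left _ ih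

variable {V : Type*} [Fintype V] {k ℓ a q m m' g N : ℕ} {α c h σ p K : ℝ} {r : Fin q}
  {L : Finset (Finset V)} {U : Fin (ℓ + q + ℓ) → Finset V} {V₀ : Finset V}

lemma subsetProb_exists_isRich_le (hlk : ℓ < k) (hl : 1 ≤ ℓ) (ha : 0 < a)
    (hq : q + ℓ = a * (k - ℓ)) (hc : c ∈ Set.Icc (0 : ℝ) 1) (hm : 0 < m) (hh : h ≤ c * m)
    (h1 : 1 ≤ h) (hσ0 : 0 < σ) (hσ : σ ≤ h) (hp0 : 0 < p) (hp1 : p ≤ 1) (hK0 : 0 < K)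
    (hK : ∀ j ∈ Set.Icc 1 a, K ≤ h ^ (ℓ - 1) * (h ^ (k - ℓ) * p) ^ j) :
    subsetProb (edgeProb k p) (fun E => ∃ U : Fin (ℓ + q + ℓ) → Finset V,
        IsRich L m c h σ r U ∧ ¬ HasPath k a L E U) ≤
      2 ^ (Fintype.card V * (ℓ + q + ℓ)) * Real.exp (-((c ^ 2) ^ 2 * (σ * K) / (4 * 2 ^ a))) := by
  have hp := edgeProb_mem_Icc (V := V) k ⟨hp0.le, hp1⟩
  set 𝒰 : Finset (Fin (ℓ + q + ℓ) → Finset V) := {U | IsRich L m c h σ r U}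
  have h𝒰 : #𝒰 ≤ 2 ^ (Fintype.card V * (ℓ + q + ℓ)) :=
    (card_le_univ _).trans_eq (by simp [pow_mul])
  calc _ ≤ subsetProb (edgeProb k p) (fun E => ∃ U ∈ 𝒰, ¬ HasPath k a L E U) :=
        subsetProb_mono hp fun E ⟨U, hU, hE⟩ => ⟨U, by simpa [𝒰] using hU, hE⟩
    _ ≤ ∑ U ∈ 𝒰, subsetProb (edgeProb k p) (fun E => ¬ HasPath k a L E U) :=
        subsetProb_exists_le hp _ _
    _ ≤ #𝒰 * Real.exp (-((c ^ 2) ^ 2 * (σ * K) / (4 * 2 ^ a))) := by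
        rw [← nsmul_eq_mul]
        exact sum_le_card_nsmul _ _ _ fun U hU => (mem_filter.1 hU).2.subsetProb_not_hasPath_le
          hlk hl ha hq hc hm hh h1 hσ0 hσ hp0 hp1 hK0 hK
    _ ≤ _ := by gcongr; exact_mod_cast h𝒰

lemma IsReserve.subsetProb_exists_update_le (hU : IsReserve L m m' (c + c) U)
    (hUV₀ : Disjoint (univ.biUnion U) V₀) (hNm : ℓ * (N : ℝ) ≤ c * m) (hNm' : h + N ≤ m')
    (hlk : ℓ < k) (hl : 1 ≤ ℓ) (ha : 0 < a) (hq : q + ℓ = a * (k - ℓ))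
    (hc : c ∈ Set.Icc (0 : ℝ) 1) (hm : 0 < m) (hh : h ≤ c * m) (h1 : 1 ≤ h)
    (hp0 : 0 < p) (hp1 : p ≤ 1) (hK0 : 0 < K)
    (hK : ∀ j ∈ Set.Icc 1 a, K ≤ h ^ (ℓ - 1) * (h ^ (k - ℓ) * p) ^ j) :
    subsetProb (edgeProb k p) (fun E => ∃ v ∈ V₀, ∃ X : Finset V, #X ≤ N ∧
        ¬ HasPath k a L E (Function.update (fun x => U x \ X) (midPos ℓ r) {v})) ≤
      #V₀ * (Fintype.card V + 1) ^ N * Real.exp (-((c ^ 2) ^ 2 * K / (4 * 2 ^ a))) := by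
  have hp := edgeProb_mem_Icc (V := V) k ⟨hp0.le, hp1⟩
  set I : Finset (V × Finset V) := V₀ ×ˢ ({X | #X ≤ N} : Finset (Finset V))
  have hI : #I ≤ #V₀ * (Fintype.card V + 1) ^ N := by
    rw [card_product]
    exact Nat.mul_le_mul_left _ (card_filter_card_le_le N)
  set A := fun (i : V × Finset V) E =>
    ¬ HasPath k a L E (Function.update (fun x => U x \ i.2) (midPos ℓ r) {i.1})
  have hA : ∀ i ∈ I, subsetProb (edgeProb k p) (A i) ≤
      Real.exp (-((c ^ 2) ^ 2 * K / (4 * 2 ^ a))) := fun i hi => by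
    simp only [I, mem_product, mem_filter, mem_univ, true_and] at hi
    have hrich := hU.isRich_update (r := r) (σ := 1) (S := {i.1}) hl
      (fun x _ => (card_le_card inter_subset_left).trans hi.2) hNm hNm'
      (hUV₀.mono_right (singleton_subset_iff.2 hi.1)) (by simp)
    simpa using hrich.subsetProb_not_hasPath_le hlk hl ha hq hc hm hh h1 one_pos h1 hp0 hp1 hK0 hK
  calc _ ≤ subsetProb (edgeProb k p) (fun E => ∃ i ∈ I, A i E) :=
        subsetProb_mono hp fun E ⟨v, hv, X, hX, hE⟩ => ⟨(v, X), by simp [I, hv, hX], hE⟩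
    _ ≤ ∑ i ∈ I, subsetProb (edgeProb k p) (A i) := subsetProb_exists_le hp _ _
    _ ≤ #I * Real.exp (-((c ^ 2) ^ 2 * K / (4 * 2 ^ a))) := by
        rw [← nsmul_eq_mul]
        exact sum_le_card_nsmul _ _ _ hA
    _ ≤ _ := by gcongr; exact_mod_cast hI

/-- The sizes occurring in the construction of a path cover of `n` vertices by paths with
`ℓ + q + ℓ` vertices: `m` and `m'` are the sizes of the end and middle classes of the reserves, `h`
is the largeness threshold for richness, and `g` bounds the number of vertices left over by the
first phase. -/
structure IsCoverScale (ℓ q n : ℕ) (α h : ℝ) (m m' g : ℕ) : Prop where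
  pos : 0 < m
  reserve_le : ℓ * (2 * (2 * ℓ * m + q * m') + ℓ * m : ℝ) ≤ α / 4 * n
  room : α * n + 2 * (2 * ℓ * m + q * m' : ℝ) ≤ n
  div_le : ℓ * ((n / q : ℕ) : ℝ) ≤ α / 4 / 2 ^ ℓ * m
  one_le : 1 ≤ h
  le_mul : h ≤ α / 4 / 2 ^ ℓ * m
  mul_le : (ℓ + q + ℓ : ℕ) * (h + 1) ≤ g
  leftover_le_mul : ℓ * (g : ℝ) ≤ α / 4 / 2 ^ ℓ * m
  add_le : h + g ≤ m'

lemma IsCoverScale.exists_reserves (hS : IsCoverScale ℓ q (Fintype.card V) α h m m' g)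
    (hα : 0 ≤ α) (hℓ : 0 < ℓ) (hL : ∀ S ∈ L, #S = ℓ) (hLV₀ : ∀ S ∈ L, Disjoint S V₀)
    (hLcard : α * (Fintype.card V : ℝ) ^ ℓ ≤ #L) (hV₀ : #V₀ ≤ α * Fintype.card V) :
    ∃ U₁ U₂ U₃ : Fin (ℓ + q + ℓ) → Finset V,
      IsReserve L m 0 (α / 2 / 2 ^ ℓ) U₁ ∧ IsReserve L m m' (α / 2 / 2 ^ ℓ) U₂ ∧
      IsReserve L m m' (α / 2 / 2 ^ ℓ) U₃ ∧
      Disjoint (univ.biUnion U₁) (univ.biUnion U₂ ∪ univ.biUnion U₃ ∪ V₀) ∧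
      Disjoint (univ.biUnion U₂) (univ.biUnion U₃ ∪ V₀) ∧ Disjoint (univ.biUnion U₃) V₀ := by
  have : 0 ≤ α * Fintype.card V := by positivity
  have hroom : #V₀ + 2 * (2 * ℓ * m + q * m') ≤ Fintype.card V := by
    exact_mod_cast (by linarith [hS.room] :
      (#V₀ : ℝ) + 2 * (2 * ℓ * m + q * m') ≤ Fintype.card V)
  have hmV : m ≤ Fintype.card V := by nlinarith
  have hF : ∀ F : Finset V, #F ≤ 2 * (2 * ℓ * m + q * m') →
      ℓ * (#F + ℓ * m : ℝ) ≤ α / 4 * Fintype.card V := fun F hF => by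
    have : (#F : ℝ) ≤ 2 * (2 * ℓ * m + q * m') := mod_cast hF
    exact le_trans (by gcongr) hS.reserve_le
  obtain ⟨U₃, hU₃, h₃⟩ := exists_isReserve (q := q) (m' := m') (F := ∅) hα hℓ hL hLcard hLV₀ hS.pos
    hmV (hF ∅ (by simp)) (by simp only [card_empty]; omega)
  have hR₃ := hU₃.card_biUnion_le
  obtain ⟨U₂, hU₂, h₂⟩ := exists_isReserve (q := q) (m' := m') hα hℓ hL hLcard hLV₀ hS.pos
    hmV (hF (univ.biUnion U₃) (by omega)) (by omega)
  have hR₂₃ := card_union_le (univ.biUnion U₂) (univ.biUnion U₃)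
  have hR₂ := hU₂.card_biUnion_le
  obtain ⟨U₁, hU₁, h₁⟩ := exists_isReserve_zero (q := q) hα hℓ hL hLcard hLV₀ hS.pos
    hmV (hF (univ.biUnion U₂ ∪ univ.biUnion U₃) (by omega))
  exact ⟨U₁, U₂, U₃, hU₁, hU₂, hU₃, h₁, h₂, by simpa using h₃⟩

lemma IsCoverScale.mul_ceil_le {n : ℕ} (hS : IsCoverScale ℓ q n α h m m' g) (hσ0 : 0 ≤ σ)
    (hσ : σ ≤ h) : (ℓ + q + ℓ) * ⌈σ⌉₊ ≤ g := by
  have : ((ℓ + q + ℓ : ℕ) : ℝ) * ⌈σ⌉₊ ≤ g :=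
    le_trans (by gcongr; linarith [Nat.ceil_lt_add_one hσ0]) hS.mul_le
  exact_mod_cast this

lemma IsCoverScale.exists_isPathFamily {E : Finset (Finset V)}
    {U₁ U₂ U₃ : Fin (ℓ + q + ℓ) → Finset V}
    (hS : IsCoverScale ℓ q (Fintype.card V) α h m m' g) (hℓ : 0 < ℓ) (hσ0 : 0 ≤ σ) (hσ : σ ≤ h)
    (hU₁ : IsReserve L m 0 (α / 4 / 2 ^ ℓ + α / 4 / 2 ^ ℓ) U₁)
    (hU₂ : IsReserve L m m' (α / 4 / 2 ^ ℓ + α / 4 / 2 ^ ℓ) U₂)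
    (hU₃ : IsReserve L m m' (α / 4 / 2 ^ ℓ + α / 4 / 2 ^ ℓ) U₃)
    (h₁ : Disjoint (univ.biUnion U₁) (univ.biUnion U₂ ∪ univ.biUnion U₃ ∪ V₀))
    (h₂ : Disjoint (univ.biUnion U₂) (univ.biUnion U₃ ∪ V₀)) (h₃ : Disjoint (univ.biUnion U₃) V₀)
    (hE : ∀ U : Fin (ℓ + q + ℓ) → Finset V, IsRich L m (α / 4 / 2 ^ ℓ) h σ r U →
      HasPath k a L E U)
    (hE₃ : ∀ v ∈ V₀, ∀ X : Finset V, #X ≤ (ℓ + q + ℓ) * ⌈σ⌉₊ →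
      HasPath k a L E (Function.update (fun x => U₃ x \ X) (midPos ℓ r) {v})) :
    ∃ W : Finset (Fin (ℓ + q + ℓ) → V),
      IsPathFamily k a L E W ∧ #W ≤ Fintype.card V / q + 2 * g ∧ V₀ ⊆ familyVerts W ∧
      #(familyVerts W)ᶜ ≤ 3 * (2 * ℓ * m) + 2 * (q * m') + g := by
  simp only [disjoint_union_right] at h₁ h₂
  have hq : (q : ℝ) ≤ (ℓ + q + ℓ : ℕ) := mod_cast (by omega)
  obtain ⟨W, hW, hcard, hcover, hcompl⟩ := exists_isPathFamily_cover hℓ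
    hU₁ hU₂ hU₃.disjoint h₁.1.1 h₁.1.2 h₂.1 h₁.2 h₂.2 h₃ hσ (Nat.le_ceil σ) hS.div_le
    (le_trans (by have := hS.one_le; gcongr) hS.mul_le) hS.leftover_le_mul hS.add_le hE hE₃
  have hNg : ⌈σ⌉₊ ≤ g := (Nat.le_mul_of_pos_left _ (by omega)).trans (hS.mul_ceil_le hσ0 hσ)
  refine ⟨W, hW, by omega, hcover, hcompl.trans ?_⟩
  have := hU₁.card_biUnion_le
  have := hU₂.card_biUnion_le
  have := hU₃.card_biUnion_le
  omega

/-- Two union bounds: over all rich systems, and over the systems through a vertex of `V₀` that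
avoid few vertices of a reserve chosen in advance. -/
lemma IsCoverScale.le_subsetProb (hS : IsCoverScale ℓ q (Fintype.card V) α h m m' g)
    (hlk : ℓ < k) (hl : 1 ≤ ℓ) (ha : 0 < a) (hq : q + ℓ = a * (k - ℓ)) (hq0 : 0 < q)
    (hα : α ∈ Set.Icc (0 : ℝ) 1) (hL : ∀ S ∈ L, #S = ℓ) (hLV₀ : ∀ S ∈ L, Disjoint S V₀)
    (hLcard : α * (Fintype.card V : ℝ) ^ ℓ ≤ #L) (hV₀ : #V₀ ≤ α * Fintype.card V)
    (hσ0 : 0 < σ) (hσ : σ ≤ h) (hp0 : 0 < p) (hp1 : p ≤ 1) (hK0 : 0 < K)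
    (hK : ∀ j ∈ Set.Icc 1 a, K ≤ h ^ (ℓ - 1) * (h ^ (k - ℓ) * p) ^ j) :
    1 - (2 ^ (Fintype.card V * (ℓ + q + ℓ)) *
          Real.exp (-(((α / 4 / 2 ^ ℓ) ^ 2) ^ 2 * (σ * K) / (4 * 2 ^ a))) +
        #V₀ * (Fintype.card V + 1) ^ ((ℓ + q + ℓ) * ⌈σ⌉₊) *
          Real.exp (-(((α / 4 / 2 ^ ℓ) ^ 2) ^ 2 * K / (4 * 2 ^ a)))) ≤
      subsetProb (edgeProb k p) fun E => ∃ W : Finset (Fin (ℓ + q + ℓ) → V),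
        IsPathFamily k a L E W ∧ #W ≤ Fintype.card V / q + 2 * g ∧ V₀ ⊆ familyVerts W ∧
        #(familyVerts W)ᶜ ≤ 3 * (2 * ℓ * m) + 2 * (q * m') + g := by
  have r : Fin q := ⟨0, hq0⟩
  obtain ⟨U₁, U₂, U₃, hU₁, hU₂, hU₃, h₁, h₂, h₃⟩ :=
    hS.exists_reserves hα.1 hl hL hLV₀ hLcard hV₀
  have hcc : α / 2 / 2 ^ ℓ = α / 4 / 2 ^ ℓ + α / 4 / 2 ^ ℓ := by ring
  rw [hcc] at hU₁ hU₂ hU₃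
  have hc : α / 4 / 2 ^ ℓ ∈ Set.Icc (0 : ℝ) 1 := ⟨by have := hα.1; positivity,
    (div_le_self (by linarith [hα.1]) (one_le_pow₀ one_le_two)).trans (by linarith [hα.2])⟩
  have hN : (((ℓ + q + ℓ) * ⌈σ⌉₊ : ℕ) : ℝ) ≤ g := mod_cast hS.mul_ceil_le hσ0.le hσ
  have hp := edgeProb_mem_Icc (V := V) k ⟨hp0.le, hp1⟩
  have hrich := subsetProb_exists_isRich_le (L := L) (r := r) hlk hl ha hq hc hS.pos hS.le_mul
    hS.one_le hσ0 hσ hp0 hp1 hK0 hK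
  have hroot := hU₃.subsetProb_exists_update_le (r := r) (N := (ℓ + q + ℓ) * ⌈σ⌉₊) h₃
    (le_trans (by gcongr) hS.leftover_le_mul) (by linarith [hS.add_le]) hlk hl ha hq hc hS.pos
    hS.le_mul hS.one_le hp0 hp1 hK0 hK
  refine (sub_le_sub_left (add_le_add hrich hroot) 1).trans <|
    (one_sub_add_le_subsetProb_not_and_not hp _ _).trans (subsetProb_mono hp fun E hE => ?_)
  push Not at hE
  exact hS.exists_isPathFamily hl hσ0.le hσ hU₁ hU₂ hU₃ h₁ h₂ h₃ hE.1 hE.2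

end Probability

/-! ### Paths as lists -/

section Lists

variable {n b k ℓ a q : ℕ} {L E : Finset (Finset (Fin n))} {V₀ : Finset (Fin n)}
  {W : Finset (Fin (ℓ + q + ℓ) → Fin n)} {N₁ N₂ : ℝ}

/-- At most `N₁` vertex-disjoint `ℓ`-paths in `E`, given as vertex lists and with all ends in `L`,
cover `V₀` and all but at most `N₂` vertices. -/
def HasPathCover (k ℓ : ℕ) (L E : Finset (Finset (Fin n))) (V₀ : Finset (Fin n)) (N₁ N₂ : ℝ) :
    Prop :=
  ∃ Paths : Finset (List (Fin n)),
    (#Paths : ℝ) ≤ N₁ ∧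
    (∀ v ∈ Paths, ∃ a : ℕ, 1 ≤ a ∧ ListSpans k ℓ a E v) ∧
    (∀ v ∈ Paths, (v.take ℓ).toFinset ∈ L ∧ (v.drop (v.length - ℓ)).toFinset ∈ L) ∧
    (∀ v ∈ Paths, ∀ v' ∈ Paths, v ≠ v' → ∀ x ∈ v, x ∉ v') ∧
    (∀ x ∈ V₀, ∃ v ∈ Paths, x ∈ v) ∧
    (#{x : Fin n | ∀ v ∈ Paths, x ∉ v} : ℝ) ≤ N₂

lemma toFinset_take_drop_ofFn (w : Fin b → Fin n) (s t : ℕ) :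
    (((List.ofFn w).drop s).take t).toFinset = (finIco b s (s + t)).image w := by
  ext x
  simp only [List.mem_toFinset, mem_image, mem_finIco, List.mem_iff_getElem, List.getElem_take,
    List.getElem_drop, List.getElem_ofFn, List.length_take, List.length_drop, List.length_ofFn]
  constructor
  · rintro ⟨i, hi, rfl⟩
    exact ⟨⟨s + i, by omega⟩, ⟨by simp, by simp; omega⟩, rfl⟩
  · rintro ⟨m, hm, rfl⟩
    exact ⟨m - s, by omega, congrArg w (Fin.ext (by simp; omega))⟩

lemma toFinset_take_ofFn (w : Fin (ℓ + q + ℓ) → Fin n) :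
    ((List.ofFn w).take ℓ).toFinset = univ.image (w ∘ firstPos q) := by
  have h := toFinset_take_drop_ofFn w 0 ℓ
  rw [List.drop_zero] at h
  rw [h, ← image_image]
  congr 1
  ext x
  simp only [mem_finIco, mem_image, mem_univ, true_and, firstPos, Fin.ext_iff, Fin.val_castAdd]
  exact ⟨fun hx => ⟨⟨x, by omega⟩, rfl⟩, by rintro ⟨i, hi⟩; omega⟩

lemma toFinset_drop_ofFn (w : Fin (ℓ + q + ℓ) → Fin n) :
    ((List.ofFn w).drop ((List.ofFn w).length - ℓ)).toFinset = univ.image (w ∘ lastPos q) := by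
  have h := toFinset_take_drop_ofFn w (ℓ + q) ℓ
  rw [List.take_of_length_le (by simp)] at h
  rw [List.length_ofFn, Nat.add_sub_cancel, h, ← image_image]
  congr 1
  ext x
  simp only [mem_finIco, mem_image, mem_univ, true_and, lastPos, Fin.ext_iff, Fin.val_natAdd]
  exact ⟨fun hx => ⟨⟨x - (ℓ + q), by omega⟩, by simp; omega⟩, by rintro ⟨i, hi⟩; omega⟩

lemma mem_familyVerts {V : Type*} {b : ℕ} {W : Finset (Fin b → V)} {x : V} :
    x ∈ familyVerts W ↔ ∃ w ∈ W, x ∈ Set.range w := by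
  simp [familyVerts]

lemma IsPathFamily.hasPathCover (hW : IsPathFamily k a L E W) (ha : 0 < a)
    (hq : q + ℓ = a * (k - ℓ)) (hV₀ : V₀ ⊆ familyVerts W) (h₁ : #W ≤ N₁)
    (h₂ : #(familyVerts W)ᶜ ≤ N₂) : HasPathCover k ℓ L E V₀ N₁ N₂ := by
  refine ⟨W.image List.ofFn, (Nat.cast_le.2 card_image_le).trans h₁, ?_, ?_, ?_, ?_, ?_⟩
  · refine forall_mem_image.2 fun w hw => ⟨a, ha, List.nodup_ofFn.2 (hW.injective w hw),
      by rw [List.length_ofFn]; omega, fun i hi => ?_⟩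
    rw [toFinset_take_drop_ofFn]
    convert (hW.isLPath w hw).edge i hi
    rfl
  · refine forall_mem_image.2 fun w hw => ?_
    rw [toFinset_take_ofFn, toFinset_drop_ofFn]
    exact ⟨by convert (hW.isLPath w hw).first, by convert (hW.isLPath w hw).last⟩
  · refine forall_mem_image.2 fun w hw => forall_mem_image.2 fun w' hw' hne x hx hx' => ?_
    exact disjoint_left.1 (hW.disjoint hw hw' fun h => hne (congrArg _ h))
      (by simpa [List.mem_ofFn] using hx) (by simpa [List.mem_ofFn] using hx')
  · intro x hx
    obtain ⟨w, hw, hxw⟩ := mem_familyVerts.1 (hV₀ hx)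
    exact ⟨_, mem_image_of_mem _ hw, by simpa [List.mem_ofFn] using hxw⟩
  · refine (Nat.cast_le.2 (card_le_card fun x hx => mem_compl.2 fun hxW => ?_)).trans h₂
    obtain ⟨w, hw, hxw⟩ := mem_familyVerts.1 hxW
    exact (mem_filter.1 hx).2 _ (mem_image_of_mem _ hw) (by simpa [List.mem_ofFn] using hxw)

end Lists

/-! ### Choosing the parameters -/

section Parameters

variable {k ℓ a q n m m' g : ℕ} {α ζ η b h : ℝ}

/-- The lengths of the covering paths: each has `a` edges and `q` vertices outside its two ends,
where `a` and `q` are of order `ζ⁻³`; sets of `η * n` vertices are the smallest ones in which paths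
are looked for. -/
structure IsPathScale (k ℓ a q : ℕ) (ζ η : ℝ) : Prop where
  pos : 0 < a
  add_eq : q + ℓ = a * (k - ℓ)
  one_le : 1 ≤ ζ ^ 3 * q
  le_add : ζ ^ 3 * a ≤ 1 + ζ ^ 3 * (ℓ + 1)
  mul_eq : 128 * ((ℓ + q + ℓ : ℕ) : ℝ) ^ 2 * η = ζ

lemma exists_isPathScale (hℓ : 1 ≤ ℓ) (hlk : ℓ < k) (hζ : 0 < ζ) :
    ∃ a q η, IsPathScale k ℓ a q ζ η := by
  set a := ⌈1 / ζ ^ 3⌉₊ + ℓ with ha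
  have hak : a ≤ a * (k - ℓ) := Nat.le_mul_of_pos_right a (Nat.sub_pos_of_lt hlk)
  have hceil := Nat.ceil_lt_add_one (a := 1 / ζ ^ 3) (by positivity)
  refine ⟨a, a * (k - ℓ) - ℓ, ζ / (128 * ((ℓ + (a * (k - ℓ) - ℓ) + ℓ : ℕ) : ℝ) ^ 2), by omega,
    by omega, ?_, ?_, mul_div_cancel₀ _ (by positivity)⟩
  · have hq : (⌈1 / ζ ^ 3⌉₊ : ℝ) ≤ (a * (k - ℓ) - ℓ : ℕ) := Nat.cast_le.2 (by omega)
    rw [mul_comm, ← div_le_iff₀ (by positivity)]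
    exact (Nat.le_ceil _).trans hq
  · have hle : (a : ℝ) ≤ 1 / ζ ^ 3 + (ℓ + 1) := by rw [ha, Nat.cast_add]; linarith
    calc ζ ^ 3 * a ≤ ζ ^ 3 * (1 / ζ ^ 3 + (ℓ + 1)) := by gcongr
      _ = 1 + ζ ^ 3 * (ℓ + 1) := by rw [mul_add, mul_one_div_cancel (by positivity)]

lemma IsPathScale.eta_pos (hP : IsPathScale k ℓ a q ζ η) (hζ : 0 < ζ) : 0 < η :=
  pos_of_mul_pos_right (hP.mul_eq ▸ hζ) (by positivity)

lemma exists_scale_bounds (hℓ : 1 ≤ ℓ) (hℓb : (ℓ : ℝ) ≤ b) (hb : 1 ≤ b) (hh : 1 ≤ h) :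
    ∃ m m' g : ℕ, 0 < m ∧ ℓ * (m : ℝ) ∈ Set.Icc (8 * (b ^ 2 * h)) (16 * (b ^ 2 * h)) ∧
      b * (m' : ℝ) ≤ 32 * (b ^ 2 * h) ∧ (g : ℝ) ∈ Set.Icc (b * (h + 1)) (3 * (b * h)) ∧
      h + g ≤ m' := by
  have hℓ0 : (0 : ℝ) < ℓ := Nat.cast_pos.2 hℓ
  have hbh : b ≤ b * h := le_mul_of_one_le_right (by linarith) hh
  have hhb : h ≤ b * h := le_mul_of_one_le_left (by linarith) hb
  have hbbh : b * h ≤ b ^ 2 * h := by gcongr; exact le_self_pow₀ hb two_ne_zero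
  have hm := (div_lt_iff₀' hℓ0).1 (Nat.lt_floor_add_one (16 * (b ^ 2 * h) / ℓ))
  have hm' := Nat.lt_floor_add_one (32 * (b * h))
  have hg : (⌈b * (h + 1)⌉₊ : ℝ) ≤ 3 * (b * h) := by
    linarith [Nat.ceil_lt_add_one (a := b * (h + 1)) (by positivity)]
  refine ⟨⌊16 * (b ^ 2 * h) / ℓ⌋₊, ⌊32 * (b * h)⌋₊, ⌈b * (h + 1)⌉₊, ?_, ⟨by linarith, ?_⟩, ?_,
    ⟨Nat.le_ceil _, hg⟩, by linarith⟩
  · rw [Nat.floor_pos, one_le_div hℓ0]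
    linarith
  · exact (le_div_iff₀' hℓ0).1 (Nat.floor_le (by positivity))
  · calc b * (⌊32 * (b * h)⌋₊ : ℝ) ≤ b * (32 * (b * h)) := by
          gcongr
          exact Nat.floor_le (by positivity)
      _ = 32 * (b ^ 2 * h) := by ring

lemma natCast_div_le_mul (hζ : 0 < ζ) (hq : 1 ≤ ζ ^ 3 * q) : ((n / q : ℕ) : ℝ) ≤ ζ ^ 3 * n := by
  have hq0 : (0 : ℝ) < q := pos_of_mul_pos_right (zero_lt_one.trans_le hq) (by positivity)
  calc ((n / q : ℕ) : ℝ) ≤ n / q := Nat.cast_div_le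
    _ ≤ ζ ^ 3 * q * n / q := by gcongr; exact le_mul_of_one_le_left n.cast_nonneg hq
    _ = ζ ^ 3 * n := by field_simp

lemma IsPathScale.mul_le (hP : IsPathScale k ℓ a q ζ η) (hζ : 0 < ζ) (hζ1 : ζ ≤ 1) :
    128 * (((ℓ + q + ℓ : ℕ) : ℝ) * (η * n)) ≤ ζ ^ 3 * n := by
  have hη := hP.eta_pos hζ
  have hqb : (q : ℝ) ≤ (ℓ + q + ℓ : ℕ) := Nat.cast_le.2 (by omega)
  have hζb : 1 ≤ ζ ^ 2 * (ℓ + q + ℓ : ℕ) := by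
    refine hP.one_le.trans ?_
    gcongr ?_ * ?_
    exact pow_le_pow_of_le_one hζ.le hζ1 (by norm_num)
  calc 128 * (((ℓ + q + ℓ : ℕ) : ℝ) * (η * n))
      ≤ ζ ^ 2 * (ℓ + q + ℓ : ℕ) * (128 * ((ℓ + q + ℓ : ℕ) * (η * n))) :=
        le_mul_of_one_le_left (by positivity) hζb
    _ = ζ ^ 2 * (128 * ((ℓ + q + ℓ : ℕ) : ℝ) ^ 2 * η * n) := by ring
    _ = ζ ^ 3 * n := by rw [hP.mul_eq]; ring

lemma natCast_mul_pow_three_mul_le {c : ℝ} (hζ : 0 ≤ ζ) (hζ1 : ζ ≤ 1)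
    (hζc : 32 * (ℓ : ℝ) ^ 2 * ζ ≤ c) (hm : ζ * n ≤ 32 * (ℓ * m)) : ℓ * (ζ ^ 3 * n) ≤ c * m :=
  calc ℓ * (ζ ^ 3 * n) = ℓ * ζ * (ζ * (ζ * n)) := by ring
    _ ≤ ℓ * ζ * (ζ * n) := by gcongr; exact mul_le_of_le_one_left (by positivity) hζ1
    _ ≤ ℓ * ζ * (32 * (ℓ * m)) := mul_le_mul_of_nonneg_left hm (by positivity)
    _ = 32 * (ℓ : ℝ) ^ 2 * ζ * m := by ring
    _ ≤ c * m := by gcongr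

lemma mul_le_of_mul_sq_mul_le (hℓ : 1 ≤ ℓ) (hζ : 0 ≤ ζ)
    (hζα : 32 * (ℓ : ℝ) ^ 2 * ζ ≤ α / 4 / 2 ^ ℓ) : 128 * (ℓ * ζ) ≤ α := by
  have hα : 0 ≤ α / 4 := by
    by_contra! hneg
    exact (div_neg_of_neg_of_pos hneg (by positivity)).not_ge (le_trans (by positivity) hζα)
  have hle : α / 4 / 2 ^ ℓ ≤ α / 4 := div_le_self hα (one_le_pow₀ one_le_two)
  have hℓζ : ℓ * ζ ≤ (ℓ : ℝ) ^ 2 * ζ := by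
    gcongr
    exact le_self_pow₀ (Nat.one_le_cast.2 hℓ) two_ne_zero
  linarith

lemma IsPathScale.exists_isCoverScale (hP : IsPathScale k ℓ a q ζ η) (hℓ : 1 ≤ ℓ) (hα : α ≤ 1 / 4)
    (hζ : 0 < ζ) (hζα : 32 * (ℓ : ℝ) ^ 2 * ζ ≤ α / 4 / 2 ^ ℓ) (hn : 1 ≤ η * n) :
    ∃ m m' g : ℕ, IsCoverScale ℓ q n α (η * n) m m' g ∧
      ((n / q + 2 * g : ℕ) : ℝ) ≤ 2 * ζ ^ 3 * n ∧
      ((3 * (2 * ℓ * m) + 2 * (q * m') + g : ℕ) : ℝ) ≤ 2 * ζ * n := by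
  have hℓ1 : (1 : ℝ) ≤ ℓ := Nat.one_le_cast.2 hℓ
  have hℓζ := mul_le_of_mul_sq_mul_le hℓ hζ.le hζα
  have hζℓ : ζ ≤ ℓ * ζ := le_mul_of_one_le_left hζ.le hℓ1
  have hbn := hP.mul_le (n := n) hζ (by linarith)
  obtain ⟨b, hb⟩ : ∃ b : ℝ, b = (ℓ + q + ℓ : ℕ) := ⟨_, rfl⟩
  obtain ⟨h, hh⟩ : ∃ h, h = η * n := ⟨_, rfl⟩
  have hbbh : 128 * (b ^ 2 * h) = ζ * n := by rw [hb, hh, ← hP.mul_eq]; ring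
  rw [← hh] at hn hbn ⊢
  rw [← hb] at hbn
  have hℓb : (ℓ : ℝ) ≤ b := hb ▸ Nat.cast_le.2 (by omega)
  have hqb : (q : ℝ) ≤ b := hb ▸ Nat.cast_le.2 (by omega)
  obtain ⟨m, m', g, hm, ⟨hℓm, hℓm₁⟩, hbm', ⟨hg, hg₁⟩, hgm'⟩ :=
    exists_scale_bounds hℓ hℓb (hℓ1.trans hℓb) hn
  have hqm' : q * (m' : ℝ) ≤ b * m' := by gcongr
  have hhb : h ≤ b * h := le_mul_of_one_le_left (by linarith) (hℓ1.trans hℓb)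
  have hnq := natCast_div_le_mul (n := n) hζ hP.one_le
  have hζ₃ : ζ ^ 3 * n ≤ ℓ * (ζ ^ 3 * n) := le_mul_of_one_le_left (by positivity) hℓ1
  have hζ₁ : ζ ^ 3 * n ≤ ζ * n := by
    gcongr
    exact pow_le_of_le_one hζ.le (by linarith) three_ne_zero
  have hcm := natCast_mul_pow_three_mul_le hζ.le (by linarith) hζα (n := n) (m := m) (by linarith)
  have hℓζn : 2 * (ℓ * (ζ * n)) ≤ α / 4 * n := by
    calc 2 * (ℓ * (ζ * n)) = 2 * (ℓ * ζ) * n := by ring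
      _ ≤ α / 4 * n := by gcongr; linarith
  have hαn : (α + ζ) * n ≤ 1 * n := by gcongr; linarith
  refine ⟨m, m', g, ⟨hm, ?_, by linarith, ?_, hn, by linarith, by rwa [← hb], ?_, hgm'⟩, ?_, ?_⟩
  · calc ℓ * (2 * (2 * ℓ * m + q * m') + ℓ * m : ℝ) ≤ ℓ * (2 * (ζ * n)) := by gcongr; linarith
      _ ≤ α / 4 * n := by linarith
  · exact (by gcongr : _ ≤ _).trans hcm
  · exact (by gcongr; linarith : _ ≤ _).trans hcm
  · push_cast; linarith
  · push_cast; linarith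

end Parameters

/-! ### Asymptotics -/

section Asymptotics

variable {k ℓ a q n : ℕ} {α ζ η ε δ p σ K : ℝ}

/-- The rate at which the probability that a dense system of reserves contains no path decays with
the expected number of paths. -/
noncomputable def tailRate (ℓ a : ℕ) (α : ℝ) : ℝ := ((α / 4 / 2 ^ ℓ) ^ 2) ^ 2 / (4 * 2 ^ a)

lemma tailRate_pos (ℓ a : ℕ) (hα : 0 < α) : 0 < tailRate ℓ a α := by
  unfold tailRate
  positivity

lemma IsPathScale.le_gProb_hasPathCover (hP : IsPathScale k ℓ a q ζ η) (hℓ : 1 ≤ ℓ) (hlk : ℓ < k)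
    (hα0 : 0 ≤ α) (hα : α ≤ 1 / 4) (hζ : 0 < ζ) (hζα : 32 * (ℓ : ℝ) ^ 2 * ζ ≤ α / 4 / 2 ^ ℓ)
    {L : Finset (Finset (Fin n))} {V₀ : Finset (Fin n)} (hL : ∀ S ∈ L, #S = ℓ)
    (hLV₀ : ∀ S ∈ L, Disjoint S V₀) (hLcard : α * (n : ℝ) ^ ℓ ≤ #L) (hV₀ : #V₀ ≤ α * n)
    (hn : 1 ≤ η * n) (hσ0 : 0 < σ) (hσ : σ ≤ η * n) (hp0 : 0 < p) (hp1 : p ≤ 1) (hK0 : 0 < K)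
    (hK : ∀ j ∈ Set.Icc 1 a, K ≤ (η * n) ^ (ℓ - 1) * ((η * n) ^ (k - ℓ) * p) ^ j) :
    1 - (2 ^ (n * (ℓ + q + ℓ)) * Real.exp (-(tailRate ℓ a α * (σ * K))) +
        #V₀ * (n + 1) ^ ((ℓ + q + ℓ) * ⌈σ⌉₊) * Real.exp (-(tailRate ℓ a α * K))) ≤
      gProb n k p (HasPathCover k ℓ L · V₀ (2 * ζ ^ 3 * n) (2 * ζ * n)) := by
  have hq0 : 0 < q := Nat.pos_of_ne_zero fun h0 => by
    have := hP.one_le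
    rw [h0, Nat.cast_zero, mul_zero] at this
    exact one_pos.not_ge this
  obtain ⟨m, m', g, hS, hcard, hleft⟩ := hP.exists_isCoverScale hℓ hα hζ hζα hn
  have hcard_n : Fintype.card (Fin n) = n := Fintype.card_fin n
  have hmain := IsCoverScale.le_subsetProb (V := Fin n) (by rwa [hcard_n]) hlk hℓ hP.pos hP.add_eq
    hq0 ⟨hα0, by linarith⟩ hL hLV₀ (by rwa [hcard_n]) (by rwa [hcard_n]) hσ0 hσ hp0 hp1 hK0 hK
  rw [hcard_n] at hmain
  rw [tailRate, div_mul_eq_mul_div, div_mul_eq_mul_div, gProb_eq_subsetProb]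
  refine hmain.trans (subsetProb_mono (fun e => edgeProb_mem_Icc k ⟨hp0.le, hp1⟩ e) ?_)
  rintro E ⟨W, hW, hWcard, hV₀W, hWc⟩
  exact hW.hasPathCover hP.pos hP.add_eq hV₀W ((Nat.cast_le.2 hWcard).trans hcard)
    ((Nat.cast_le.2 (by convert hWc)).trans hleft)

lemma two_pow_mul_mul_exp_neg_le {b : ℕ} {X : ℝ} (hδ : 0 < δ) (hX : (b + 1) * n ≤ X)
    (hn : -Real.log δ ≤ n) : 2 ^ (n * b) * Real.exp (-X) ≤ δ := by
  have htwo : (2 : ℝ) ≤ Real.exp 1 := by linarith [Real.add_one_le_exp (1 : ℝ)]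
  calc 2 ^ (n * b) * Real.exp (-X) ≤ Real.exp 1 ^ (n * b) * Real.exp (-X) := by gcongr
    _ = Real.exp (b * n - X) := by
        rw [← Real.exp_nat_mul, ← Real.exp_add, mul_one, Nat.cast_mul, mul_comm, sub_eq_add_neg]
    _ ≤ Real.exp (Real.log δ) := Real.exp_le_exp.2 (by linarith)
    _ = δ := Real.exp_log hδ

lemma eventually_le_natCast_rpow {s : ℝ} (hs : 0 < s) (M : ℝ) :
    ∀ᶠ n : ℕ in Filter.atTop, M ≤ (n : ℝ) ^ s :=
  ((tendsto_rpow_atTop hs).comp tendsto_natCast_atTop_atTop).eventually_ge_atTop M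

lemma pow_sub_mul_le {x : ℝ} (hn : 0 < n) (hℓk : ℓ ≤ k) (hη : 0 ≤ η)
    (hp : x * (n : ℝ) ^ (-((k : ℝ) - ℓ)) ≤ p) : η ^ (k - ℓ) * x ≤ (η * n) ^ (k - ℓ) * p := by
  have hn0 : (n : ℝ) ^ (k - ℓ) ≠ 0 := by positivity
  calc η ^ (k - ℓ) * x = (η * n) ^ (k - ℓ) * (x * (n : ℝ) ^ (-((k : ℝ) - ℓ))) := by
        rw [← Nat.cast_sub hℓk, Real.rpow_neg n.cast_nonneg, Real.rpow_natCast, mul_pow]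
        field_simp
    _ ≤ (η * n) ^ (k - ℓ) * p := by gcongr

lemma IsPathScale.eventually_le_gProb_hasPathCover_one {C : ℝ} (hP : IsPathScale k 1 a q ζ η)
    (hk : 1 < k) (hα0 : 0 < α) (hα : α ≤ 1 / 4) (hζ : 0 < ζ) (hζα : 32 * ζ ≤ α / 4 / 2)
    (hC : 1 ≤ η ^ (k - 1) * C)
    (hC' : ((1 + q + 1 : ℕ) : ℝ) + 1 ≤ tailRate 1 a α * (η * (η ^ (k - 1) * C))) (hδ : 0 < δ) :
    ∀ᶠ n : ℕ in Filter.atTop, ∀ L : Finset (Finset (Fin n)), (∀ S ∈ L, #S = 1) → α * n ≤ #L →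
      ∀ p ≤ 1, C * (n : ℝ) ^ (-((k : ℝ) - 1)) ≤ p →
        1 - δ ≤ gProb n k p (HasPathCover k 1 L · ∅ (2 * ζ ^ 3 * n) (2 * ζ * n)) := by
  have hη : 0 < η := hP.eta_pos hζ
  have hC0 : 0 < C := pos_of_mul_pos_right (one_pos.trans_le hC) (by positivity)
  filter_upwards [Filter.eventually_gt_atTop 0, eventually_le_natCast_rpow one_pos (1 / η),
    eventually_le_natCast_rpow one_pos (-Real.log δ)] with n hn hηn hδn L hL hLcard p hp1 hp
  rw [Real.rpow_one] at hηn hδn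
  have hηn1 : 1 ≤ η * n := (div_le_iff₀' hη).1 hηn
  have hp0 : 0 < p := lt_of_lt_of_le (by positivity) hp
  have hdeg : η ^ (k - 1) * C ≤ (η * n) ^ (k - 1) * p :=
    pow_sub_mul_le hn hk.le hη.le (by rwa [Nat.cast_one])
  have hexp : 2 ^ (n * (1 + q + 1)) *
      Real.exp (-(tailRate 1 a α * (η * n * (η ^ (k - 1) * C)))) ≤ δ :=
    two_pow_mul_mul_exp_neg_le hδ
      ((mul_le_mul_of_nonneg_right hC' n.cast_nonneg).trans_eq (by ring)) hδn
  refine le_trans ?_ (hP.le_gProb_hasPathCover le_rfl hk hα0.le hα hζ (by simpa using hζα) hL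
    (by simp) (by simpa using hLcard) (by rw [card_empty, Nat.cast_zero]; positivity) hηn1
    (by positivity) le_rfl hp0 hp1 (K := η ^ (k - 1) * C) (by positivity) fun j hj => ?_)
  · simp only [card_empty, Nat.cast_zero, zero_mul, add_zero]
    linarith
  · rw [Nat.sub_self, pow_zero, one_mul]
    exact hdeg.trans (le_self_pow₀ (hC.trans hdeg) (Nat.one_le_iff_ne_zero.1 hj.1))

lemma log_add_one_le_mul_rpow {x : ℝ} (hx : 2 ≤ x) :
    Real.log (x + 1) ≤ 32 * x ^ (1 / 16 : ℝ) :=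
  calc Real.log (x + 1) ≤ Real.log (x ^ 2) := Real.log_le_log (by linarith) (by nlinarith)
    _ = 2 * Real.log x := by rw [Real.log_pow, Nat.cast_two]
    _ ≤ 2 * (x ^ (1 / 16 : ℝ) / (1 / 16)) := by
        gcongr
        exact Real.log_le_rpow_div (by linarith) (by norm_num)
    _ = 32 * x ^ (1 / 16 : ℝ) := by ring

lemma mul_pow_ceil_sqrt_mul_exp_neg_le {b : ℕ} {X : ℝ} (hδ : 0 < δ) (hn : 2 ≤ n) (hb : 1 ≤ b)
    (hX : (96 * b + 1) * (n : ℝ) ^ (9 / 16 : ℝ) ≤ X)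
    (hδn : -Real.log δ ≤ (n : ℝ) ^ (9 / 16 : ℝ)) :
    n * (n + 1) ^ (b * ⌈√(n : ℝ)⌉₊) * Real.exp (-X) ≤ δ := by
  have hn2 : (2 : ℝ) ≤ n := Nat.ofNat_le_cast.2 hn
  have hb1 : (1 : ℝ) ≤ b := Nat.one_le_cast.2 hb
  have hsqrt : 1 ≤ √(n : ℝ) := Real.one_le_sqrt.2 (by linarith)
  have hexponent : ((b * ⌈√(n : ℝ)⌉₊ + 1 : ℕ) : ℝ) ≤ 3 * b * √n := by
    have hceil : (⌈√(n : ℝ)⌉₊ : ℝ) ≤ 2 * √n := by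
      linarith [Nat.ceil_lt_add_one (Real.sqrt_nonneg n)]
    push_cast
    nlinarith
  have hlog : ((b * ⌈√(n : ℝ)⌉₊ + 1 : ℕ) : ℝ) * Real.log (n + 1) ≤
      96 * b * (n : ℝ) ^ (9 / 16 : ℝ) :=
    calc ((b * ⌈√(n : ℝ)⌉₊ + 1 : ℕ) : ℝ) * Real.log (n + 1)
        ≤ 3 * b * √n * (32 * (n : ℝ) ^ (1 / 16 : ℝ)) := by
          gcongr
          · exact Real.log_nonneg (by linarith)
          · exact log_add_one_le_mul_rpow hn2
      _ = 96 * b * (√n * (n : ℝ) ^ (1 / 16 : ℝ)) := by ring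
      _ = 96 * b * (n : ℝ) ^ (9 / 16 : ℝ) := by
          rw [Real.sqrt_eq_rpow, ← Real.rpow_add (by linarith)]
          norm_num
  calc n * (n + 1) ^ (b * ⌈√(n : ℝ)⌉₊) * Real.exp (-X)
      ≤ (n + 1 : ℝ) ^ (b * ⌈√(n : ℝ)⌉₊ + 1) * Real.exp (-X) := by
        rw [pow_succ']
        gcongr
        linarith
    _ = Real.exp ((b * ⌈√(n : ℝ)⌉₊ + 1 : ℕ) * Real.log (n + 1) - X) := by
        rw [sub_eq_add_neg, Real.exp_add, Real.exp_nat_mul, Real.exp_log (by linarith)]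
    _ ≤ Real.exp (Real.log δ) := Real.exp_le_exp.2 (by linarith)
    _ = δ := Real.exp_log hδ

lemma two_pow_mul_exp_add_le {b : ℕ} {X : ℝ} (hδ : 0 < δ) (hn : 2 ≤ n) (hb : 1 ≤ b)
    (hX : (96 * b + 1) * (n : ℝ) ^ (9 / 16 : ℝ) ≤ X)
    (hδn : -Real.log (δ / 2) ≤ (n : ℝ) ^ (9 / 16 : ℝ)) :
    2 ^ (n * b) * Real.exp (-(√n * X)) +
      n * (n + 1) ^ (b * ⌈√(n : ℝ)⌉₊) * Real.exp (-X) ≤ δ := by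
  have hn1 : (1 : ℝ) ≤ n := Nat.one_le_cast.2 (by omega)
  have hsqrt : √(n : ℝ) ≤ (n : ℝ) ^ (9 / 16 : ℝ) := by
    rw [Real.sqrt_eq_rpow]
    exact Real.rpow_le_rpow_of_exponent_le hn1 (by norm_num)
  have hδn' : (n : ℝ) ^ (9 / 16 : ℝ) ≤ n := Real.rpow_le_self_of_one_le hn1 (by norm_num)
  have hX' : (b + 1) * (n : ℝ) ≤ √n * X :=
    calc (b + 1) * (n : ℝ) = √n * ((b + 1) * √n) := by
          rw [mul_left_comm, Real.mul_self_sqrt n.cast_nonneg]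
      _ ≤ √n * ((96 * b + 1) * (n : ℝ) ^ (9 / 16 : ℝ)) := by
        gcongr
        linarith [b.cast_nonneg (α := ℝ)]
      _ ≤ √n * X := by gcongr
  linarith [two_pow_mul_mul_exp_neg_le (half_pos hδ) hX' (hδn.trans hδn'),
    mul_pow_ceil_sqrt_mul_exp_neg_le (half_pos hδ) hn hb hX hδn]

lemma mul_rpow_le_pow_mul_pow {s : ℝ} {j : ℕ} (hn : 0 < n) (hℓ : 1 ≤ ℓ) (hlk : ℓ ≤ k) (hη : 0 < η)
    (hη1 : η ≤ 1) (hε : 0 ≤ ε) (hs : a * ε ≤ ℓ - 1 - s)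
    (hp : (n : ℝ) ^ (-((k : ℝ) - ℓ) - ε) ≤ p) (hj : j ≤ a) :
    η ^ (ℓ - 1 + (k - ℓ) * a) * (n : ℝ) ^ s ≤
      (η * n) ^ (ℓ - 1) * ((η * n) ^ (k - ℓ) * p) ^ j := by
  have hn0 : (0 : ℝ) < n := Nat.cast_pos.2 hn
  have hn1 : (1 : ℝ) ≤ n := Nat.one_le_cast.2 hn
  have hx : η ^ (k - ℓ) * (n : ℝ) ^ (-ε) ≤ (η * n) ^ (k - ℓ) * p := by
    refine pow_sub_mul_le hn hlk hη.le ?_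
    rwa [← Real.rpow_add hn0, neg_add_eq_sub, sub_eq_add_neg, add_comm, neg_add_eq_sub]
  have hx1 : η ^ (k - ℓ) * (n : ℝ) ^ (-ε) ≤ 1 := mul_le_one₀ (pow_le_one₀ hη.le hη1)
    (by positivity) (Real.rpow_le_one_of_one_le_of_nonpos hn1 (by linarith))
  calc η ^ (ℓ - 1 + (k - ℓ) * a) * (n : ℝ) ^ s
      ≤ η ^ (ℓ - 1 + (k - ℓ) * a) * (n : ℝ) ^ (((ℓ - 1 : ℕ) : ℝ) + -ε * a) := by
        rw [Nat.cast_sub hℓ, Nat.cast_one]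
        gcongr
        linarith
    _ = (η * n) ^ (ℓ - 1) * (η ^ (k - ℓ) * (n : ℝ) ^ (-ε)) ^ a := by
        rw [Real.rpow_add hn0, Real.rpow_natCast, Real.rpow_mul_natCast hn0.le]
        ring
    _ ≤ (η * n) ^ (ℓ - 1) * (η ^ (k - ℓ) * (n : ℝ) ^ (-ε)) ^ j := by
        gcongr ?_ * ?_
        exact pow_le_pow_of_le_one (by positivity) hx1 hj
    _ ≤ (η * n) ^ (ℓ - 1) * ((η * n) ^ (k - ℓ) * p) ^ j := by gcongr

lemma IsPathScale.eta_le (hP : IsPathScale k ℓ a q ζ η) (hℓ : 1 ≤ ℓ) (hζ : 0 < ζ) : η ≤ ζ := by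
  have hb : (1 : ℝ) ≤ (ℓ + q + ℓ : ℕ) := Nat.one_le_cast.2 (by omega)
  calc η ≤ 128 * ((ℓ + q + ℓ : ℕ) : ℝ) ^ 2 * η :=
        le_mul_of_one_le_left (hP.eta_pos hζ).le (by nlinarith)
    _ = ζ := hP.mul_eq

lemma IsPathScale.mul_le_sub (hP : IsPathScale k ℓ a q ζ η) (hℓ : 2 ≤ ℓ) (hζ : 0 ≤ ζ)
    (hζℓ : ℓ * ζ ≤ 1 / 16) (hε : ε ≤ ζ ^ 3 * ℓ / 6) : a * ε ≤ ℓ - 1 - 5 / 8 := by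
  have hℓ2 : (2 : ℝ) ≤ ℓ := Nat.ofNat_le_cast.2 hℓ
  have hζ3 : ζ ^ 3 * (ℓ + 1) ≤ 1 / 8 :=
    calc ζ ^ 3 * (ℓ + 1 : ℝ) ≤ ζ * (2 * ℓ) := by
          gcongr
          · exact pow_le_of_le_one hζ (by nlinarith) three_ne_zero
          · linarith
      _ ≤ 1 / 8 := by linarith
  calc a * ε ≤ a * (ζ ^ 3 * ℓ / 6) := by gcongr
    _ = ζ ^ 3 * a * (ℓ / 6) := by ring
    _ ≤ (1 + 1 / 8) * (ℓ / 6) := by gcongr; linarith [hP.le_add]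
    _ ≤ ℓ - 1 - 5 / 8 := by linarith

lemma sqrt_le_mul_of_one_le_mul_sqrt {x : ℝ} (hx : 0 ≤ x) (h : 1 ≤ η * √x) : √x ≤ η * x :=
  calc √x ≤ η * √x * √x := le_mul_of_one_le_left (Real.sqrt_nonneg x) h
    _ = η * x := by rw [mul_assoc, Real.mul_self_sqrt hx]

lemma mul_rpow_le_mul_rpow_add {x y z s t : ℝ} (hx : 0 < x) (h : y ≤ z * x ^ s) :
    y * x ^ t ≤ z * x ^ (s + t) := by
  rw [Real.rpow_add hx, ← mul_assoc]
  gcongr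

lemma IsPathScale.eventually_le_gProb_hasPathCover (hP : IsPathScale k ℓ a q ζ η) (hℓ : 2 ≤ ℓ)
    (hlk : ℓ < k) (hα0 : 0 < α) (hα : α ≤ 1 / 4) (hζ : 0 < ζ)
    (hζα : 32 * (ℓ : ℝ) ^ 2 * ζ ≤ α / 4 / 2 ^ ℓ) (hε0 : 0 ≤ ε) (hε : ε ≤ ζ ^ 3 * ℓ / 6)
    (hδ : 0 < δ) :
    ∀ᶠ n : ℕ in Filter.atTop, ∀ (V₀ : Finset (Fin n)) (L : Finset (Finset (Fin n))),
      #V₀ ≤ α * n → (∀ S ∈ L, #S = ℓ) → (∀ S ∈ L, Disjoint S V₀) → α * (n : ℝ) ^ ℓ ≤ #L →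
      ∀ p ≤ 1, (n : ℝ) ^ (-((k : ℝ) - ℓ) - ε) ≤ p →
        1 - δ ≤ gProb n k p (HasPathCover k ℓ L · V₀ (2 * ζ ^ 3 * n) (2 * ζ * n)) := by
  have hℓ1 : 1 ≤ ℓ := by omega
  have hη : 0 < η := hP.eta_pos hζ
  have hℓζ := mul_le_of_mul_sq_mul_le hℓ1 hζ.le hζα
  have hη1 : η ≤ 1 := by
    linarith [hP.eta_le hℓ1 hζ, le_mul_of_one_le_left hζ.le (Nat.one_le_cast.2 hℓ1 : (1 : ℝ) ≤ ℓ)]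
  have haε := hP.mul_le_sub hℓ hζ.le (by linarith) hε
  have hrate := tailRate_pos ℓ a hα0
  obtain ⟨κ, hκ⟩ : ∃ κ, κ = η ^ (ℓ - 1 + (k - ℓ) * a) := ⟨_, rfl⟩
  have hκ0 : 0 < κ := hκ ▸ pow_pos hη _
  filter_upwards [Filter.eventually_ge_atTop 2,
    eventually_le_natCast_rpow (s := 1 / 2) (by norm_num) (1 / η),
    eventually_le_natCast_rpow (s := 1 / 16) (by norm_num)
      ((96 * (ℓ + q + ℓ : ℕ) + 1) / (tailRate ℓ a α * κ)),
    eventually_le_natCast_rpow (s := 9 / 16) (by norm_num) (-Real.log (δ / 2))]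
    with n hn hηn hrate_n hδn V₀ L hV₀ hL hLV₀ hLcard p hp1 hp
  rw [← Real.sqrt_eq_rpow, div_le_iff₀' hη] at hηn
  rw [div_le_iff₀' (by positivity)] at hrate_n
  have hn0 : (0 : ℝ) < n := Nat.cast_pos.2 (by omega)
  have hp0 : 0 < p := lt_of_lt_of_le (by positivity) hp
  have hσ := sqrt_le_mul_of_one_le_mul_sqrt hn0.le hηn
  have hX : (96 * (ℓ + q + ℓ : ℕ) + 1) * (n : ℝ) ^ (9 / 16 : ℝ) ≤
      tailRate ℓ a α * (κ * (n : ℝ) ^ (5 / 8 : ℝ)) :=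
    (mul_rpow_le_mul_rpow_add hn0 hrate_n).trans_eq (by rw [mul_assoc]; norm_num)
  have hsqrt : 1 ≤ √(n : ℝ) := Real.one_le_sqrt.2 (Nat.one_le_cast.2 (by omega))
  refine le_trans ?_ (hP.le_gProb_hasPathCover hℓ1 hlk hα0.le hα hζ hζα hL hLV₀ hLcard hV₀
    (hsqrt.trans hσ) (by positivity) hσ hp0 hp1 (K := κ * (n : ℝ) ^ (5 / 8 : ℝ)) (by positivity)
    fun j hj => hκ ▸ mul_rpow_le_pow_mul_pow (by omega) hℓ1 hlk.le hη hη1 hε0 haε hp hj.2)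
  rw [mul_left_comm]
  refine sub_le_sub_left (le_trans ?_ (two_pow_mul_exp_add_le hδ hn (by omega) hX hδn)) 1
  gcongr
  exact_mod_cast card_finset_fin_le V₀

lemma exists_forall_natCast_ge_le_mul {c d x y : ℝ} (hc : 0 < c) (hd : 0 < d) :
    ∃ C₀ : ℕ, ∀ C : ℕ, C₀ ≤ C → x ≤ c * C ∧ y ≤ d * C := by
  obtain ⟨C₀, hC₀⟩ := exists_nat_ge (max (x / c) (y / d))
  refine ⟨C₀, fun C hC => ?_⟩
  have hmax : max (x / c) (y / d) ≤ C := hC₀.trans (Nat.cast_le.2 hC)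
  exact ⟨(div_le_iff₀' hc).1 (le_of_max_le_left hmax),
    (div_le_iff₀' hd).1 (le_of_max_le_right hmax)⟩

end Asymptotics

/-- Lemma 3.5, the path cover lemma. -/
theorem path_cover_lemma
    (k ℓ : ℕ) (hl1 : 1 ≤ ℓ) (hlk : ℓ < k) :
    ∃ α₀ : ℝ, 0 < α₀ ∧ ∀ α : ℝ, 0 < α → α ≤ α₀ →
    ∃ ζ₀ : ℝ, 0 < ζ₀ ∧ ∀ ζ : ℝ, 0 < ζ → ζ ≤ ζ₀ →
    ∃ C₀ : ℕ, ∀ C : ℕ, C₀ ≤ C →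
    ∀ ε : ℝ, 0 < ε → ε ≤ ζ ^ 3 * (ℓ : ℝ) / 6 →
    ∀ δ : ℝ, 0 < δ → ∃ n₀ : ℕ, ∀ n : ℕ, n₀ ≤ n →
    ∀ V₀ : Finset (Fin n), (V₀.card : ℝ) ≤ α * (n : ℝ) → (ℓ = 1 → V₀ = ∅) →
    ∀ L : Finset (Finset (Fin n)), (∀ S ∈ L, S.card = ℓ ∧ Disjoint S V₀) →
      α * (n : ℝ) ^ ℓ ≤ (L.card : ℝ) →
    ∀ p : ℝ, 0 ≤ p → p ≤ 1 →
      ((2 ≤ ℓ → (n : ℝ) ^ (-((k : ℝ) - (ℓ : ℝ)) - ε) ≤ p) ∧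
       (ℓ = 1 → (C : ℝ) * (n : ℝ) ^ (-((k : ℝ) - 1)) ≤ p)) →
      1 - δ ≤ gProb n k p (fun E =>
        ∃ Paths : Finset (List (Fin n)),
          (Paths.card : ℝ) ≤ 2 * ζ ^ 3 * (n : ℝ) ∧
          (∀ v ∈ Paths, ∃ a : ℕ, 1 ≤ a ∧ ListSpans k ℓ a E v) ∧
          (∀ v ∈ Paths, (v.take ℓ).toFinset ∈ L ∧ (v.drop (v.length - ℓ)).toFinset ∈ L) ∧
          (∀ v ∈ Paths, ∀ v' ∈ Paths, v ≠ v' → ∀ x ∈ v, x ∉ v') ∧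
          (∀ x ∈ V₀, ∃ v ∈ Paths, x ∈ v) ∧
          ((Finset.univ.filter (fun x : Fin n => ∀ v ∈ Paths, x ∉ v)).card : ℝ) ≤
            2 * ζ * (n : ℝ)) := by
  refine ⟨1 / 4, by norm_num, fun α hα0 hα =>
    ⟨α / 4 / 2 ^ ℓ / (32 * (ℓ : ℝ) ^ 2), by positivity, fun ζ hζ hζα => ?_⟩⟩
  rw [le_div_iff₀' (by positivity)] at hζα
  obtain ⟨a, q, η, hP⟩ := exists_isPathScale hl1 hlk hζ
  have hη : 0 < η := hP.eta_pos hζ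
  have hrate := tailRate_pos 1 a hα0
  obtain ⟨C₀, hC₀⟩ := exists_forall_natCast_ge_le_mul (x := 1) (y := (1 + q + 1 : ℕ) + 1)
    (c := η ^ (k - 1)) (d := tailRate 1 a α * (η * η ^ (k - 1))) (by positivity) (by positivity)
  refine ⟨C₀, fun C hC ε hε0 hε δ hδ => ?_⟩
  obtain ⟨hC1, hC2⟩ := hC₀ C hC
  obtain rfl | hℓ := hl1.eq_or_lt
  · obtain ⟨n₀, hn₀⟩ := Filter.eventually_atTop.1 <|
      hP.eventually_le_gProb_hasPathCover_one hlk hα0 hα hζ (by simpa using hζα) hC1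
        (hC2.trans_eq (by ring)) hδ
    refine ⟨n₀, fun n hn V₀ _ hV₀ L hL hLcard p _ hp1 hp => ?_⟩
    rw [hV₀ rfl]
    exact hn₀ n hn L (fun S hS => (hL S hS).1) (by simpa using hLcard) p hp1 (hp.2 rfl)
  · obtain ⟨n₀, hn₀⟩ := Filter.eventually_atTop.1 <|
      hP.eventually_le_gProb_hasPathCover hℓ hlk hα0 hα hζ hζα hε0.le hε hδ
    exact ⟨n₀, fun n hn V₀ hV₀ _ L hL hLcard p _ hp1 hp => hn₀ n hn V₀ L hV₀
      (fun S hS => (hL S hS).1) (fun S hS => (hL S hS).2) hLcard p hp1 (hp.1 hℓ)⟩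
end

section
/- Let 1 ≤ ℓ < k, set t₄ = ⌈(3k−ℓ−2)/(k−ℓ)⌉ and t₅ = t₄(k−ℓ). Let W = {w₁, …, w_{k−ℓ}} be a (k−ℓ)-set of vertices of a k-graph H, and let X_i, Y_i, Z_i (i ∈ [k−ℓ]) and T be pairwise disjoint ordered vertex sets in V(H) ∖ W with |X_i| = k−1, |Y_i| = t₅−k−i+1, |Z_i| = i−1 and |T| = ℓ. Write Q = X₁Z₂Y₁ X₂Z₃Y₂ ⋯ X_{k−ℓ−1}Z_{k−ℓ}Y_{k−ℓ−1} X_{k−ℓ}Z₁Y_{k−ℓ}T and Q′ = X₁w₁Z₁Y₁ X₂w₂Z₂Y₂ ⋯ X_{k−ℓ}w_{k−ℓ}Z_{k−ℓ}Y_{k−ℓ}T, and set B_i = X_i w_i Z_i Y_i. If Q spans a copy of the ℓ-path P_{t₅−1} in H and, for every i ∈ [k−ℓ], H contains all the edges of the ℓ-path structure of Q′ that lie entirely within B_i (and within B_{k−ℓ} ∪ T for i = k−ℓ), then Q′ spans a copy of the ℓ-path P_{t₅} in H; in particular, Q is then a W-absorber. -/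
open Finset
open scoped Classical

/-!
In `Q'` every block `X_i w_i Z_i Y_i` has length `t₅`, and in `Q` so does every block `X_i Z_{i+1}
Y_i` except the last, since `|Z_{i+1}| = |w_i Z_i|`. Hence every `X_i`, and every `Y_i` but the
last, occupies the same positions in `Q` and in `Q'`. As `t₅ ≥ 3k - ℓ - 2`, we have `|Y_i| ≥ k -
1`, and `|X_{i+1}| = k - 1`, so `k` consecutive entries of `Q'` that meet two consecutive blocks
lie inside `Y_i X_{i+1}` and are also `k` consecutive entries of `Q`, at the same position. Such
an edge of the path structure is therefore one of `Q`; every other edge lies in a single block,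
extended by `T` if it is the last one.
-/

lemma le_natCeil_div_mul (m : ℕ) {d : ℕ} (hd : 0 < d) : m ≤ ⌈(m : ℚ) / d⌉₊ * d := by
  exact_mod_cast (div_le_iff₀ (Nat.cast_pos.mpr hd)).mp (Nat.le_ceil ((m : ℚ) / d))

lemma exists_add_one_mod_iff {d : ℕ} (p : Fin d → Prop) :
    (∃ i : Fin d, p ⟨(i + 1) % d, Nat.mod_lt _ i.pos⟩) ↔ ∃ i, p i := by
  refine ⟨fun ⟨i, hi⟩ => ⟨_, hi⟩, fun ⟨i, hi⟩ => ?_⟩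
  have : NeZero d := ⟨i.pos.ne'⟩
  have hpred : (((i - 1 : Fin d) : ℕ) + 1) % d = i := by
    rw [← Nat.add_mod_mod, ← Fin.val_one' d, ← Fin.val_add, sub_add_cancel]
  exact ⟨i - 1, by simpa only [hpred] using hi⟩

section Lists

variable {α : Type*}

lemma take_drop_eq_of_prefix_drop {k p q : ℕ} {A L : List α} (hL : L <+: A.drop p)
    (hpq : p ≤ q) (hq : q + k ≤ p + L.length) :
    (A.drop q).take k = (L.drop (q - p)).take k := by
  obtain ⟨R, hR⟩ := hL
  rw [show A.drop q = (A.drop p).drop (q - p) by rw [List.drop_drop, Nat.add_sub_of_le hpq], ← hR,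
    List.drop_append_of_le_length (by omega),
    List.take_append_of_le_length (by rw [List.length_drop]; omega)]

lemma drop_flatten_append {t i : ℕ} {L : List (List α)} (hi : i ≤ L.length)
    (hlen : ∀ l ∈ L.take i, l.length = t) (T : List α) :
    (L.flatten ++ T).drop (i * t) = (L.drop i).flatten ++ T := by
  have hprefix : (L.take i).flatten.length = i * t := by
    rw [List.length_flatten, List.map_congr_left hlen]
    simp [hi]
  conv_lhs => rw [← List.take_append_drop i L, List.flatten_append, List.append_assoc]
  exact List.drop_left' hprefix

/-- The concatenation `X₀M₀Y₀ X₁M₁Y₁ ⋯ X_{d-1}M_{d-1}Y_{d-1} T`. Both `Q` and `Q'` are of this form,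
with the same `X`, `Y` and `T`, and differ only in the fillers `M`. -/
def blockConcat {d : ℕ} (X M Y : Fin d → List α) (T : List α) : List α :=
  (List.ofFn fun i => X i ++ M i ++ Y i).flatten ++ T

variable {d k t : ℕ} {X M M' Y : Fin d → List α} {T : List α}

lemma mem_blockConcat {x : α} :
    x ∈ blockConcat X M Y T ↔
      (∃ i, x ∈ X i) ∨ (∃ i, x ∈ M i) ∨ (∃ i, x ∈ Y i) ∨ x ∈ T := by
  simp only [blockConcat, List.mem_append, List.mem_flatten, List.mem_ofFn,
    exists_exists_eq_and, exists_or, or_assoc]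

lemma length_blockConcat (hblock : ∀ i, (X i ++ M i ++ Y i).length = t) :
    (blockConcat X M Y T).length = t * d + T.length := by
  rw [blockConcat, List.length_append, List.length_flatten, List.map_ofFn,
    show List.length ∘ _ = fun _ => t from funext hblock]
  simp [mul_comm]

lemma drop_blockConcat (i : Fin d) (hblock : ∀ j < i, (X j ++ M j ++ Y j).length = t) :
    (blockConcat X M Y T).drop (i * t) =
      X i ++ M i ++ Y i ++
        (((List.ofFn fun j => X j ++ M j ++ Y j).drop (i + 1)).flatten ++ T) := by
  rw [blockConcat, drop_flatten_append (by simp [i.isLt.le]),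
    List.drop_eq_getElem_cons (by simp), List.flatten_cons, List.getElem_ofFn, List.append_assoc]
  intro l hl
  obtain ⟨j, hj, rfl⟩ := List.mem_take_iff_getElem.mp hl
  rw [List.getElem_ofFn]
  exact hblock _ (by simpa [Fin.lt_def] using And.left (lt_min_iff.mp hj))

lemma drop_length_sub_blockConcat :
    (blockConcat X M Y T).drop ((blockConcat X M Y T).length - T.length) = T := by
  simp only [blockConcat, List.length_append, Nat.add_sub_cancel, List.drop_left]

lemma take_blockConcat {m : ℕ} (hd : 0 < d) (hm : m ≤ (X ⟨0, hd⟩).length) :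
    (blockConcat X M Y T).take m = (X ⟨0, hd⟩).take m := by
  have hdrop := drop_blockConcat (X := X) (M := M) (Y := Y) (T := T) (t := 0) ⟨0, hd⟩
    (fun j hj => absurd hj (Nat.not_lt_zero j))
  rw [zero_mul, List.drop_zero] at hdrop
  rw [hdrop, List.append_assoc, List.append_assoc, List.take_append_of_le_length hm]

lemma block_prefix_drop_blockConcat (i : Fin d)
    (hblock : ∀ j < i, (X j ++ M j ++ Y j).length = t) :
    X i ++ M i ++ Y i ++ (if (i : ℕ) = d - 1 then T else []) <+:
      (blockConcat X M Y T).drop (i * t) := by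
  rw [drop_blockConcat i hblock, List.prefix_append_right_inj]
  split_ifs with hlast
  · rw [List.drop_eq_nil_of_le (by simp; omega), List.flatten_nil, List.nil_append]
  · exact List.nil_prefix

lemma junction_prefix_drop_blockConcat (i : Fin d) (hi : (i : ℕ) + 1 < d)
    (hblock : ∀ j ≤ i, (X j ++ M j ++ Y j).length = t) :
    Y i ++ X ⟨i + 1, hi⟩ <+: (blockConcat X M Y T).drop (i * t + (X i ++ M i).length) := by
  have hdrop := drop_blockConcat (T := T) i fun j hj => hblock j hj.le
  rw [← List.drop_drop, hdrop, List.append_assoc (X i ++ M i), List.drop_left,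
    List.drop_eq_getElem_cons (by simpa using hi), List.flatten_cons, List.getElem_ofFn]
  simp only [List.append_assoc, List.prefix_append_right_inj, List.prefix_append]

lemma window_eq_of_crosses_junction (hX : ∀ i, k - 1 ≤ (X i).length)
    (hY : ∀ i, k - 1 ≤ (Y i).length) (hblock : ∀ i, (X i ++ M' i ++ Y i).length = t)
    (hM : ∀ i : Fin d, (i : ℕ) + 1 < d → (M i).length = (M' i).length)
    {i : Fin d} (hi : (i : ℕ) + 1 < d) {r : ℕ} (hrt : r < t) (hcross : t < r + k) :
    ((blockConcat X M' Y T).drop (i * t + r)).take k =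
      ((blockConcat X M Y T).drop (i * t + r)).take k := by
  have hblock' : ∀ j ≤ i, (X j ++ M j ++ Y j).length = t := fun j hj => by
    have hMj := hM j (lt_of_le_of_lt (Nat.succ_le_succ hj) hi)
    simpa only [List.length_append, hMj] using hblock j
  have hlen : (X i ++ M i).length = (X i ++ M' i).length := by
    rw [List.length_append, List.length_append, hM i hi]
  have hstart : (X i ++ M' i).length ≤ r := by
    have hbi := hblock i
    have hYi := hY i
    rw [List.length_append] at hbi
    omega
  have hend : i * t + r + k ≤
      i * t + (X i ++ M' i).length + (Y i ++ X ⟨i + 1, hi⟩).length := by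
    have hbi := hblock i
    have hXi := hX ⟨i + 1, hi⟩
    rw [List.length_append] at hbi
    rw [List.length_append (as := Y i)]
    omega
  have hQ := junction_prefix_drop_blockConcat (T := T) i hi hblock'
  have hQ' := junction_prefix_drop_blockConcat (T := T) i hi fun j _ => hblock j
  rw [hlen] at hQ
  rw [take_drop_eq_of_prefix_drop hQ' (by omega) hend,
    take_drop_eq_of_prefix_drop hQ (by omega) hend]

lemma window_subset_block_or_eq (hX : ∀ i, k - 1 ≤ (X i).length)
    (hY : ∀ i, k - 1 ≤ (Y i).length) (hblock : ∀ i, (X i ++ M' i ++ Y i).length = t)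
    (hM : ∀ i : Fin d, (i : ℕ) + 1 < d → (M i).length = (M' i).length)
    {p : ℕ} (hp : p < t * d) (hpk : p + k ≤ t * d + T.length) :
    (∃ i : Fin d, ((blockConcat X M' Y T).drop p).take k ⊆
      X i ++ M' i ++ Y i ++ (if (i : ℕ) = d - 1 then T else [])) ∨
    (p + t < t * d ∧
      ((blockConcat X M' Y T).drop p).take k = ((blockConcat X M Y T).drop p).take k) := by
  have ht : 0 < t := Nat.pos_of_mul_pos_right (Nat.zero_lt_of_lt hp)
  obtain ⟨i, r, hrt, rfl⟩ : ∃ (i : Fin d) (r : ℕ), r < t ∧ p = i * t + r :=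
    ⟨⟨p / t, Nat.div_lt_of_lt_mul hp⟩, p % t, Nat.mod_lt _ ht, (Nat.div_add_mod' p t).symm⟩
  by_cases hcross : (i : ℕ) + 1 < d ∧ t < r + k
  · refine .inr ⟨?_, window_eq_of_crosses_junction hX hY hblock hM hcross.1 hrt hcross.2⟩
    nlinarith [Nat.mul_le_mul_right t (show (i : ℕ) + 2 ≤ d from hcross.1)]
  · refine .inl ⟨i, ?_⟩
    have hprefix := block_prefix_drop_blockConcat (T := T) i fun j _ => hblock j
    rw [take_drop_eq_of_prefix_drop hprefix (by omega)]
    · exact fun x hx => List.mem_of_mem_drop (List.mem_of_mem_take hx)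
    · rw [List.length_append, hblock]
      split_ifs with hlast
      · have hd : d = i + 1 := by omega
        have htd : t * d = i * t + t := (congrArg (t * ·) hd).trans (by ring)
        omega
      · rw [List.length_nil]
        omega

end Lists

theorem listSpans_blockConcat {k ℓ t n : ℕ} (hlk : ℓ < k) {H : Finset (Finset (Fin n))}
    {X M M' Y : Fin (k - ℓ) → List (Fin n)} {T : List (Fin n)}
    (hX : ∀ i, k - 1 ≤ (X i).length) (hY : ∀ i, k - 1 ≤ (Y i).length)
    (hblock : ∀ i, (X i ++ M' i ++ Y i).length = t)
    (hM : ∀ i : Fin (k - ℓ), (i : ℕ) + 1 < k - ℓ → (M i).length = (M' i).length)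
    (hT : T.length = ℓ) (hnodup : (blockConcat X M' Y T).Nodup)
    (hQ : ∀ j < t - 1, (((blockConcat X M Y T).drop (j * (k - ℓ))).take k).toFinset ∈ H)
    (hB : ∀ j < t, ∀ i : Fin (k - ℓ),
      (((blockConcat X M' Y T).drop (j * (k - ℓ))).take k).toFinset ⊆
        (X i ++ M' i ++ Y i ++ (if (i : ℕ) = k - ℓ - 1 then T else [])).toFinset →
      (((blockConcat X M' Y T).drop (j * (k - ℓ))).take k).toFinset ∈ H) :
    ListSpans k ℓ t H (blockConcat X M' Y T) := by
  refine ⟨hnodup, by rw [length_blockConcat hblock, hT], fun j hj => ?_⟩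
  have hjt : (j + 1) * (k - ℓ) ≤ t * (k - ℓ) := Nat.mul_le_mul_right _ hj
  rw [Nat.add_one_mul] at hjt
  obtain ⟨i, hsub⟩ | ⟨hjlt, heq⟩ :=
    window_subset_block_or_eq (T := T) (p := j * (k - ℓ)) hX hY hblock hM (by omega) (by omega)
  · exact hB j hj i fun x hx => List.mem_toFinset.mpr (hsub (List.mem_toFinset.mp hx))
  · have hdt : k - ℓ ≤ t := by
      have hb := hblock ⟨0, by omega⟩
      have hX₀ := hX ⟨0, by omega⟩
      have hY₀ := hY ⟨0, by omega⟩
      simp only [List.length_append] at hb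
      omega
    have hj_lt : j < t - 1 := by
      by_contra hlast
      rw [show t = j + 1 by omega, Nat.add_one_mul] at hjlt
      omega
    rw [heq]
    exact hQ j hj_lt

theorem absorber_structure_general {k ℓ t n : ℕ} (hlk : ℓ < k) (ht : 3 * k ≤ t + ℓ + 2)
    {H : Finset (Finset (Fin n))} {w : Fin (k - ℓ) → Fin n}
    {X Y Z : Fin (k - ℓ) → List (Fin n)} {T Q Q' : List (Fin n)}
    (hX : ∀ i, (X i).length = k - 1) (hY : ∀ i, (Y i).length = t - k - i)
    (hZ : ∀ i, (Z i).length = i) (hT : T.length = ℓ)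
    (hQ : Q = blockConcat X (fun i => Z ⟨(i + 1) % (k - ℓ), Nat.mod_lt _ i.pos⟩) Y T)
    (hQ' : Q' = blockConcat X (fun i => w i :: Z i) Y T)
    (hnodup : Q'.Nodup) (hQpath : ListSpans k ℓ (t - 1) H Q)
    (hB : ∀ j < t, ∀ i : Fin (k - ℓ),
      ((Q'.drop (j * (k - ℓ))).take k).toFinset ⊆
        (X i ++ w i :: Z i ++ Y i ++ (if (i : ℕ) = k - ℓ - 1 then T else [])).toFinset →
      ((Q'.drop (j * (k - ℓ))).take k).toFinset ∈ H) :
    ListSpans k ℓ t H Q' ∧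
    Q'.take ℓ = Q.take ℓ ∧
    Q'.drop (Q'.length - ℓ) = Q.drop (Q.length - ℓ) ∧
    Q'.toFinset = Q.toFinset ∪ Finset.image w Finset.univ := by
  subst hQ hQ' hT
  have hd : 0 < k - T.length := by omega
  have hfirst : T.length ≤ (X ⟨0, hd⟩).length := by rw [hX]; omega
  refine ⟨listSpans_blockConcat hlk (fun i => (hX i).ge) (fun i => ?_) (fun i => ?_)
    (fun i hi => ?_) rfl hnodup hQpath.2.2 hB, ?_, ?_, ?_⟩
  · rw [hY]
    omega
  · simp only [List.length_append, List.length_cons, hX, hY, hZ]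
    omega
  · simp only [List.length_cons, hZ, Nat.mod_eq_of_lt hi]
  · rw [take_blockConcat hd hfirst, take_blockConcat hd hfirst]
  · rw [drop_length_sub_blockConcat, drop_length_sub_blockConcat]
  · ext x
    simp only [List.mem_toFinset, Finset.mem_union, Finset.mem_image, Finset.mem_univ, true_and,
      mem_blockConcat, List.mem_cons, exists_or, exists_add_one_mod_iff fun i => x ∈ Z i,
      eq_comm (a := x)]
    tauto

/-- the absorber structure. With `Q` and `Q'` the two concatenations
described in Section 3 of the paper, if `Q` spans `P_{t₅-1}` in `H` and all edges of the
path structure of `Q'` lying inside one of the blocks `Bᵢ = Xᵢ wᵢ Zᵢ Yᵢ` (the last block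
extended by `T`) are in `H`, then `Q'` spans `P_{t₅}` in `H`; in particular `Q` is a
`W`-absorber: `Q'` has the same `ℓ`-ends as `Q` and vertex set `V(Q) ∪ W`. -/
theorem absorber_structure
    (k ℓ : ℕ) (hl1 : 1 ≤ ℓ) (hlk : ℓ < k)
    (t4 t5 : ℕ) (ht4 : t4 = ⌈((3 * k - ℓ - 2 : ℕ) : ℚ) / ((k : ℚ) - (ℓ : ℚ))⌉₊)
    (ht5 : t5 = t4 * (k - ℓ))
    (n : ℕ) (H : Finset (Finset (Fin n))) (hH : H ⊆ kSets n k)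
    (w : Fin (k - ℓ) → Fin n)
    (X Y Z : Fin (k - ℓ) → List (Fin n)) (T : List (Fin n))
    (hX : ∀ i, (X i).length = k - 1)
    (hY : ∀ i : Fin (k - ℓ), (Y i).length = t5 - k - (i : ℕ))
    (hZ : ∀ i : Fin (k - ℓ), (Z i).length = (i : ℕ))
    (hT : T.length = ℓ)
    (Q Q' : List (Fin n))
    (hQ : Q = (List.ofFn (fun i : Fin (k - ℓ) =>
      X i ++ Z ⟨((i : ℕ) + 1) % (k - ℓ),
        Nat.mod_lt _ (Nat.lt_of_le_of_lt (Nat.zero_le _) i.isLt)⟩ ++ Y i)).flatten ++ T)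
    (hQ' : Q' = (List.ofFn (fun i : Fin (k - ℓ) =>
      X i ++ [w i] ++ Z i ++ Y i)).flatten ++ T)
    (hnodup : Q'.Nodup)
    (hQpath : ListSpans k ℓ (t5 - 1) H Q)
    (hB : ∀ j < t5, ∀ i : Fin (k - ℓ),
      ((Q'.drop (j * (k - ℓ))).take k).toFinset ⊆
        (X i ++ [w i] ++ Z i ++ Y i ++
          (if (i : ℕ) = k - ℓ - 1 then T else [])).toFinset →
      ((Q'.drop (j * (k - ℓ))).take k).toFinset ∈ H) :
    ListSpans k ℓ t5 H Q' ∧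
    Q'.take ℓ = Q.take ℓ ∧
    Q'.drop (Q'.length - ℓ) = Q.drop (Q.length - ℓ) ∧
    Q'.toFinset = Q.toFinset ∪ Finset.image w Finset.univ := by
  rw [← Nat.cast_sub hlk.le] at ht4
  have ht : 3 * k - ℓ - 2 ≤ t5 := ht5 ▸ ht4 ▸ le_natCeil_div_mul _ (Nat.sub_pos_of_lt hlk)
  exact absorber_structure_general hlk (by omega) hX hY hZ hT hQ
    (by simpa [blockConcat] using hQ') hnodup hQpath (by simpa using hB)
end
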